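/- arXiv:1503.03842 — 2 statements merged into one kernel-verified Lean document; each statement's English description precedes it below -/
import Mathlib

section
/- Let K be a field, A, B nonnegative integers with B ≤ A, X = (X_{i,j})_{0 ≤ i ≤ A, 0 ≤ j ≤ B} a matrix of independent indeterminates, and let n be a positive integer with n ≤ min(A+1, B+1). Take M = [1, 2, ..., n | 1, 2, ..., n], so that I_M(X) is the ideal of K[X] generated by all (n+1)×(n+1) minors of X. Then there is a polynomial H ∈ ℤ[z] with H(1) ≠ 0 such that (Σ_{ℓ≥0} dim_K R_M(X)_ℓ · z^ℓ) · (1 − z)^d = H, where d = (A + B + 3)n − n(n+1), and deg(H) − d = −(A + 1)n; that is, the a-invariant of R_M(X) equals −(A + 1)n. -/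
/-! # The a-invariant of a generic determinantal ring

Let `R = K[X] / I` with `I` generated by the `(n+1)`-minors. The dimension of `R_ℓ` is the number
of pairs of semistandard tableaux of a common shape with `ℓ` boxes and at most `n` rows, with
entries in `{0,…,A}` and `{0,…,B}` respectively (a form of the straightening law). A tableau is
recorded as a Gelfand–Tsetlin pattern (`IsPat`), and pairs of patterns form `pairSet`.

* Reading the two tableaux column by column gives a product of minors of `X` (`exists_poly`). Under
  the substitution `X i j ↦ ∑ k < N, y i k * z j k` (`phi`), a minor has an explicit leading
  monomial for a suitable weight (`leadAt_det`), and the leading monomial of the product of minors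
  determines the pair of patterns (`Encodes`). Hence the products are linearly independent, and for
  `N = n` the substitution kills `I`, so the products with at most `n` rows stay independent in `R`.
* For `n = B + 1` the number of pairs equals `dim K[X]_ℓ` (`pairSet_ncard_full`, the Cauchy
  identity), so the products form a basis of `K[X]_ℓ`; those with more than `n` rows have a factor
  in `I`, whence the upper bound. This proves `quotDim_eq` without any straightening argument.

The pairs are counted by a Jacobi–Trudi determinant for each pattern (`patSet_ncard`), rewritten as
a determinant of binomial coefficients (`patSet_ncard_mul`); summing the products of two of these
over all shapes with the Cauchy–Binet formula (`coeff_det_mk`) gives, for `α = A + 1 - n` and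
`β = B + 1 - n`, the identity

`z ^ (n choose 2) * (∑ ℓ, dim R_ℓ z ^ ℓ) * (1 - z) ^ d = det (∑ k, C(α+i,k) C(β+j,k) z ^ k)`

(`mk_pairSet_ncard`). Column `j` of the right-hand side has degree at most `β + j`, with top
coefficients `C(α+i,β+j)`, and at `z = 1` the entries are `C(α+i+β+j,β+j)`. Both determinants of
binomial coefficients reduce to Vandermonde determinants and do not vanish (the first one because
`β ≤ α`), so the numerator has degree `n β`, is nonzero at `1`, and `n β - d = -(A + 1) n`. -/

/-- A lattice path from `A` to `B`: a list of points of `ℤ × ℤ` whose consecutive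
differences are the unit steps `(1,0)` or `(0,1)`, starting at `A` and ending at `B`. -/
def IsLatticePathFrom (P : List (ℤ × ℤ)) (A B : ℤ × ℤ) : Prop :=
  P.Chain' (fun p q => q = (p.1 + 1, p.2) ∨ q = (p.1, p.2 + 1)) ∧
    P.head? = some A ∧ P.getLast? = some B

/-- The list of NE-turns of a lattice path: the points of the path that are the end
point of a vertical step and at the same time the starting point of a horizontal step. -/
def NETurns : List (ℤ × ℤ) → List (ℤ × ℤ)
  | p :: q :: r :: rest =>
      (if q = (p.1, p.2 + 1) ∧ r = (q.1 + 1, q.2) then [q] else []) ++ NETurns (q :: r :: rest)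
  | _ => []

/-- `(x,y)` lies weakly south-east of `S` if `x ≥ S.1` or `y ≤ S.2`. -/
def WeaklySE (p S : ℤ × ℤ) : Prop := S.1 ≤ p.1 ∨ p.2 ≤ S.2

/-- `(x,y)` lies weakly north-west of `T` if `x ≤ T.1` or `y ≥ T.2`. -/
def WeaklyNW (p T : ℤ × ℤ) : Prop := p.1 ≤ T.1 ∨ T.2 ≤ p.2

/-- A path stays weakly south-east of `S` if every point on it does. -/
def StaysSE (P : List (ℤ × ℤ)) (S : ℤ × ℤ) : Prop := ∀ p ∈ P, WeaklySE p S

/-- A path stays weakly north-west of `T` if every point on it does. -/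
def StaysNW (P : List (ℤ × ℤ)) (T : ℤ × ℤ) : Prop := ∀ p ∈ P, WeaklyNW p T

/-- A family of lattice paths is non-intersecting if no two of its members share a point. -/
def NonIntersecting {n : ℕ} (F : Fin n → List (ℤ × ℤ)) : Prop :=
  ∀ i j, i ≠ j → ∀ p, p ∈ F i → p ∉ F j

/-- `Λ` is a ladder: together with any two positions `(i,j) ≤ (i',j')` it contains the
whole interval between them. -/
def IsLadder {A B : ℕ} (Λ : Set (Fin (A + 1) × Fin (B + 1))) : Prop :=
  ∀ p ∈ Λ, ∀ p' ∈ Λ, p.1 ≤ p'.1 → p.2 ≤ p'.2 →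
    ∀ (s : Fin (A + 1)) (t : Fin (B + 1)),
      p.1 ≤ s → s ≤ p'.1 → p.2 ≤ t → t ≤ p'.2 → (s, t) ∈ Λ

/-- The ladder region associated with a ladder `Λ`: the set of points `(j, A−i)` for
`(i,j) ∈ Λ`. -/
def ladderRegion {A B : ℕ} (Λ : Set (Fin (A + 1) × Fin (B + 1))) : Set (ℤ × ℤ) :=
  {p | ∃ q ∈ Λ, p = (((q.2 : ℕ) : ℤ), (A : ℤ) - ((q.1 : ℕ) : ℤ))}

open Classical in
/-- The matrix `Y` associated with a ladder `Λ`: the entry at a position of `Λ` is the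
corresponding variable of the polynomial ring `K[Y]`, all other entries are `0`. -/
noncomputable def ladderMatrix (K : Type*) [Field K] {A B : ℕ}
    (Λ : Set (Fin (A + 1) × Fin (B + 1))) :
    Matrix (Fin (A + 1)) (Fin (B + 1)) (MvPolynomial {q // q ∈ Λ} K) :=
  fun i j => if h : (i, j) ∈ Λ then MvPolynomial.X ⟨(i, j), h⟩ else 0

/-- The ladder determinantal ideal cogenerated by the bivector
`M = [u 1,...,u n | v 1,...,v n]` (with the conventions `u (n+1) = A+2`, `v (n+1) = B+2`
imposed as hypotheses in the theorems): it is generated, for `1 ≤ t ≤ n+1`, by the `t×t`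
minors of `Y` all of whose positions lie in `Λ` and whose rows all lie among the last
`u t − 1` rows, or whose columns all lie among the last `v t − 1` columns. -/
noncomputable def ladderIdeal (K : Type*) [Field K] {A B : ℕ}
    (Λ : Set (Fin (A + 1) × Fin (B + 1))) (n : ℕ) (u v : ℕ → ℕ) :
    Ideal (MvPolynomial {q // q ∈ Λ} K) :=
  Ideal.span {f | ∃ t : ℕ, 1 ≤ t ∧ t ≤ n + 1 ∧
    ∃ (r : Fin t → Fin (A + 1)) (c : Fin t → Fin (B + 1)),
      StrictMono r ∧ StrictMono c ∧ (∀ k l, (r k, c l) ∈ Λ) ∧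
      ((∀ k, A + 2 ≤ (r k : ℕ) + u t) ∨ (∀ l, B + 2 ≤ (c l : ℕ) + v t)) ∧
      f = (((ladderMatrix K Λ).submatrix r c).det)}

/-- The dimension of the degree-`ℓ` homogeneous component of the quotient of a polynomial
ring by a (homogeneous) ideal `I`: the image of the space of homogeneous polynomials of
degree `ℓ` in the quotient. -/
noncomputable def quotDim (K : Type*) [Field K] {σ : Type*}
    (I : Ideal (MvPolynomial σ K)) (ℓ : ℕ) : ℕ :=
  Module.finrank K
    (Submodule.map (Ideal.Quotient.mkₐ K I).toLinearMap
      (MvPolynomial.homogeneousSubmodule σ K ℓ))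

/-- The Hilbert series `Σ_ℓ dim_K (R_M(Y))_ℓ zˡ`, as a power series over `ℤ`. -/
noncomputable def hilbertSeries (K : Type*) [Field K] {σ : Type*}
    (I : Ideal (MvPolynomial σ K)) : PowerSeries ℤ :=
  PowerSeries.mk fun ℓ => (quotDim K I ℓ : ℤ)

/-- The recursively defined regions `L⁽ⁱ⁾` of Theorem 5, counted downwards from
`L⁽ⁿ⁺¹⁾ = L`; `Lseq L E1 A2 j` is `L⁽ⁿ⁺¹⁻ʲ⁾`, where `E1 j` resp. `A2 j` are the first
coordinate of `E⁽ⁿ⁻ʲ⁾` resp. the second coordinate of `A⁽ⁿ⁻ʲ⁾`. -/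
def Lseq (L : Set (ℤ × ℤ)) (E1 A2 : ℕ → ℤ) : ℕ → Set (ℤ × ℤ)
  | 0 => L
  | j + 1 => {P ∈ Lseq L E1 A2 j |
      P.1 ≤ E1 j ∧ A2 j ≤ P.2 ∧ (P.1 + 1, P.2 - 1) ∈ Lseq L E1 A2 j}

/-- The generic `(A+1) × (B+1)` matrix `X` of independent indeterminates. -/
noncomputable def genericMatrix (K : Type*) [Field K] (A B : ℕ) :
    Matrix (Fin (A + 1)) (Fin (B + 1)) (MvPolynomial (Fin (A + 1) × Fin (B + 1)) K) :=
  fun i j => MvPolynomial.X (i, j)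

/-- The determinantal ideal of `K[X]` cogenerated by the bivector
`M = [u 1,...,u n | v 1,...,v n]` (with the conventions `u (n+1) = A+2`, `v (n+1) = B+2`
imposed as hypotheses in the theorems): it is generated, for `1 ≤ t ≤ n+1`, by the `t×t`
minors of `X` whose rows all lie among the last `u t − 1` rows, or whose columns all lie
among the last `v t − 1` columns. -/
noncomputable def detIdeal (K : Type*) [Field K] (A B n : ℕ) (u v : ℕ → ℕ) :
    Ideal (MvPolynomial (Fin (A + 1) × Fin (B + 1)) K) :=
  Ideal.span {f | ∃ t : ℕ, 1 ≤ t ∧ t ≤ n + 1 ∧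
    ∃ (r : Fin t → Fin (A + 1)) (c : Fin t → Fin (B + 1)),
      StrictMono r ∧ StrictMono c ∧
      ((∀ k, A + 2 ≤ (r k : ℕ) + u t) ∨ (∀ l, B + 2 ≤ (c l : ℕ) + v t)) ∧
      f = (((genericMatrix K A B).submatrix r c).det)}

/-! ### A Cauchy–Binet formula for power series -/

open Finset in
/-- Cauchy–Binet for the infinite index set `ℕ`, graded by the sum of the indices: the matrix
`∑ l, p i l * q j l * z ^ l` is a product of an `n × ℕ` and an `ℕ × n` matrix, so its determinant is
a sum over the `n`-element subsets of `ℕ`, here given as strictly increasing sequences. -/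
theorem coeff_det_mk {n : ℕ} (p q : Fin n → ℕ → ℤ) (L : ℕ) :
    PowerSeries.coeff L (Matrix.det (Matrix.of fun i j : Fin n =>
      (PowerSeries.mk fun l => p i l * q j l : PowerSeries ℤ))) =
    ∑ s ∈ (Finset.piAntidiag (Finset.univ : Finset (Fin n)) L).filter StrictMono,
      Matrix.det (Matrix.of fun k i => p i (s k)) * Matrix.det (Matrix.of fun k j => q j (s k)) := by
  have h1 : PowerSeries.coeff L (Matrix.det (Matrix.of fun i j : Fin n =>
      (PowerSeries.mk fun l => p i l * q j l : PowerSeries ℤ))) =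
      ∑ l ∈ Finset.piAntidiag (Finset.univ : Finset (Fin n)) L,
        Matrix.det (Matrix.of fun k i => p i (l k)) * ∏ k, q k (l k) := by
    rw [Matrix.det_apply, map_sum]
    have h2 : ∀ l : Fin n → ℕ, Matrix.det (Matrix.of fun k i => p i (l k)) * ∏ k, q k (l k) =
        ∑ σ : Equiv.Perm (Fin n), Equiv.Perm.sign σ • ∏ k, (p (σ k) (l k) * q k (l k)) := by
      intro l
      rw [← Matrix.det_transpose, Matrix.det_apply, Finset.sum_mul]
      refine Finset.sum_congr rfl fun σ _ => ?_
      rw [smul_mul_assoc]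
      simp [Finset.prod_mul_distrib]
    simp_rw [h2]
    rw [Finset.sum_comm]
    refine Finset.sum_congr rfl fun σ _ => ?_
    rw [← Finset.smul_sum]
    rcases Int.units_eq_one_or (Equiv.Perm.sign σ) with h | h <;> rw [h] <;>
    simp only [one_smul, Units.neg_smul, map_neg, neg_inj]
    all_goals
      rw [PowerSeries.coeff_prod]
      refine Finset.sum_bij (fun l _ => ⇑l) ?_ ?_ ?_ ?_
      · intro l hl
        simpa using hl
      · intro l _ l' _ h
        exact DFunLike.coe_injective h
      · intro l hl
        exact ⟨Finsupp.equivFunOnFinite.symm l, by simpa using hl, by simp⟩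
      · intro l hl
        simp
  rw [h1]
  have h3 : ∀ s : Fin n → ℕ,
      Matrix.det (Matrix.of fun k i => p i (s k)) * Matrix.det (Matrix.of fun k j => q j (s k)) =
      ∑ τ : Equiv.Perm (Fin n), Matrix.det (Matrix.of fun k i => p i ((s ∘ τ) k)) *
        ∏ k, q k ((s ∘ τ) k) := by
    intro s
    conv_lhs => rw [Matrix.det_apply (Matrix.of fun k j => q j (s k))]
    rw [Finset.mul_sum]
    refine Finset.sum_congr rfl fun τ _ => ?_
    have : (Matrix.of fun k i => p i ((s ∘ τ) k)) =
      (Matrix.of fun k i => p i (s k)).submatrix τ id := rfl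
    rw [this, Matrix.det_permute]
    rcases Int.units_eq_one_or (Equiv.Perm.sign τ) with h | h <;> simp [h]
  simp_rw [h3]
  rw [← Finset.sum_product']
  symm
  -- Injective sequences are uniquely strictly increasing ones composed with a permutation.
  refine Finset.sum_of_injOn (fun x => x.1 ∘ x.2) ?_ ?_ ?_ ?_
  · rintro ⟨s, τ⟩ hs ⟨s', τ'⟩ hs' h
    simp only [coe_product, Set.mem_prod, mem_coe, mem_filter] at hs hs' h
    have hss : s = s' := by
      apply (StrictMono.range_inj hs.1.2 hs'.1.2).1
      rw [← τ.surjective.range_comp s, ← τ'.surjective.range_comp s', h]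
    subst hss
    have : τ = τ' := by
      ext1 i
      exact hs.1.2.injective (congrFun h i)
    rw [this]
  · rintro ⟨s, τ⟩ hs
    simp only [coe_product, Set.mem_prod, mem_coe, mem_filter, mem_piAntidiag] at hs ⊢
    refine ⟨?_, by simp⟩
    rw [← hs.1.1.1]
    exact Equiv.sum_comp τ s
  · intro l hl hl'
    by_cases hinj : Function.Injective l
    · exfalso
      apply hl'
      refine ⟨(l ∘ Tuple.sort l, (Tuple.sort l)⁻¹), ?_, ?_⟩
      · simp only [coe_product, Set.mem_prod, mem_coe, mem_filter, mem_piAntidiag] at hl ⊢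
        refine ⟨⟨⟨?_, by simp⟩, ?_⟩, by simp⟩
        · rw [← hl.1]
          exact Equiv.sum_comp (Tuple.sort l) l
        · exact (Tuple.monotone_sort l).strictMono_of_injective
            (hinj.comp (Tuple.sort l).injective)
      · ext i; simp
    · simp only [Function.Injective, not_forall] at hinj
      obtain ⟨i, j, hij, hne⟩ := hinj
      rw [Matrix.det_zero_of_row_eq hne, zero_mul]
      ext k
      simp [hij]
  · rintro ⟨s, τ⟩ hs
    rfl

/-! ### Generating functions of products of binomial coefficients -/

/-- Vandermonde convolution in symmetric form. -/
theorem choose_add_eq_sum (p l : ℕ) :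
    (p + l).choose p = ∑ k ∈ Finset.range (p + 1), p.choose k * l.choose k := by
  rw [Nat.add_choose_eq, Finset.Nat.sum_antidiagonal_eq_sum_range_succ_mk,
    ← Finset.sum_range_reflect]
  refine Finset.sum_congr rfl fun k hk => ?_
  have hk : k ≤ p := Nat.lt_succ_iff.1 (Finset.mem_range.1 hk)
  have h1 : p + 1 - 1 - k = p - k := by omega
  have h2 : p - (p - k) = k := by omega
  simp only [h1, h2, Nat.choose_symm hk]

theorem sum_choose_choose_pow {R : Type*} [CommRing R] (x y : R) (hxy : x + y = 1) (p m : ℕ) :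
    ∑ k ∈ Finset.range (p + 1), (p.choose k * k.choose m : ℕ) * (x ^ k * y ^ (p - k)) =
      p.choose m * x ^ m := by
  rcases lt_or_ge p m with h | h
  · rw [Nat.choose_eq_zero_of_lt h]
    simp only [Nat.cast_zero, zero_mul]
    refine Finset.sum_eq_zero fun k hk => ?_
    rw [Nat.choose_eq_zero_of_lt (by simp at hk; omega : k < m)]
    simp
  · obtain ⟨r, rfl⟩ := Nat.exists_eq_add_of_le h
    rw [add_assoc, Finset.sum_range_add]
    have h0 : ∑ k ∈ Finset.range m,
        (((m + r).choose k * k.choose m : ℕ) : R) * (x ^ k * y ^ (m + r - k)) = 0 := by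
      refine Finset.sum_eq_zero fun k hk => ?_
      rw [Nat.choose_eq_zero_of_lt (Finset.mem_range.1 hk)]
      simp
    rw [h0, zero_add]
    have h1 : (x + y) ^ r = 1 := by rw [hxy, one_pow]
    rw [← mul_one (((m + r).choose m : R) * x ^ m), ← h1, add_pow, Finset.mul_sum]
    refine Finset.sum_congr rfl fun k hk => ?_
    rw [Nat.choose_mul (by omega)]
    have e1 : m + r - (m + k) = r - k := by omega
    rw [e1]
    simp only [Nat.add_sub_cancel_left]
    push_cast
    ring

theorem coeff_natCast_mul' (c l : ℕ) (f : PowerSeries ℤ) :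
    PowerSeries.coeff l ((c : PowerSeries ℤ) * f) = c * PowerSeries.coeff l f := by
  rw [← nsmul_eq_mul, map_nsmul, nsmul_eq_mul]

theorem mk_choose_choose (q k : ℕ) :
    (PowerSeries.mk fun l => (((q + l).choose q * l.choose k : ℕ) : ℤ) : PowerSeries ℤ) * (1 - PowerSeries.X) ^ (q + k + 1) =
      (((q + k).choose q : ℕ) : PowerSeries ℤ) * PowerSeries.X ^ k := by
  have h : (PowerSeries.mk fun l => (((q + l).choose q * l.choose k : ℕ) : ℤ) : PowerSeries ℤ) =
      (((q + k).choose q : ℕ) : PowerSeries ℤ) * PowerSeries.X ^ k *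
        (PowerSeries.mk fun l => (((q + k) + l).choose (q + k) : ℤ)) := by
    ext l
    rw [mul_assoc, coeff_natCast_mul', PowerSeries.coeff_X_pow_mul']
    simp only [PowerSeries.coeff_mk]
    split_ifs with hkl
    · obtain ⟨r, rfl⟩ := Nat.exists_eq_add_of_le hkl
      simp only [Nat.add_sub_cancel_left]
      norm_cast
      have := Nat.choose_mul (n := q + (k + r)) (k := q + k) (s := q) (by omega)
      have e1 : q + (k + r) - q = k + r := by omega
      have e2 : q + k - q = k := by omega
      rw [e1, e2] at this
      rw [← this, mul_comm, add_assoc]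
    · rw [Nat.choose_eq_zero_of_lt (by omega : l < k)]
      simp
  rw [h, mul_assoc, PowerSeries.mk_add_choose_mul_one_sub_pow_eq_one, mul_one]

/-- The generating function of `C(p+l,p) C(q+l,q)`, with numerator `∑ C(p,k) C(q,k) z^k`. -/
theorem mk_choose_mul_choose (p q : ℕ) :
    (PowerSeries.mk fun l => (((p + l).choose p : ℤ) * ((q + l).choose q : ℤ))) *
      (1 - PowerSeries.X) ^ (p + q + 1) =
    ((∑ k ∈ Finset.range (p + q + 1), Polynomial.C ((p.choose k * q.choose k : ℕ) : ℤ) * Polynomial.X ^ k :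
      Polynomial ℤ) : PowerSeries ℤ) := by
  have h1 : (PowerSeries.mk fun l => (((p + l).choose p : ℤ) * ((q + l).choose q : ℤ))) =
      ∑ k ∈ Finset.range (p + 1), (p.choose k : PowerSeries ℤ) *
        (PowerSeries.mk fun l => (((q + l).choose q * l.choose k : ℕ) : ℤ)) := by
    ext l
    rw [map_sum]
    simp only [coeff_natCast_mul', PowerSeries.coeff_mk]
    rw [choose_add_eq_sum p l]
    push_cast
    rw [Finset.sum_mul]
    refine Finset.sum_congr rfl fun k _ => ?_
    ring
  have h2 : ∀ k ∈ Finset.range (p + 1), (p.choose k : PowerSeries ℤ) *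
        (PowerSeries.mk fun l => (((q + l).choose q * l.choose k : ℕ) : ℤ)) *
        (1 - PowerSeries.X) ^ (p + q + 1) =
      ∑ m ∈ Finset.range (q + 1), (q.choose m : PowerSeries ℤ) *
        (((p.choose k * k.choose m : ℕ) : PowerSeries ℤ) * (PowerSeries.X ^ k * (1 - PowerSeries.X) ^ (p - k))) := by
    intro k hk
    have hk : k ≤ p := Nat.lt_succ_iff.1 (Finset.mem_range.1 hk)
    have e : p + q + 1 = (q + k + 1) + (p - k) := by omega
    rw [e, pow_add, ← mul_assoc, mul_assoc (p.choose k : PowerSeries ℤ), mk_choose_choose,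
      choose_add_eq_sum q k]
    push_cast
    rw [Finset.sum_mul, Finset.mul_sum, Finset.sum_mul]
    refine Finset.sum_congr rfl fun m _ => ?_
    ring
  rw [h1, Finset.sum_mul, Finset.sum_congr rfl h2, Finset.sum_comm]
  simp_rw [← Finset.mul_sum]
  simp_rw [sum_choose_choose_pow (PowerSeries.X : PowerSeries ℤ) (1 - PowerSeries.X) (by ring)]
  rw [← Polynomial.coeToPowerSeries.ringHom_apply, map_sum]
  have : Finset.range (q + 1) ⊆ Finset.range (p + q + 1) := by
    intro x; simp; omega
  rw [← Finset.sum_subset this]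
  · refine Finset.sum_congr rfl fun m _ => ?_
    rw [map_natCast, map_mul, map_natCast, map_pow, Polynomial.coeToPowerSeries.ringHom_apply,
      Polynomial.coe_X]
    push_cast
    ring
  · intro m _ hm
    rw [Nat.choose_eq_zero_of_lt (by simp at hm; omega : q < m)]
    simp

/-! ### Determinants of binomial coefficients -/

/-- Clearing denominators, the binomial coefficients `C(α+i,β+j)` become the values at `α - β + i`
of the falling factorials, which are monic of degree `j`. -/
theorem det_choose_mul_prod (α β n : ℕ) (h : β ≤ α) :
    (∏ j : Fin n, ((β + (j : ℕ)).factorial : ℤ)) *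
      Matrix.det (Matrix.of fun i j : Fin n => (((α + (i : ℕ)).choose (β + (j : ℕ)) : ℕ) : ℤ)) =
    (∏ i : Fin n, ((α + (i : ℕ)).descFactorial β : ℤ)) *
      Matrix.det (Matrix.vandermonde fun i : Fin n => ((α - β + (i : ℕ) : ℕ) : ℤ)) := by
  rw [Matrix.det_eval_matrixOfPolynomials_eq_det_vandermonde _
    (fun j : Fin n => descPochhammer ℤ j) (fun j => descPochhammer_natDegree ℤ j)
    (fun j => monic_descPochhammer ℤ j), ← Matrix.det_mul_row, ← Matrix.det_mul_column]
  congr 1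
  ext i j
  simp only [Matrix.of_apply, descPochhammer_eval_eq_descFactorial]
  norm_cast
  rw [← Nat.descFactorial_eq_factorial_mul_choose,
    ← Nat.descFactorial_mul_descFactorial (Nat.le_add_right β j), mul_comm]
  congr 2 <;> omega

theorem det_choose_ne_zero (α β n : ℕ) (h : β ≤ α) :
    Matrix.det (Matrix.of fun i j : Fin n => (((α + (i : ℕ)).choose (β + (j : ℕ)) : ℕ) : ℤ)) ≠ 0 := by
  intro h0
  have := det_choose_mul_prod α β n h
  rw [h0, mul_zero, eq_comm, mul_eq_zero] at this
  rcases this with h1 | h1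
  · rw [Finset.prod_eq_zero_iff] at h1
    obtain ⟨i, -, hi⟩ := h1
    have := Nat.descFactorial_eq_zero_iff_lt.1 (Int.natCast_eq_zero.1 hi)
    omega
  · refine Matrix.det_vandermonde_ne_zero_iff.2 ?_ h1
    intro i j hij
    ext
    simp only [Nat.cast_inj] at hij
    omega

theorem det_choose_eq_one (α n : ℕ) :
    Matrix.det (Matrix.of fun i k : Fin n => (((α + (i : ℕ)).choose k : ℕ) : ℤ)) = 1 := by
  have h0 : Matrix.det (Matrix.of fun i k : Fin n => (((0 + (i : ℕ)).choose (0 + k) : ℕ) : ℤ)) = 1 := by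
    rw [Matrix.det_of_isLowerTriangular]
    · simp
    · intro i j hij
      have : (i : ℕ) < j := hij
      simp [Nat.choose_eq_zero_of_lt this]
  have h1 := det_choose_mul_prod 0 0 n le_rfl
  have h2 := det_choose_mul_prod α 0 n (Nat.zero_le _)
  rw [h0] at h1
  have h3 : Matrix.det (Matrix.vandermonde fun i : Fin n => ((α - 0 + (i : ℕ) : ℕ) : ℤ)) =
      Matrix.det (Matrix.vandermonde fun i : Fin n => ((0 - 0 + (i : ℕ) : ℕ) : ℤ)) := by
    rw [← Matrix.det_vandermonde_add (fun i : Fin n => ((0 - 0 + (i : ℕ) : ℕ) : ℤ)) (α : ℤ)]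
    congr 2
    ext i
    push_cast
    simp [add_comm]
  rw [h3] at h2
  simp only [Nat.descFactorial_zero, Nat.cast_one, Finset.prod_const_one, one_mul] at h1 h2
  rw [← h1] at h2
  have h4 : (∏ j : Fin n, ((0 + (j : ℕ)).factorial : ℤ)) ≠ 0 := by
    rw [Finset.prod_ne_zero_iff]
    intro j _
    exact_mod_cast Nat.factorial_ne_zero _
  have h5 := mul_left_cancel₀ h4 h2
  simpa using h5

/-- The rising factorials, monic of degree `j`, reduce this determinant to a Vandermonde
determinant at the points `α + β + i + 1`. -/
theorem det_choose_add_ne_zero (α β n : ℕ) :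
    Matrix.det (Matrix.of fun i j : Fin n =>
      (((α + (i : ℕ) + (β + (j : ℕ))).choose (β + (j : ℕ)) : ℕ) : ℤ)) ≠ 0 := by
  intro h0
  have key : (∏ i : Fin n, ((α + (i : ℕ)).factorial : ℤ)) * ((∏ j : Fin n, ((β + (j : ℕ)).factorial : ℤ)) *
      Matrix.det (Matrix.of fun i j : Fin n =>
      (((α + (i : ℕ) + (β + (j : ℕ))).choose (β + (j : ℕ)) : ℕ) : ℤ))) =
    (∏ i : Fin n, ((α + β + (i : ℕ)).factorial : ℤ)) *
      Matrix.det (Matrix.vandermonde fun i : Fin n => ((α + β + (i : ℕ) + 1 : ℕ) : ℤ)) := by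
    rw [Matrix.det_eval_matrixOfPolynomials_eq_det_vandermonde _
      (fun j : Fin n => ascPochhammer ℤ j) (fun j => ascPochhammer_natDegree ℤ j)
      (fun j => monic_ascPochhammer ℤ j), ← Matrix.det_mul_row, ← Matrix.det_mul_column,
      ← Matrix.det_mul_column]
    congr 1
    ext i j
    simp only [Matrix.of_apply, ← ascPochhammer_eval_cast, ascPochhammer_nat_eq_ascFactorial]
    norm_cast
    rw [Nat.factorial_mul_ascFactorial]
    have := Nat.add_choose_mul_factorial_mul_factorial (α + i) (β + j)
    rw [show α + β + (i : ℕ) + j = α + i + (β + j) by omega, ← this]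
    ring
  rw [h0, mul_zero, mul_zero, eq_comm, mul_eq_zero] at key
  rcases key with h1 | h1
  · rw [Finset.prod_eq_zero_iff] at h1
    obtain ⟨i, -, hi⟩ := h1
    exact Nat.factorial_ne_zero _ (Int.natCast_eq_zero.1 hi)
  · refine Matrix.det_vandermonde_ne_zero_iff.2 ?_ h1
    intro i j hij
    ext
    simp only [Nat.cast_inj] at hij
    omega

/-! ### The numerator determinant -/

open Polynomial in
/-- The product of polynomials of degrees at most `e i` has degree at most `∑ e i`, and its
coefficient there is the product of the formal top coefficients. -/
theorem coeff_prod_le {ι : Type*} (s : Finset ι) (f : ι → ℤ[X]) (e : ι → ℕ)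
    (h : ∀ i ∈ s, (f i).natDegree ≤ e i) :
    (∏ i ∈ s, f i).natDegree ≤ ∑ i ∈ s, e i ∧
      (∏ i ∈ s, f i).coeff (∑ i ∈ s, e i) = ∏ i ∈ s, (f i).coeff (e i) := by
  classical
  induction s using Finset.induction_on with
  | empty => simp
  | insert a s ha ih =>
    obtain ⟨h1, h2⟩ := ih fun i hi => h i (Finset.mem_insert_of_mem hi)
    have h3 := h a (Finset.mem_insert_self a s)
    rw [Finset.prod_insert ha, Finset.sum_insert ha, Finset.prod_insert ha]
    refine ⟨natDegree_mul_le.trans (add_le_add h3 h1), ?_⟩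
    rw [coeff_mul_add_eq_of_natDegree_le h3 h1, h2]

open Polynomial in
/-- If column `j` has degree at most `e j`, the coefficient of the determinant in degree `∑ e j`
is the determinant of the formal top coefficients. -/
theorem coeff_det_le {n : ℕ} (P : Matrix (Fin n) (Fin n) ℤ[X]) (e : Fin n → ℕ)
    (h : ∀ i j, (P i j).natDegree ≤ e j) :
    P.det.natDegree ≤ ∑ j, e j ∧
      P.det.coeff (∑ j, e j) = Matrix.det (Matrix.of fun i j => (P i j).coeff (e j)) := by
  have h1 := fun σ : Equiv.Perm (Fin n) =>
    coeff_prod_le Finset.univ (fun i => P (σ i) i) e fun i _ => h _ _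
  constructor
  · rw [Matrix.det_apply]
    refine natDegree_sum_le_of_forall_le _ _ fun σ _ => ?_
    rcases Int.units_eq_one_or (Equiv.Perm.sign σ) with h | h <;> simp [h, (h1 σ).1]
  · rw [Matrix.det_apply, Matrix.det_apply, finsetSum_coeff]
    refine Finset.sum_congr rfl fun σ _ => ?_
    rcases Int.units_eq_one_or (Equiv.Perm.sign σ) with h | h <;> simp [h, (h1 σ).2]

/-- The matrix of numerators `∑ k, C(α+i,k) C(β+j,k) z ^ k`. Its determinant is
`z ^ (n choose 2)` times the numerator of the Hilbert series, for `α = A + 1 - n` and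
`β = B + 1 - n`. -/
noncomputable def numMat (α β n : ℕ) : Matrix (Fin n) (Fin n) (Polynomial ℤ) :=
  Matrix.of fun i j => ∑ k ∈ Finset.range (α + (i : ℕ) + (β + (j : ℕ)) + 1),
    Polynomial.C (((α + (i : ℕ)).choose k * (β + (j : ℕ)).choose k : ℕ) : ℤ) * Polynomial.X ^ k

theorem numMat_coeff (α β n : ℕ) (i j : Fin n) (k : ℕ) :
    (numMat α β n i j).coeff k = ((α + (i : ℕ)).choose k * (β + (j : ℕ)).choose k : ℕ) := by
  simp only [numMat, Matrix.of_apply, Polynomial.finsetSum_coeff, Polynomial.coeff_C_mul_X_pow]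
  rw [Finset.sum_ite_eq]
  split_ifs with h
  · rfl
  · rw [Nat.choose_eq_zero_of_lt (by simp at h; omega : α + (i : ℕ) < k)]
    simp

theorem numMat_natDegree_le (α β n : ℕ) (i j : Fin n) :
    (numMat α β n i j).natDegree ≤ β + j := by
  rw [Polynomial.natDegree_le_iff_coeff_eq_zero]
  intro k hk
  rw [numMat_coeff, Nat.choose_eq_zero_of_lt hk]
  simp

theorem numMat_det_natDegree (α β n : ℕ) (h : β ≤ α) :
    (numMat α β n).det.natDegree = ∑ j : Fin n, (β + (j : ℕ)) := by
  obtain ⟨h1, h2⟩ := coeff_det_le (numMat α β n) (fun j => β + (j : ℕ)) (numMat_natDegree_le α β n)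
  refine le_antisymm h1 (Polynomial.le_natDegree_of_ne_zero ?_)
  rw [h2]
  simp only [numMat_coeff, Nat.choose_self, mul_one]
  exact det_choose_ne_zero α β n h

/-- At `z = 1` the entries are `C(α+i+β+j,β+j)` by Vandermonde convolution. -/
theorem numMat_det_eval_one (α β n : ℕ) : (numMat α β n).det.eval 1 ≠ 0 := by
  rw [← Polynomial.coe_evalRingHom, RingHom.map_det]
  convert det_choose_add_ne_zero α β n using 2
  ext i j
  simp only [RingHom.mapMatrix_apply, Matrix.map_apply, numMat, Matrix.of_apply,
    Polynomial.eval_finsetSum,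
    Polynomial.coe_evalRingHom, Polynomial.eval_mul, Polynomial.eval_C, Polynomial.eval_pow,
    Polynomial.eval_X, one_pow, mul_one]
  norm_cast
  rw [add_comm (α + (i : ℕ)) (β + (j : ℕ)), choose_add_eq_sum]
  symm
  simp_rw [mul_comm ((β + (j : ℕ)).choose _)]
  refine Finset.sum_subset (fun x => by simp; omega) fun k _ hk => ?_
  rw [Nat.choose_eq_zero_of_lt (by simp at hk; omega : β + (j : ℕ) < k), mul_zero]

/-- For `β = 0` the matrix is the product of `(C(α+i,k))`, `diag (z ^ k)` and the transpose of
`(C(j,k))`, where the two binomial matrices have determinant `1`. -/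
theorem numMat_det_zero (α n : ℕ) :
    (numMat α 0 n).det = Polynomial.X ^ (∑ j : Fin n, (j : ℕ)) := by
  have h1 : numMat α 0 n =
      (Matrix.of fun i k : Fin n => (((α + (i : ℕ)).choose k : ℕ) : ℤ)).map Polynomial.C *
        Matrix.diagonal (fun k : Fin n => (Polynomial.X : Polynomial ℤ) ^ (k : ℕ)) *
      ((Matrix.of fun i k : Fin n => (((0 + (i : ℕ)).choose k : ℕ) : ℤ)).map Polynomial.C).transpose := by
    ext1 i j
    rw [Matrix.mul_apply]
    simp only [Matrix.mul_diagonal, Matrix.map_apply, Matrix.of_apply, Matrix.transpose_apply,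
      numMat]
    rw [Fin.sum_univ_eq_sum_range (fun k => Polynomial.C (((α + (i : ℕ)).choose k : ℕ) : ℤ) *
      Polynomial.X ^ k * Polynomial.C (((0 + (j : ℕ)).choose k : ℕ) : ℤ))]
    have h3 : ∀ N, ((j : ℕ) < N) → ∑ k ∈ Finset.range N, Polynomial.C (((α + (i : ℕ)).choose k * (0 + (j : ℕ)).choose k : ℕ) : ℤ) *
        Polynomial.X ^ k = ∑ k ∈ Finset.range (j + 1), Polynomial.C (((α + (i : ℕ)).choose k * (0 + (j : ℕ)).choose k : ℕ) : ℤ) *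
        Polynomial.X ^ k := by
      intro N hN
      symm
      refine Finset.sum_subset (fun x => by simp; omega) fun k _ hk => ?_
      rw [Nat.choose_eq_zero_of_lt (by simp at hk; omega : 0 + (j : ℕ) < k)]
      simp
    rw [h3 _ (by omega), ← h3 n j.2]
    refine Finset.sum_congr rfl fun k _ => ?_
    push_cast
    simp only [map_mul, map_natCast]
    ring
  have h2 : ∀ α, ((Matrix.of fun i k : Fin n => (((α + (i : ℕ)).choose k : ℕ) : ℤ)).map
      (Polynomial.C : ℤ →+* Polynomial ℤ)).det = 1 := by
    intro α
    rw [← RingHom.mapMatrix_apply, ← RingHom.map_det, det_choose_eq_one, map_one]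
  rw [h1, Matrix.det_mul, Matrix.det_mul, Matrix.det_transpose, h2, h2, Matrix.det_diagonal,
    Finset.prod_pow_eq_pow_sum]
  simp

/-! ### Gelfand–Tsetlin patterns and their shapes -/

/-- A Gelfand–Tsetlin pattern with `a` rows, equivalently a semistandard tableau with entries in
`{0,…,a-1}`: `E m k` is the number of entries `< m` in row `k` of the tableau. The sequence of rows
is continued by the constant value `E a` beyond `a`, so that distinct functions are distinct
patterns. -/
def IsPat (a : ℕ) (E : ℕ → ℕ → ℕ) : Prop :=
  (∀ k, E 0 k = 0) ∧ (∀ m k, E m k ≤ E (m + 1) k) ∧ (∀ m k, E (m + 1) (k + 1) ≤ E m k) ∧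
    ∀ m, a ≤ m → E m = E a

/-- The patterns with `a` rows whose last row, the shape of the tableau, is `lam`. -/
def patSet (a : ℕ) (lam : ℕ → ℕ) : Set (ℕ → ℕ → ℕ) := {E | IsPat a E ∧ E a = lam}

/-- The partition with at most `n + 1` parts attached to a strictly increasing sequence `s`
of length `n + 1`: its `k`-th part is `s (n - k) - (n - k)`, and it vanishes for `k > n`. -/
def shape {n : ℕ} (s : Fin (n + 1) → ℕ) (k : ℕ) : ℕ :=
  if k ≤ n then s (Fin.ofNat (n + 1) (n - k)) - (n - k) else 0

theorem le_of_strictMono {n : ℕ} {s : Fin n → ℕ} (hs : StrictMono s) (k : Fin n) : (k : ℕ) ≤ s k := by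
  obtain ⟨k, hk⟩ := k
  induction k with
  | zero => simp
  | succ k ih =>
    have h1 := ih (by omega)
    have h2 := hs (show (⟨k, by omega⟩ : Fin n) < ⟨k + 1, hk⟩ from Nat.lt_succ_self k)
    simp only at h1 ⊢
    omega

theorem shape_rev {n : ℕ} (s : Fin (n + 1) → ℕ) (k : Fin (n + 1)) :
    shape s (n - k) = s k - k := by
  have h : n - (n - (k : ℕ)) = k := by omega
  rw [shape, if_pos (by omega), h]
  congr 2
  ext
  simp

theorem add_shape {n : ℕ} {s : Fin (n + 1) → ℕ} (hs : StrictMono s) (k : Fin (n + 1)) :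
    shape s (n - k) + k = s k := by
  have := le_of_strictMono hs k
  rw [shape_rev]
  omega

theorem shape_injOn {n : ℕ} : Set.InjOn (shape (n := n)) {s | StrictMono s} := by
  intro s hs t ht h
  ext k
  rw [← add_shape hs, ← add_shape ht, h]

/-- A weakly decreasing sequence with at most `n + 1` nonzero terms is a shape. -/
theorem exists_shape {n : ℕ} (mu : ℕ → ℕ) (h1 : ∀ k, mu (k + 1) ≤ mu k) (h2 : mu (n + 1) = 0) :
    ∃ s : Fin (n + 1) → ℕ, StrictMono s ∧ shape s = mu := by
  have hanti : Antitone mu := antitone_nat_of_succ_le h1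
  refine ⟨fun k => mu (n - k) + k, ?_, ?_⟩
  · intro i j hij
    have hij : (i : ℕ) < j := hij
    have := hanti (show n - (j : ℕ) ≤ n - i by omega)
    simp only
    omega
  · ext k
    rw [shape]
    split_ifs with hk
    · have e : ((Fin.ofNat (n + 1) (n - k) : Fin (n + 1)) : ℕ) = n - k := by
        simp [Fin.ofNat, Nat.mod_eq_of_lt (show n - k < n + 1 by omega)]
      have e2 : n - (n - k) = k := by omega
      simp only [e, e2]
      omega
    · have := hanti (show n + 1 ≤ k by omega)
      omega

theorem shape_anti {n : ℕ} {s : Fin (n + 1) → ℕ} (hs : StrictMono s) (k : ℕ) :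
    shape s (k + 1) ≤ shape s k := by
  by_cases hk : k + 1 ≤ n
  · have h1 := add_shape hs ⟨n - (k + 1), by omega⟩
    have h2 := add_shape hs ⟨n - k, by omega⟩
    have h3 := hs (show (⟨n - (k + 1), by omega⟩ : Fin (n + 1)) < ⟨n - k, by omega⟩ from by
      simp only [Fin.mk_lt_mk]; omega)
    simp only at h1 h2
    rw [show n - (n - (k + 1)) = k + 1 by omega] at h1
    rw [show n - (n - k) = k by omega] at h2
    omega
  · rw [shape, if_neg hk]
    exact Nat.zero_le _

theorem shape_eq_zero {n : ℕ} (s : Fin (n + 1) → ℕ) (k : ℕ) (hk : n < k) : shape s k = 0 := by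
  rw [shape, if_neg (by omega)]

/-- Removing the last row of a pattern. -/
theorem patSet_succ (a : ℕ) (lam : ℕ → ℕ) :
    patSet (a + 1) lam = ⋃ mu ∈ {mu : ℕ → ℕ | ∀ k, mu k ≤ lam k ∧ lam (k + 1) ≤ mu k},
      (fun E m => if m ≤ a then E m else lam) '' patSet a mu := by
  ext E
  simp only [Set.mem_iUnion, Set.mem_image, Set.mem_ofPred_eq, exists_prop, patSet]
  constructor
  · rintro ⟨⟨h0, h1, h2, h3⟩, rfl⟩
    refine ⟨E a, fun k => ⟨h1 a k, h2 a k⟩, fun m => E (min m a), ⟨⟨?_, ?_, ?_, ?_⟩, ?_⟩, ?_⟩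
    · simpa using h0
    · intro m k
      rcases lt_or_ge m a with h | h
      · simpa [min_eq_left h.le, min_eq_left (show m + 1 ≤ a from h)] using h1 m k
      · simp [min_eq_right h, min_eq_right (show a ≤ m + 1 by omega)]
    · intro m k
      rcases lt_or_ge m a with h | h
      · simpa [min_eq_left h.le, min_eq_left (show m + 1 ≤ a from h)] using h2 m k
      · simp only [min_eq_right h, min_eq_right (show a ≤ m + 1 by omega)]
        exact (h1 a (k + 1)).trans (h2 a k)
    · intro m h
      simp [min_eq_right h]
    · simp
    · ext m k
      rcases le_or_gt m a with h | h
      · simp [h]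
      · rw [if_neg (by omega), h3 m h]
  · rintro ⟨mu, hmu, E, ⟨⟨h0, h1, h2, h3⟩, rfl⟩, rfl⟩
    refine ⟨⟨?_, ?_, ?_, ?_⟩, ?_⟩
    · simpa using h0
    · intro m k
      rcases lt_trichotomy m a with h | rfl | h
      · simpa [h.le, show m + 1 ≤ a from h] using h1 m k
      · simpa using (hmu k).1
      · simp [show ¬ m ≤ a by omega, show ¬ m + 1 ≤ a by omega]
    · intro m k
      rcases lt_trichotomy m a with h | rfl | h
      · simpa [h.le, show m + 1 ≤ a from h] using h2 m k
      · simpa using (hmu k).2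
      · simp only [show ¬ m ≤ a by omega, show ¬ m + 1 ≤ a by omega, if_false]
        exact (hmu k).2.trans (hmu k).1
    · intro m h
      simp [show ¬ m ≤ a by omega]
    · simp

/-- The strictly increasing sequences whose shape interlaces with the shape of `s`: these are the
possible rows of a pattern just above a row `shape s`. In terms of sequences the interlacing
condition is a product of independent interval conditions. -/
def interl {n : ℕ} (s : Fin (n + 1) → ℕ) : Finset (Fin (n + 1) → ℕ) :=
  Fintype.piFinset (Fin.cases (Finset.range (s 0 + 1)) fun k => Finset.Ioc (s k.castSucc) (s k.succ))

theorem mem_interl {n : ℕ} {s t : Fin (n + 1) → ℕ} :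
    t ∈ interl s ↔ t 0 ≤ s 0 ∧ ∀ k : Fin n, s k.castSucc < t k.succ ∧ t k.succ ≤ s k.succ := by
  rw [interl, Fintype.mem_piFinset, Fin.forall_fin_succ]
  simp

theorem strictMono_of_mem_interl {n : ℕ} {s t : Fin (n + 1) → ℕ} (h : t ∈ interl s) :
    StrictMono t := by
  rw [mem_interl] at h
  rw [Fin.strictMono_iff_lt_succ]
  intro k
  refine lt_of_le_of_lt ?_ (h.2 k).1
  obtain ⟨k, hk⟩ := k
  cases k with
  | zero => exact h.1
  | succ k => exact (h.2 ⟨k, by omega⟩).2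

theorem interl_shape {n : ℕ} {s t : Fin (n + 1) → ℕ} (hs : StrictMono s) (ht : StrictMono t) :
    t ∈ interl s ↔ ∀ k, shape t k ≤ shape s k ∧ shape s (k + 1) ≤ shape t k := by
  rw [mem_interl]
  constructor
  · rintro ⟨h0, h1⟩ k
    rcases lt_trichotomy k n with hk | rfl | hk
    · have h2 := h1 ⟨n - k - 1, by omega⟩
      have a1 := add_shape hs ⟨n - k - 1 + 1, by omega⟩
      have a2 := add_shape hs ⟨n - k - 1, by omega⟩
      have a3 := add_shape ht ⟨n - k - 1 + 1, by omega⟩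
      simp only [Fin.castSucc_mk, Fin.succ_mk] at h2 a1 a2 a3
      rw [show n - (n - k - 1 + 1) = k by omega] at a1 a3
      rw [show n - (n - k - 1) = k + 1 by omega] at a2
      omega
    · have a1 := add_shape hs 0
      have a3 := add_shape ht 0
      rw [shape_eq_zero s (k + 1) (by omega)]
      simp at a1 a3
      omega
    · rw [shape_eq_zero s _ (by omega), shape_eq_zero s _ (by omega), shape_eq_zero t _ (by omega)]
      simp
  · intro h
    constructor
    · have a1 := add_shape hs 0
      have a3 := add_shape ht 0
      have := h n
      simp at a1 a3
      omega
    · intro k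
      have a1 := add_shape hs k.succ
      have a2 := add_shape hs k.castSucc
      have a3 := add_shape ht k.succ
      have h1 := h (n - (k + 1))
      have := k.2
      simp only [Fin.val_succ, Fin.val_castSucc] at a1 a2 a3
      rw [show n - (k + 1 : ℕ) + 1 = n - k by omega] at h1
      omega

/-- The removal of the last row, with shapes expressed by increasing sequences. -/
theorem patSet_succ_shape (a : ℕ) {n : ℕ} {s : Fin (n + 1) → ℕ} (hs : StrictMono s) :
    patSet (a + 1) (shape s) = ⋃ t ∈ (interl s : Set (Fin (n + 1) → ℕ)),
      (fun E m => if m ≤ a then E m else shape s) '' patSet a (shape t) := by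
  rw [patSet_succ]
  ext E
  simp only [Set.mem_iUnion, exists_prop, Set.mem_ofPred_eq, Finset.mem_coe]
  constructor
  · rintro ⟨mu, hmu, hE⟩
    obtain ⟨t, ht, rfl⟩ := exists_shape (n := n) mu (fun k => (hmu (k + 1)).1.trans (hmu k).2)
      (by have := (hmu (n + 1)).1; rw [shape_eq_zero s _ (by omega)] at this; omega)
    exact ⟨t, (interl_shape hs ht).2 hmu, hE⟩
  · rintro ⟨t, ht, hE⟩
    exact ⟨shape t, (interl_shape hs (strictMono_of_mem_interl ht)).1 ht, hE⟩

theorem patSet_finite (a : ℕ) {n : ℕ} {s : Fin (n + 1) → ℕ} (hs : StrictMono s) :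
    (patSet a (shape s)).Finite := by
  induction a generalizing s with
  | zero =>
    refine (Set.finite_singleton (fun _ _ => 0)).subset ?_
    rintro E ⟨⟨h0, -, -, h3⟩, -⟩
    ext m k
    rw [h3 m (Nat.zero_le _), h0]
  | succ a ih =>
    rw [patSet_succ_shape a hs]
    exact Set.Finite.biUnion (Finset.finite_toSet _) fun t ht =>
      (ih (strictMono_of_mem_interl ht)).image _

theorem patSet_succ_ncard (a : ℕ) {n : ℕ} {s : Fin (n + 1) → ℕ} (hs : StrictMono s) :
    (patSet (a + 1) (shape s)).ncard = ∑ t ∈ interl s, (patSet a (shape t)).ncard := by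
  rw [patSet_succ_shape a hs, Set.Finite.ncard_biUnion (Finset.finite_toSet _), finsum_mem_coe_finset]
  · refine Finset.sum_congr rfl fun t _ => Set.InjOn.ncard_image ?_
    rintro E hE E' hE' h
    ext m k
    rcases le_or_gt m a with hm | hm
    · have := congrFun (congrFun h m) k
      simpa [hm] using this
    · rw [hE.1.2.2.2 m hm.le, hE'.1.2.2.2 m hm.le, hE.2, hE'.2]
  · intro t ht
    exact (patSet_finite a (strictMono_of_mem_interl ht)).image _
  · intro t ht t' ht' hne
    rw [Function.onFun, Set.disjoint_left]
    rintro _ ⟨E, hE, rfl⟩ ⟨E', hE', h⟩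
    apply hne
    apply shape_injOn (strictMono_of_mem_interl ht) (strictMono_of_mem_interl ht')
    have := congrFun h a
    simp only [le_refl, if_true] at this
    rw [← hE.2, ← hE'.2, this]

/-! ### Counting patterns of a given shape -/

theorem sum_range_coeff (f : PowerSeries ℤ) (l : ℕ) :
    ∑ m ∈ Finset.range (l + 1), PowerSeries.coeff m ((1 - PowerSeries.X) * f) =
      PowerSeries.coeff l f := by
  induction l with
  | zero => simp [sub_mul]
  | succ l ih =>
    rw [Finset.sum_range_succ, ih, sub_mul, one_mul, map_sub, PowerSeries.coeff_succ_X_mul]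
    ring

theorem sum_Ioc_coeff (f : PowerSeries ℤ) (p q : ℕ) (h : p ≤ q) :
    ∑ m ∈ Finset.Ioc p q, PowerSeries.coeff m ((1 - PowerSeries.X) * f) =
      PowerSeries.coeff q f - PowerSeries.coeff p f := by
  rw [← sum_range_coeff f q, ← sum_range_coeff f p, eq_sub_iff_add_eq, add_comm,
    ← Finset.sum_union]
  · congr 1
    ext x
    simp
    omega
  · rw [Finset.disjoint_left]
    intro x
    simp
    omega

/-- The power series `1 / (1 - z) ^ a`, whose coefficients are the complete homogeneous symmetric
functions evaluated at `a` ones. -/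
noncomputable def hser (a : ℕ) : PowerSeries ℤ := (PowerSeries.invOneSubPow ℤ a).val

theorem one_sub_pow_mul_hser (a e : ℕ) : (1 - PowerSeries.X) ^ e * hser (a + e) = hser a :=
  PowerSeries.one_sub_pow_mul_invOneSubPow_val_add_eq_invOneSubPow_val ℤ a e

/-- The Jacobi–Trudi formula at `a` ones: the number of patterns of a given shape is a determinant
of coefficients of `hser a`. In the induction on `a` both sides are sums over the interlacing
shapes; on the determinant side this is multilinearity in the rows followed by row operations. -/
theorem patSet_ncard (a : ℕ) {n : ℕ} {s : Fin (n + 1) → ℕ} (hs : StrictMono s) :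
    ((patSet a (shape s)).ncard : ℤ) = Matrix.det (Matrix.of fun k j : Fin (n + 1) =>
      PowerSeries.coeff (s k) (PowerSeries.X ^ (j : ℕ) * hser a)) := by
  induction a generalizing s with
  | zero =>
    have hh : hser 0 = 1 := by rw [hser, PowerSeries.invOneSubPow_zero, Units.val_one]
    simp only [hh, mul_one, PowerSeries.coeff_X_pow]
    by_cases h : ∀ k, s k = k
    · have h1 : patSet 0 (shape s) = {fun _ _ => 0} := by
        ext E
        rw [Set.mem_singleton_iff]
        constructor
        · rintro ⟨⟨h0, -, -, h3⟩, -⟩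
          ext m k
          rw [h3 m (Nat.zero_le _), h0]
        · rintro rfl
          refine ⟨⟨by simp, by simp, by simp, by simp⟩, ?_⟩
          ext k
          simp [shape, h, Nat.mod_eq_of_lt]
      rw [h1, Set.ncard_singleton]
      simp only [h]
      have h2 : (Matrix.of fun k j : Fin (n + 1) => if (k : ℕ) = j then (1 : ℤ) else 0) = 1 := by
        ext i j
        rw [Matrix.of_apply, Matrix.one_apply]
        simp [Fin.ext_iff]
      rw [h2, Matrix.det_one, Nat.cast_one]
    · have hlast : n < s (Fin.last n) := by
        by_contra hl
        apply h
        intro k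
        have h1 := le_of_strictMono hs k
        have h2 := le_of_strictMono (s := fun i => n - s (Fin.rev i)) (n := n + 1) ?_ (Fin.rev k)
        · simp only [Fin.rev_rev, Fin.val_rev] at h2
          have h6 := hs.monotone (Fin.le_last k)
          have := k.2
          omega
        · intro i j hij
          have h3 := hs (Fin.rev_lt_rev.2 hij)
          have h4 := hs.monotone (Fin.le_last (Fin.rev i))
          simp only
          omega
      have h1 : patSet 0 (shape s) = ∅ := by
        rw [Set.eq_empty_iff_forall_notMem]
        rintro E ⟨⟨h0, -, -, -⟩, h4⟩
        have h5 := add_shape hs (Fin.last n)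
        rw [← h4, h0] at h5
        simp at h5
        omega
      rw [h1, Set.ncard_empty, Matrix.det_eq_zero_of_row_eq_zero (Fin.last n)]
      · rfl
      · intro j
        rw [Matrix.of_apply, if_neg]
        omega
  | succ a ih =>
    rw [patSet_succ_ncard a hs]
    push_cast
    have hX : ∀ j : ℕ, PowerSeries.X ^ j * hser a =
        (1 - PowerSeries.X) * (PowerSeries.X ^ j * hser (a + 1)) := by
      intro j
      rw [← one_sub_pow_mul_hser a 1]
      ring
    have h1 : ∀ t ∈ interl s, ((patSet a (shape t)).ncard : ℤ) =
        (Matrix.detRowAlternating (n := Fin (n + 1)) (R := ℤ)).toMultilinearMap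
          (fun k j : Fin (n + 1) => PowerSeries.coeff (t k) (PowerSeries.X ^ (j : ℕ) * hser a)) :=
      fun t ht => ih (strictMono_of_mem_interl ht)
    rw [Finset.sum_congr rfl h1, interl, ← MultilinearMap.map_sum_finset
      (Matrix.detRowAlternating (n := Fin (n + 1)) (R := ℤ)).toMultilinearMap
      (fun (_ : Fin (n + 1)) (m : ℕ) (j : Fin (n + 1)) =>
        PowerSeries.coeff m (PowerSeries.X ^ (j : ℕ) * hser a))]
    symm
    refine Matrix.det_eq_of_forall_row_eq_smul_add_pred (fun _ => 1) ?_ ?_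
    · intro j
      simp only [Matrix.of_apply, Fin.cases_zero, Finset.sum_apply, hX]
      rw [sum_range_coeff]
    · intro i j
      simp only [Matrix.of_apply, Fin.cases_succ, Finset.sum_apply, hX]
      rw [sum_Ioc_coeff _ _ _ (hs (Fin.castSucc_lt_succ (i := i))).le]
      ring


/-- The matrix of the coefficients of `(1 - z) ^ (n - j)`. It expresses the series `hser (α + j + 1)`
through the series `z ^ i * hser (α + n + 1)`. -/
noncomputable def transMat (n : ℕ) : Matrix (Fin (n + 1)) (Fin (n + 1)) ℤ :=
  Matrix.of fun i j => ((1 - Polynomial.X : Polynomial ℤ) ^ (n - (j : ℕ))).coeff i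

theorem coeff_one_sub_X_pow_self (m : ℕ) :
    ((1 - Polynomial.X : Polynomial ℤ) ^ m).coeff m = (-1) ^ m := by
  have h1 : (1 - Polynomial.X : Polynomial ℤ) = -(Polynomial.X - Polynomial.C 1) := by simp
  rw [h1, neg_pow]
  have h2 : ((Polynomial.X - Polynomial.C 1 : Polynomial ℤ) ^ m).Monic :=
    (Polynomial.monic_X_sub_C 1).pow m
  have h3 : ((Polynomial.X - Polynomial.C 1 : Polynomial ℤ) ^ m).natDegree = m := by
    rw [Polynomial.natDegree_pow, Polynomial.natDegree_X_sub_C, mul_one]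
  have h4 : ((-1 : Polynomial ℤ)) ^ m = Polynomial.C ((-1) ^ m) := by simp
  rw [h4, Polynomial.coeff_C_mul]
  have h5 := h2.coeff_natDegree
  rw [h3] at h5
  rw [h5, mul_one]

theorem natDegree_one_sub_X_pow (m : ℕ) :
    ((1 - Polynomial.X : Polynomial ℤ) ^ m).natDegree ≤ m := by
  have h1 : (1 - Polynomial.X : Polynomial ℤ).natDegree ≤ 1 := by compute_degree
  simpa using Polynomial.natDegree_pow_le_of_le m h1

/-- Up to reversing the columns the matrix is triangular with diagonal entries `±1`. Only the
square of the determinant is needed, since the number of patterns enters once for each of the two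
tableaux. -/
theorem transMat_det_sq (n : ℕ) : (transMat n).det * (transMat n).det = 1 := by
  have h1 : transMat n = (Matrix.of fun i j : Fin (n + 1) =>
      ((1 - Polynomial.X : Polynomial ℤ) ^ (j : ℕ)).coeff i).submatrix id Fin.revPerm := by
    ext i j
    simp only [transMat, Matrix.of_apply, Matrix.submatrix_apply, id, Fin.revPerm_apply, Fin.val_rev]
    rw [show n + 1 - ((j : ℕ) + 1) = n - j by omega]
  have h2 : (Matrix.of fun i j : Fin (n + 1) =>
      ((1 - Polynomial.X : Polynomial ℤ) ^ (j : ℕ)).coeff i).det = ∏ j : Fin (n + 1), (-1) ^ (j : ℕ) := by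
    rw [Matrix.det_of_isUpperTriangular]
    · exact Finset.prod_congr rfl fun j _ => coeff_one_sub_X_pow_self j
    · intro i j hij
      have hij : (j : ℕ) < i := hij
      exact Polynomial.coeff_eq_zero_of_natDegree_lt
        (lt_of_le_of_lt (natDegree_one_sub_X_pow _) hij)
  rw [h1, Matrix.det_permute', h2, mul_mul_mul_comm, ← Finset.prod_mul_distrib,
    Finset.prod_eq_one, mul_one]
  · rw [← Int.cast_mul, ← Units.val_mul, Int.units_mul_self]
    simp
  · intro j _
    rw [← mul_pow]
    simp

/-- The number of patterns as a determinant of binomial coefficients, up to the sign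
`(transMat n).det`. -/
theorem patSet_ncard_mul (α n : ℕ) {s : Fin (n + 1) → ℕ} (hs : StrictMono s) :
    ((patSet (α + (n + 1)) (shape s)).ncard : ℤ) * (transMat n).det =
      Matrix.det (Matrix.of fun k j : Fin (n + 1) => ((α + (j : ℕ) + s k).choose (α + j) : ℤ)) := by
  rw [patSet_ncard _ hs, ← Matrix.det_mul]
  congr 1
  ext k j
  have h1 : hser (α + j + 1) = ∑ i : Fin (n + 1),
      PowerSeries.C (((1 - Polynomial.X : Polynomial ℤ) ^ (n - (j : ℕ))).coeff i) *
      (PowerSeries.X ^ (i : ℕ) * hser (α + (n + 1))) := by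
    have h2 := (Polynomial.as_sum_range_C_mul_X_pow' ((1 - Polynomial.X : Polynomial ℤ) ^ (n - (j : ℕ)))
      (n := n + 1) (lt_of_le_of_lt (natDegree_one_sub_X_pow _) (by omega)))
    have h3 := congrArg (fun f : Polynomial ℤ => (f : PowerSeries ℤ)) h2
    simp only [Polynomial.coe_pow, Polynomial.coe_sub, Polynomial.coe_one, Polynomial.coe_X] at h3
    rw [← one_sub_pow_mul_hser (α + j + 1) (n - j), h3]
    have := j.2
    rw [show α + (j : ℕ) + 1 + (n - j) = α + (n + 1) by omega, Finset.sum_range]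
    rw [← Polynomial.coeToPowerSeries.ringHom_apply, map_sum, Finset.sum_mul]
    refine Finset.sum_congr rfl fun i _ => ?_
    rw [Polynomial.coeToPowerSeries.ringHom_apply, Polynomial.coe_mul, Polynomial.coe_C, Polynomial.coe_pow, Polynomial.coe_X, mul_assoc]
  have h4 : PowerSeries.coeff (s k) (hser (α + j + 1)) = ((α + (j : ℕ) + s k).choose (α + j) : ℤ) := by
    rw [hser, PowerSeries.invOneSubPow_val_succ_eq_mk_add_choose, PowerSeries.coeff_mk]
  rw [Matrix.of_apply, ← h4, h1, map_sum, Matrix.mul_apply]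
  refine Finset.sum_congr rfl fun i _ => ?_
  simp only [Matrix.of_apply, transMat, PowerSeries.coeff_C_mul]
  ring

/-! ### Counting pairs of patterns -/

/-- Pairs of patterns, with `a` and `b` rows, of a common shape of size `ℓ` with at most `n` parts.
The vanishing of part `n` bounds the number of parts because the rows of a pattern are weakly
decreasing. -/
def pairSet (a b n ℓ : ℕ) : Set ((ℕ → ℕ → ℕ) × (ℕ → ℕ → ℕ)) :=
  {p | IsPat a p.1 ∧ IsPat b p.2 ∧ p.1 a = p.2 b ∧ p.1 a n = 0 ∧ ∑ k ∈ Finset.range n, p.1 a k = ℓ}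

/-- The size of the shape is `∑ s k` minus `0 + 1 + ⋯ + n`. -/
theorem sum_shape {n : ℕ} {s : Fin (n + 1) → ℕ} (hs : StrictMono s) :
    ∑ k ∈ Finset.range (n + 1), shape s k + ∑ j : Fin (n + 1), (j : ℕ) = ∑ k, s k := by
  rw [← Finset.sum_range_reflect, Finset.sum_range, ← Finset.sum_add_distrib]
  refine Finset.sum_congr rfl fun k _ => ?_
  rw [← add_shape hs k]
  simp

theorem IsPat.anti {a : ℕ} {E : ℕ → ℕ → ℕ} (h : IsPat a E) (m k : ℕ) : E m (k + 1) ≤ E m k :=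
  (h.2.1 m (k + 1)).trans (h.2.2.1 m k)

theorem pairSet_eq (a b n ℓ : ℕ) :
    pairSet a b (n + 1) ℓ =
      ⋃ s ∈ (((Finset.piAntidiag (Finset.univ : Finset (Fin (n + 1)))
          (ℓ + ∑ j : Fin (n + 1), (j : ℕ))).filter StrictMono : Finset _) : Set (Fin (n + 1) → ℕ)),
        patSet a (shape s) ×ˢ patSet b (shape s) := by
  ext ⟨E, F⟩
  simp only [pairSet, Set.mem_iUnion, exists_prop, Finset.mem_coe, Finset.mem_filter,
    Finset.mem_piAntidiag, Set.mem_prod, patSet, Set.mem_ofPred_eq]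
  constructor
  · rintro ⟨hE, hF, h1, h2, h3⟩
    obtain ⟨s, hs, h4⟩ := exists_shape (n := n) (E a) (hE.anti a) h2
    refine ⟨s, ⟨⟨?_, by simp⟩, hs⟩, ⟨hE, h4.symm⟩, hF, by rw [← h1, h4]⟩
    rw [← sum_shape hs, h4, h3]
  · rintro ⟨s, ⟨⟨h1, -⟩, hs⟩, ⟨hE, h2⟩, hF, h3⟩
    refine ⟨hE, hF, h2.trans h3.symm, by rw [h2, shape_eq_zero s _ (by omega)], ?_⟩
    rw [h2]
    have h4 := sum_shape hs
    change ∑ k, s k = _ at h1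
    omega

theorem pairSet_finite_ncard (a b n ℓ : ℕ) :
    (pairSet a b (n + 1) ℓ).Finite ∧ (pairSet a b (n + 1) ℓ).ncard =
      ∑ s ∈ (Finset.piAntidiag (Finset.univ : Finset (Fin (n + 1)))
          (ℓ + ∑ j : Fin (n + 1), (j : ℕ))).filter StrictMono,
        (patSet a (shape s)).ncard * (patSet b (shape s)).ncard := by
  have hfin : ∀ s ∈ (((Finset.piAntidiag (Finset.univ : Finset (Fin (n + 1)))
          (ℓ + ∑ j : Fin (n + 1), (j : ℕ))).filter StrictMono : Finset _) : Set (Fin (n + 1) → ℕ)),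
      (patSet a (shape s) ×ˢ patSet b (shape s)).Finite := by
    intro s hs
    have hs := (Finset.mem_filter.1 hs).2
    exact (patSet_finite a hs).prod (patSet_finite b hs)
  rw [pairSet_eq]
  refine ⟨Set.Finite.biUnion (Finset.finite_toSet _) hfin, ?_⟩
  rw [Set.Finite.ncard_biUnion (Finset.finite_toSet _) hfin, finsum_mem_coe_finset]
  · exact Finset.sum_congr rfl fun s _ => Set.ncard_prod
  · intro t ht t' ht' hne
    rw [Function.onFun, Set.disjoint_left]
    rintro ⟨E, F⟩ ⟨h1, -⟩ ⟨h2, -⟩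
    exact hne (shape_injOn (Finset.mem_filter.1 ht).2 (Finset.mem_filter.1 ht').2 (h1.2.symm.trans h2.2))

/-- The factor `(1 - z) ^ (α+i)` is absorbed by row `i` and `(1 - z) ^ (β+j+1)` by column `j`. -/
theorem mk_det_mul_pow (α β n : ℕ) :
    Matrix.det (Matrix.of fun i j : Fin n => (PowerSeries.mk fun l =>
        ((α + (i : ℕ) + l).choose (α + i) : ℤ) * ((β + (j : ℕ) + l).choose (β + j) : ℤ))) *
      (1 - PowerSeries.X) ^ (∑ i : Fin n, (α + (i : ℕ)) + ∑ j : Fin n, (β + (j : ℕ) + 1)) =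
    ((numMat α β n).det : PowerSeries ℤ) := by
  rw [pow_add, ← Finset.prod_pow_eq_pow_sum, ← Finset.prod_pow_eq_pow_sum, ← mul_assoc, mul_comm (Matrix.det _),
    ← Matrix.det_mul_column, mul_comm, ← Matrix.det_mul_row, ← Polynomial.coeToPowerSeries.ringHom_apply, RingHom.map_det]
  congr 1
  ext1 i j
  rw [RingHom.mapMatrix_apply, Matrix.map_apply, numMat, Polynomial.coeToPowerSeries.ringHom_apply]
  simp only [Matrix.of_apply]
  rw [← mk_choose_mul_choose]
  ring

theorem sum_val_le_of_strictMono {n : ℕ} {s : Fin n → ℕ} (hs : StrictMono s) :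
    ∑ j : Fin n, (j : ℕ) ≤ ∑ j, s j :=
  Finset.sum_le_sum fun j _ => le_of_strictMono hs j

/-- The generating function of the numbers of pairs of patterns. The factor
`z ^ (0 + ⋯ + n)` accounts for the shift between partitions and strictly increasing sequences. -/
theorem mk_pairSet_ncard (α β n : ℕ) :
    (PowerSeries.mk fun ℓ => ((pairSet (α + (n + 1)) (β + (n + 1)) (n + 1) ℓ).ncard : ℤ)) *
      PowerSeries.X ^ (∑ j : Fin (n + 1), (j : ℕ)) *
      (1 - PowerSeries.X) ^ (∑ i : Fin (n + 1), (α + (i : ℕ)) + ∑ j : Fin (n + 1), (β + (j : ℕ) + 1)) =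
    ((numMat α β (n + 1)).det : PowerSeries ℤ) := by
  rw [← mk_det_mul_pow]
  congr 1
  ext L
  rw [coeff_det_mk (fun i l => ((α + (i : ℕ) + l).choose (α + i) : ℤ))
    (fun j l => ((β + (j : ℕ) + l).choose (β + j) : ℤ)), PowerSeries.coeff_mul_X_pow']
  split_ifs with hL
  · rw [PowerSeries.coeff_mk, (pairSet_finite_ncard _ _ _ _).2, Nat.sub_add_cancel hL]
    push_cast
    refine Finset.sum_congr rfl fun s hs => ?_
    have hs := (Finset.mem_filter.1 hs).2
    rw [← patSet_ncard_mul α n hs, ← patSet_ncard_mul β n hs, mul_mul_mul_comm, transMat_det_sq, mul_one]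
  · symm
    refine Finset.sum_eq_zero fun s hs => ?_
    rw [Finset.mem_filter, Finset.mem_piAntidiag] at hs
    exact absurd (hs.1.1 ▸ sum_val_le_of_strictMono hs.2) hL

/-- The Cauchy identity at ones: without a restriction on the number of parts, pairs of tableaux
of size `ℓ` are equinumerous with monomials of degree `ℓ` in the variables of a matrix. -/
theorem pairSet_ncard_full (α n ℓ : ℕ) :
    (pairSet (α + (n + 1)) (n + 1) (n + 1) ℓ).ncard =
      ((α + (n + 1)) * (n + 1) + ℓ - 1).choose ℓ := by
  have h := mk_pairSet_ncard α 0 n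
  rw [numMat_det_zero, Polynomial.coe_pow, Polynomial.coe_X] at h
  have hd : ∑ i : Fin (n + 1), (α + (i : ℕ)) + ∑ j : Fin (n + 1), (0 + (j : ℕ) + 1) =
      (α + (n + 1)) * (n + 1) := by
    rw [Finset.sum_range (fun i => α + i) |>.symm, Finset.sum_range (fun i => 0 + i + 1) |>.symm,
      ← Finset.sum_range_reflect, ← Finset.sum_add_distrib]
    rw [Finset.sum_congr rfl (g := fun _ => α + (n + 1))]
    · simp [mul_comm]
    · intro j hj
      simp at hj
      omega
  obtain ⟨D, hD⟩ : ∃ D, (α + (n + 1)) * (n + 1) = D + 1 := ⟨_, (Nat.succ_pred_eq_of_pos (by positivity)).symm⟩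
  rw [hd, hD, mul_assoc, mul_comm, mul_assoc] at h
  have h2 := mul_left_cancel₀ (pow_ne_zero _ PowerSeries.X_ne_zero) (h.trans (mul_one _).symm)
  have h3 := PowerSeries.mk_add_choose_mul_one_sub_pow_eq_one ℤ D
  have h4 : (PowerSeries.mk fun ℓ => ((pairSet (α + (n + 1)) (0 + (n + 1)) (n + 1) ℓ).ncard : ℤ)) =
      PowerSeries.mk fun n ↦ (Nat.choose (D + n) D : ℤ) := by
    rw [mul_comm] at h2
    have h5 : IsUnit ((1 - PowerSeries.X : PowerSeries ℤ) ^ (D + 1)) := .of_mul_eq_one_right _ h3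
    exact h5.mul_right_cancel (h2.trans h3.symm)
  have h5 := congrArg (PowerSeries.coeff ℓ) h4
  rw [PowerSeries.coeff_mk, PowerSeries.coeff_mk, zero_add] at h5
  rw [hD, show D + 1 + ℓ - 1 = D + ℓ by omega]
  rw [Nat.choose_symm_add] at h5
  exact_mod_cast h5

section

variable {K : Type*} [Field K]

/-! ### Leading monomials -/

/-- The index set of the auxiliary variables: `Sum.inl (i, k)` stands for `y i k` and
`Sum.inr (j, k)` for `z j k`. -/
abbrev Idx : Type := (ℕ × ℕ) ⊕ (ℕ × ℕ)

/-- A weight on monomials, in which both `y i k` and `z i k` weigh `(Nb - i) * k`. Among the terms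
of a minor of the matrix `entry` the one with `k = 0, 1, 2, …` in order is the unique cheapest, for
any `Nb` exceeding all row and column indices. -/
noncomputable def cost (Nb : ℕ) : (Idx →₀ ℕ) →+ ℕ :=
  Finsupp.liftAddHom fun x : Idx => AddMonoidHom.mulRight (Sum.elim (fun p => (Nb - p.1) * p.2) (fun p => (Nb - p.1) * p.2) x)

theorem cost_single_inl (Nb i k : ℕ) : cost Nb (Finsupp.single (Sum.inl (i, k)) 1) = (Nb - i) * k := by
  simp [cost]

theorem cost_single_inr (Nb i k : ℕ) : cost Nb (Finsupp.single (Sum.inr (i, k)) 1) = (Nb - i) * k := by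
  simp [cost]

/-- The polynomials all of whose monomials have cost at least `c`. -/
noncomputable def costGE (K : Type*) [Field K] (Nb c : ℕ) : Submodule K (MvPolynomial Idx K) where
  carrier := {f | ∀ d, f.coeff d ≠ 0 → c ≤ cost Nb d}
  zero_mem' := by simp
  add_mem' := by
    intro f g hf hg d hd
    rw [MvPolynomial.coeff_add] at hd
    by_cases h : f.coeff d = 0
    · exact hg d (by rwa [h, zero_add] at hd)
    · exact hf d h
  smul_mem' := by
    intro a f hf d hd
    rw [MvPolynomial.coeff_smul] at hd
    exact hf d (right_ne_zero_of_smul hd)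


theorem mem_costGE {Nb c : ℕ} {f : MvPolynomial Idx K} :
    f ∈ costGE K Nb c ↔ ∀ d, f.coeff d ≠ 0 → c ≤ cost Nb d := Iff.rfl

theorem monomial_mem_costGE {Nb c : ℕ} {d : Idx →₀ ℕ} (a : K) (h : c ≤ cost Nb d) :
    MvPolynomial.monomial d a ∈ costGE K Nb c := by
  classical
  intro e he
  rw [MvPolynomial.coeff_monomial] at he
  split_ifs at he with h1
  · rwa [← h1]
  · exact absurd rfl he

theorem mul_mem_costGE {Nb c c' : ℕ} {f g : MvPolynomial Idx K} (hf : f ∈ costGE K Nb c)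
    (hg : g ∈ costGE K Nb c') : f * g ∈ costGE K Nb (c + c') := by
  classical
  intro d hd
  rw [MvPolynomial.coeff_mul] at hd
  obtain ⟨x, hx, hne⟩ := Finset.exists_ne_zero_of_sum_ne_zero hd
  rw [Finset.HasAntidiagonal.mem_antidiagonal] at hx
  rw [← hx, map_add]
  exact add_le_add (hf _ (left_ne_zero_of_mul hne)) (hg _ (right_ne_zero_of_mul hne))

/-- `f` has leading monomial `d` with coefficient `1`: all other monomials of `f` have strictly
larger cost than `d`. -/
def LeadAt (Nb : ℕ) (f : MvPolynomial Idx K) (d : Idx →₀ ℕ) : Prop :=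
  f - MvPolynomial.monomial d 1 ∈ costGE K Nb (cost Nb d + 1)

theorem leadAt_one (Nb : ℕ) : LeadAt Nb (1 : MvPolynomial Idx K) 0 := by
  rw [LeadAt, ← MvPolynomial.C_1, MvPolynomial.C_apply, sub_self]
  exact zero_mem _

theorem LeadAt.mul {Nb : ℕ} {f g : MvPolynomial Idx K} {d e : Idx →₀ ℕ} (hf : LeadAt Nb f d)
    (hg : LeadAt Nb g e) : LeadAt Nb (f * g) (d + e) := by
  have h1 : f * g - MvPolynomial.monomial (d + e) 1 =
      MvPolynomial.monomial d 1 * (g - MvPolynomial.monomial e 1) +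
      ((f - MvPolynomial.monomial d 1) * MvPolynomial.monomial e 1 +
      (f - MvPolynomial.monomial d 1) * (g - MvPolynomial.monomial e 1)) := by
    rw [← mul_one (1 : K), ← MvPolynomial.monomial_mul, mul_one]
    ring
  rw [LeadAt, h1, map_add]
  have h2 := monomial_mem_costGE (Nb := Nb) (1 : K) (le_refl (cost Nb d))
  have h3 := monomial_mem_costGE (Nb := Nb) (1 : K) (le_refl (cost Nb e))
  have hmono : ∀ {c c' : ℕ} {f : MvPolynomial Idx K}, c ≤ c' → f ∈ costGE K Nb c' → f ∈ costGE K Nb c :=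
    fun h hf d hd => h.trans (hf d hd)
  refine add_mem (hmono (by omega) (mul_mem_costGE h2 hg)) (add_mem
    (hmono (by omega) (mul_mem_costGE hf h3)) (hmono (by omega) (mul_mem_costGE hf hg)))

theorem LeadAt.coeff {Nb : ℕ} {f : MvPolynomial Idx K} {d : Idx →₀ ℕ} (hf : LeadAt Nb f d) :
    f.coeff d = 1 := by
  classical
  by_contra h
  have h2 : (f - MvPolynomial.monomial d 1).coeff d ≠ 0 := by
    rw [MvPolynomial.coeff_sub, MvPolynomial.coeff_monomial, if_pos rfl]
    exact sub_ne_zero.2 h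
  have h3 := hf d h2
  omega

theorem LeadAt.coeff_eq_zero {Nb : ℕ} {f : MvPolynomial Idx K} {d e : Idx →₀ ℕ} (hf : LeadAt Nb f d)
    (hne : d ≠ e) (hle : cost Nb e ≤ cost Nb d) : f.coeff e = 0 := by
  classical
  by_contra h
  have h2 : (f - MvPolynomial.monomial d 1).coeff e ≠ 0 := by
    rwa [MvPolynomial.coeff_sub, MvPolynomial.coeff_monomial, if_neg hne, sub_zero]
  have h3 := hf e h2
  omega

theorem LeadAt.linearIndependent {Nb : ℕ} {ι : Type*} {f : ι → MvPolynomial Idx K}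
    {d : ι → Idx →₀ ℕ} (hd : Function.Injective d) (hf : ∀ i, LeadAt Nb (f i) (d i)) :
    LinearIndependent K f := by
  classical
  rw [linearIndependent_iff']
  intro s g hg
  by_contra! hne
  obtain ⟨i, hi, hgi⟩ := hne
  obtain ⟨i0, h0, hmin⟩ := (s.filter fun i => g i ≠ 0).exists_min_image (fun i => cost Nb (d i))
    ⟨i, Finset.mem_filter.2 ⟨hi, hgi⟩⟩
  rw [Finset.mem_filter] at h0
  have h1 := congrArg (MvPolynomial.coeff (d i0)) hg
  rw [MvPolynomial.coeff_sum, MvPolynomial.coeff_zero, Finset.sum_eq_single i0] at h1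
  · rw [MvPolynomial.coeff_smul, (hf i0).coeff, smul_eq_mul, mul_one] at h1
    exact h0.2 h1
  · intro j hj hji
    rw [MvPolynomial.coeff_smul]
    by_cases hz : g j = 0
    · rw [hz, zero_smul]
    · rw [(hf j).coeff_eq_zero (hd.ne hji) (hmin j (Finset.mem_filter.2 ⟨hj, hz⟩)), smul_zero]
  · intro h
    exact absurd h0.1 h

/-- The sum of `t` distinct natural numbers is at least `0 + 1 + ⋯ + (t - 1)`. -/
theorem sum_val_le_of_injective {t : ℕ} {s : Fin t → ℕ} (hs : Function.Injective s) :
    ∑ p : Fin t, (p : ℕ) ≤ ∑ p, s p := by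
  have hc : (Finset.univ.image s).card = t := by
    rw [Finset.card_image_of_injective _ hs, Finset.card_univ, Fintype.card_fin]
  have h1 : ∑ p, s p = ∑ x ∈ Finset.univ.image s, x := by
    rw [Finset.sum_image (fun _ _ _ _ h => hs h)]
  rw [h1]
  have h2 : ∑ x ∈ Finset.univ.image s, x = ∑ p, (Finset.univ.image s).orderEmbOfFin hc p := by
    conv_lhs => rw [← Finset.image_orderEmbOfFin_univ _ hc]
    rw [Finset.sum_image (fun _ _ _ _ h => (Finset.orderEmbOfFin _ hc).injective h)]
  rw [h2]
  exact sum_val_le_of_strictMono (Finset.orderEmbOfFin _ hc).strictMono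

/-- A rearrangement inequality with its equality case: for strictly decreasing positive
weights `f`, among all injective `s` the sum `∑ f p * s p` is minimal only for `s p = p`. -/
theorem sum_mul_val_le {t : ℕ} (f : Fin t → ℕ) (hf : StrictAnti f) (hpos : ∀ p, 0 < f p)
    {s : Fin t → ℕ} (hs : Function.Injective s) :
    ∑ p, f p * (p : ℕ) ≤ ∑ p, f p * s p ∧
      (∑ p, f p * (p : ℕ) = ∑ p, f p * s p → ∀ p, s p = p) := by
  induction t with
  | zero => simp
  | succ t ih =>
    have hlt : ∀ p : Fin t, f (Fin.last t) < f p.castSucc := fun p => hf (Fin.castSucc_lt_last p)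
    obtain ⟨h1, h2⟩ := ih (fun p => f p.castSucc - f (Fin.last t))
      (fun p q hpq => Nat.sub_lt_sub_right (hlt q).le (hf (Fin.castSucc_lt_castSucc_iff.2 hpq)))
      (fun p => Nat.sub_pos_of_lt (hlt p)) (s := fun p => s p.castSucc)
      (hs.comp (Fin.castSucc_injective t))
    have key : ∀ u : Fin (t + 1) → ℕ, ∑ p, f p * u p =
        ∑ p : Fin t, (f p.castSucc - f (Fin.last t)) * u p.castSucc + f (Fin.last t) * ∑ p, u p := by
      intro u
      rw [Fin.sum_univ_castSucc, Fin.sum_univ_castSucc (f := u), mul_add, ← add_assoc, Finset.mul_sum,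
        ← Finset.sum_add_distrib]
      congr 1
      refine Finset.sum_congr rfl fun p _ => ?_
      rw [← add_mul, Nat.sub_add_cancel (hlt p).le]
    have h3 := sum_val_le_of_injective hs
    have h4 := Nat.mul_le_mul_left (f (Fin.last t)) h3
    rw [key (fun p => (p : ℕ)), key s]
    simp only [Fin.val_castSucc]
    refine ⟨by omega, fun h => ?_⟩
    have h5 := h2 (by omega)
    have h6 : ∑ p : Fin (t + 1), (p : ℕ) = ∑ p, s p :=
      Nat.eq_of_mul_eq_mul_left (hpos (Fin.last t)) (by omega)
    rw [Fin.sum_univ_castSucc, Fin.sum_univ_castSucc (f := s)] at h6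
    simp only [h5, Fin.val_castSucc] at h6
    intro p
    induction p using Fin.lastCases with
    | last => omega
    | cast p => exact h5 p

/-! ### Leading monomials of minors -/

/-- The exponent vector of `∏ p, y (r p) (s p) * z (c p) (s p)`. The leading monomial of the minor
with rows `r` and columns `c` is the one with `s p = p`. -/
noncomputable def expo {t : ℕ} (r c s : Fin t → ℕ) : Idx →₀ ℕ :=
  ∑ p, (Finsupp.single (Sum.inl (r p, s p)) 1 + Finsupp.single (Sum.inr (c p, s p)) 1)

theorem cost_expo (Nb : ℕ) {t : ℕ} (r c s : Fin t → ℕ) :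
    cost Nb (expo r c s) = ∑ p, (Nb - r p) * s p + ∑ p, (Nb - c p) * s p := by
  simp only [expo, map_sum, map_add, cost_single_inl, cost_single_inr, Finset.sum_add_distrib]

theorem monomial_expo {t : ℕ} (r c s : Fin t → ℕ) :
    MvPolynomial.monomial (expo r c s) (1 : K) =
      ∏ p, (MvPolynomial.X (Sum.inl (r p, s p)) * MvPolynomial.X (Sum.inr (c p, s p))) := by
  rw [expo, MvPolynomial.monomial_sum_one]
  refine Finset.prod_congr rfl fun p _ => ?_
  rw [MvPolynomial.X, MvPolynomial.X, MvPolynomial.monomial_mul, mul_one]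

theorem cost_expo_lt {Nb t : ℕ} {r c s : Fin t → ℕ} (hr : StrictMono r) (hc : StrictMono c)
    (hrN : ∀ p, r p < Nb) (hcN : ∀ p, c p < Nb) (hs : Function.Injective s) (τ : Equiv.Perm (Fin t))
    (hne : ¬ ((∀ p, s p = p) ∧ τ = 1)) :
    cost Nb (expo r c (fun p => (p : ℕ))) + 1 ≤ cost Nb (expo r (c ∘ τ) s) := by
  have anti : ∀ {r : Fin t → ℕ}, StrictMono r → (∀ p, r p < Nb) → StrictAnti fun p => Nb - r p := by
    intro r hr hrN p q hpq
    have := hr hpq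
    have := hrN q
    simp only
    omega
  obtain ⟨h1, h2⟩ := sum_mul_val_le (fun p => Nb - r p) (anti hr hrN)
    (fun p => Nat.sub_pos_of_lt (hrN p)) hs
  obtain ⟨h3, h4⟩ := sum_mul_val_le (fun p => Nb - c p) (anti hc hcN)
    (fun p => Nat.sub_pos_of_lt (hcN p)) (hs.comp τ.symm.injective)
  have h5 : ∑ p, (Nb - (c ∘ τ) p) * s p = ∑ p, (Nb - c p) * (s ∘ τ.symm) p :=
    Fintype.sum_equiv τ _ _ fun p => by simp
  rw [cost_expo, cost_expo, h5]
  by_contra hlt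
  apply hne
  have h6 := h2 (by omega)
  have h7 := h4 (by omega)
  refine ⟨h6, ?_⟩
  ext p
  have h8 := h7 (τ p)
  rw [Function.comp_apply, Equiv.symm_apply_apply, h6] at h8
  rw [Equiv.Perm.one_apply, h8]

/-- The entry `∑ k < N, y i k * z j k` of the product of a generic matrix with `N` columns and a
generic matrix with `N` rows. -/
noncomputable def entry (K : Type*) [Field K] (N i j : ℕ) : MvPolynomial Idx K :=
  ∑ k ∈ Finset.range N, MvPolynomial.X (Sum.inl (i, k)) * MvPolynomial.X (Sum.inr (j, k))

/-- Expansion of a minor into monomials; the terms with a repeated summation index `k` cancel. -/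
theorem det_entry {N t : ℕ} (r c : Fin t → ℕ) :
    Matrix.det (Matrix.of fun p q => entry K N (r p) (c q)) =
      ∑ s ∈ (Fintype.piFinset fun _ : Fin t => Finset.range N).filter Function.Injective,
        ∑ τ : Equiv.Perm (Fin t), Equiv.Perm.sign τ •
          MvPolynomial.monomial (expo r (c ∘ τ) s) (1 : K) := by
  have h1 : Matrix.det (Matrix.of fun p q => entry K N (r p) (c q)) =
      ∑ s ∈ (Fintype.piFinset fun _ : Fin t => Finset.range N),
        ∑ τ : Equiv.Perm (Fin t), Equiv.Perm.sign τ •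
          MvPolynomial.monomial (expo r (c ∘ τ) s) (1 : K) := by
    rw [← Matrix.det_transpose, Matrix.det_apply, Finset.sum_comm]
    refine Finset.sum_congr rfl fun τ _ => ?_
    rw [← Finset.smul_sum]
    congr 1
    simp only [Matrix.transpose_apply, Matrix.of_apply, entry, Finset.prod_univ_sum, monomial_expo,
      Function.comp_apply]
  rw [h1, Finset.sum_filter_of_ne]
  intro s _ hne
  by_contra hs
  apply hne
  have h2 : ∑ τ : Equiv.Perm (Fin t), Equiv.Perm.sign τ •
          MvPolynomial.monomial (expo r (c ∘ τ) s) (1 : K) =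
      (∏ p, MvPolynomial.X (Sum.inl (r p, s p))) *
        Matrix.det (Matrix.of fun p q => (MvPolynomial.X (Sum.inr (c p, s q)) : MvPolynomial Idx K)) := by
    rw [Matrix.det_apply, Finset.mul_sum]
    refine Finset.sum_congr rfl fun τ _ => ?_
    rw [mul_smul_comm, monomial_expo, Finset.prod_mul_distrib]
    rfl
  rw [h2]
  rw [Function.Injective] at hs
  push Not at hs
  obtain ⟨p, q, hpq, hne⟩ := hs
  rw [Matrix.det_zero_of_column_eq hne, mul_zero]
  intro i
  simp only [Matrix.of_apply, hpq]

/-- The leading monomial of a minor of size at most `N`. -/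
theorem leadAt_det {Nb N t : ℕ} {r c : Fin t → ℕ} (hr : StrictMono r) (hc : StrictMono c)
    (hrN : ∀ p, r p < Nb) (hcN : ∀ p, c p < Nb) (htN : t ≤ N) :
    LeadAt Nb (Matrix.det (Matrix.of fun p q => entry K N (r p) (c q)))
      (expo r c (fun p => (p : ℕ))) := by
  have hmem : (fun p : Fin t => (p : ℕ)) ∈
      (Fintype.piFinset fun _ : Fin t => Finset.range N).filter Function.Injective := by
    rw [Finset.mem_filter, Fintype.mem_piFinset]
    refine ⟨fun p => ?_, Fin.val_injective⟩
    have := p.2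
    simp
    omega
  have hterm : ∀ s : Fin t → ℕ, Function.Injective s → ∀ τ : Equiv.Perm (Fin t),
      ¬ ((∀ p, s p = p) ∧ τ = 1) → Equiv.Perm.sign τ •
          MvPolynomial.monomial (expo r (c ∘ τ) s) (1 : K) ∈
            costGE K Nb (cost Nb (expo r c (fun p => (p : ℕ))) + 1) := by
    intro s hs τ hne
    have h1 := monomial_mem_costGE (1 : K) (cost_expo_lt hr hc hrN hcN hs τ hne)
    rcases Int.units_eq_one_or (Equiv.Perm.sign τ) with h | h
    · rwa [h, one_smul]
    · rw [h, Units.neg_smul, one_smul]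
      exact neg_mem h1
  rw [LeadAt, det_entry, ← Finset.add_sum_erase _ _ hmem,
    ← Finset.add_sum_erase _ _ (Finset.mem_univ (1 : Equiv.Perm (Fin t)))]
  simp only [Equiv.Perm.sign_one, one_smul, Equiv.Perm.coe_one, Function.comp_id]
  rw [add_assoc, add_sub_cancel_left]
  refine add_mem (sum_mem fun τ hτ => ?_) (sum_mem fun s hs => sum_mem fun τ _ => ?_)
  · exact hterm _ Fin.val_injective τ fun h => (Finset.mem_erase.1 hτ).1 h.2
  · rw [Finset.mem_erase, Finset.mem_filter] at hs
    exact hterm s hs.2.2 τ fun h => hs.1 (funext h.1)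

/-! ### From pairs of patterns to products of minors -/

theorem IsPat.le_last {a : ℕ} {E : ℕ → ℕ → ℕ} (h : IsPat a E) (m k : ℕ) : E m k ≤ E a k := by
  rcases le_total m a with hm | hm
  · exact monotone_nat_of_le_succ (f := fun m => E m k) (fun m => h.2.1 m k) hm
  · rw [h.2.2.2 m hm]

/-- Removing the first column of a tableau decreases every nonzero entry of its pattern by one. -/
theorem IsPat.pred {a : ℕ} {E : ℕ → ℕ → ℕ} (h : IsPat a E) : IsPat a fun m k => E m k - 1 := by
  refine ⟨fun k => ?_, fun m k => Nat.sub_le_sub_right (h.2.1 m k) 1,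
    fun m k => Nat.sub_le_sub_right (h.2.2.1 m k) 1, fun m hm => ?_⟩
  · simp [h.1 k]
  · simp only [h.2.2.2 m hm]

/-- The first column of the tableau of a pattern, where `t` is the number of nonzero parts of its
shape, is a strictly increasing sequence `r`; row `k` has an entry `< m` if and only if `r k < m`. -/
theorem IsPat.exists_rows {a : ℕ} {E : ℕ → ℕ → ℕ} (h : IsPat a E) {t : ℕ} (h0 : E a t = 0)
    (h1 : ∀ k < t, E a k ≠ 0) :
    ∃ r : Fin t → Fin a, StrictMono r ∧
      ∀ m k, E m k ≠ 0 ↔ ∃ hk : k < t, (r ⟨k, hk⟩ : ℕ) < m := by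
  classical
  have hex : ∀ k : Fin t, ∃ m, E m k ≠ 0 := fun k => ⟨a, h1 k k.2⟩
  have hspec := fun k => Nat.find_spec (hex k)
  have hpos : ∀ k, 0 < Nat.find (hex k) := by
    intro k
    rw [Nat.pos_iff_ne_zero]
    intro hz
    exact hspec k (by rw [hz]; exact h.1 k)
  have hle : ∀ k, Nat.find (hex k) ≤ a := fun k => Nat.find_min' _ (h1 k k.2)
  have hstep : ∀ (k : ℕ) (hk : k + 1 < t),
      Nat.find (hex ⟨k, by omega⟩) < Nat.find (hex ⟨k + 1, hk⟩) := by
    intro k hk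
    have h2 := hpos ⟨k + 1, hk⟩
    obtain ⟨m, hm⟩ := Nat.exists_eq_succ_of_ne_zero h2.ne'
    rw [hm, Nat.lt_succ_iff]
    apply Nat.find_min'
    have h3 := hspec ⟨k + 1, hk⟩
    rw [hm] at h3
    have h4 := h.2.2.1 m k
    simp only [Nat.succ_eq_add_one] at h3 ⊢
    omega
  refine ⟨fun k => ⟨Nat.find (hex k) - 1, by have := hpos k; have := hle k; omega⟩, ?_, ?_⟩
  · cases t with
    | zero => exact fun i => i.elim0
    | succ t =>
      rw [Fin.strictMono_iff_lt_succ]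
      intro k
      have h2 := hstep k (by omega)
      have h3 := hpos k.castSucc
      rw [Fin.lt_def]
      change Nat.find (hex k.castSucc) - 1 < Nat.find (hex k.succ) - 1
      change Nat.find (hex k.castSucc) < Nat.find (hex k.succ) at h2
      omega
  · intro m k
    constructor
    · intro hne
      have hk : k < t := by
        by_contra hk
        have h2 := antitone_nat_of_succ_le (h.anti a) (not_lt.1 hk)
        have h3 := h.le_last m k
        omega
      refine ⟨hk, ?_⟩
      have h2 := Nat.find_min' (hex ⟨k, hk⟩) hne
      have h3 := hpos ⟨k, hk⟩
      simp only
      omega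
    · rintro ⟨hk, h2⟩
      have h3 := hpos ⟨k, hk⟩
      simp only at h2
      have h4 : Nat.find (hex ⟨k, hk⟩) ≤ m := by omega
      have h5 := monotone_nat_of_le_succ (f := fun m => E m k) (fun m => h.2.1 m k) h4
      have h6 := hspec ⟨k, hk⟩
      simp only at h5 h6
      omega

/-- The exponent vector `d` encodes the pair of patterns `(E, F)`: the exponent of `y i k` is the
number of entries `i` in row `k` of the first tableau, and similarly for `z` and the second one. -/
def Encodes (d : Idx →₀ ℕ) (E F : ℕ → ℕ → ℕ) : Prop :=
  ∀ m k, ∑ i ∈ Finset.range m, d (Sum.inl (i, k)) = E m k ∧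
    ∑ i ∈ Finset.range m, d (Sum.inr (i, k)) = F m k

theorem expo_inl {t : ℕ} (r c : Fin t → ℕ) (m k : ℕ) :
    ∑ i ∈ Finset.range m, expo r c (fun p => (p : ℕ)) (Sum.inl (i, k)) =
      if ∃ hk : k < t, r ⟨k, hk⟩ < m then 1 else 0 := by
  classical
  simp only [expo, Finsupp.finsetSum_apply, Finsupp.add_apply, Finsupp.single_apply, Sum.inl.injEq,
    Prod.mk.injEq, reduceCtorEq, if_false, add_zero]
  rw [Finset.sum_comm]
  have h1 : ∀ p : Fin t, ∑ i ∈ Finset.range m, (if r p = i ∧ (p : ℕ) = k then 1 else 0) =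
      if (p : ℕ) = k ∧ r p < m then 1 else 0 := by
    intro p
    by_cases hp : (p : ℕ) = k
    · simp [hp]
    · simp [hp]
  simp only [h1]
  by_cases hk : k < t
  · rw [Finset.sum_eq_single ⟨k, hk⟩]
    · simp [hk]
    · intro p _ hp
      rw [if_neg]
      rintro ⟨h, -⟩
      exact hp (Fin.ext h)
    · simp
  · rw [if_neg (by rintro ⟨h, -⟩; exact hk h)]
    refine Finset.sum_eq_zero fun p _ => if_neg ?_
    rintro ⟨h, -⟩
    have := p.2
    omega

theorem expo_inr {t : ℕ} (r c : Fin t → ℕ) (m k : ℕ) :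
    ∑ i ∈ Finset.range m, expo r c (fun p => (p : ℕ)) (Sum.inr (i, k)) =
      if ∃ hk : k < t, c ⟨k, hk⟩ < m then 1 else 0 := by
  classical
  rw [← expo_inl c r]
  refine Finset.sum_congr rfl fun i _ => ?_
  simp [expo, Finsupp.single_apply]

/-- The substitution `X i j ↦ ∑ k < N, y i k * z j k`, under which the generic matrix becomes a
matrix of rank at most `N`. -/
noncomputable def phi (K : Type*) [Field K] (A B N : ℕ) :
    MvPolynomial (Fin (A + 1) × Fin (B + 1)) K →ₐ[K] MvPolynomial Idx K :=
  MvPolynomial.aeval fun p => entry K N p.1 p.2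

theorem phi_det {A B N t : ℕ} (r : Fin t → Fin (A + 1)) (c : Fin t → Fin (B + 1)) :
    phi K A B N (((genericMatrix K A B).submatrix r c).det) =
      Matrix.det (Matrix.of fun p q => entry K N (r p) (c q)) := by
  rw [AlgHom.map_det]
  congr 1
  ext1 i j
  simp [phi, genericMatrix]

theorem det_homogeneous {A B t : ℕ} (r : Fin t → Fin (A + 1)) (c : Fin t → Fin (B + 1)) :
    (((genericMatrix K A B).submatrix r c).det).IsHomogeneous t := by
  rw [Matrix.det_apply]
  refine MvPolynomial.IsHomogeneous.sum _ _ _ fun σ _ => ?_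
  have h1 : (∏ i, (genericMatrix K A B).submatrix r c (σ i) i).IsHomogeneous t := by
    have := MvPolynomial.IsHomogeneous.prod Finset.univ
      (fun i => (genericMatrix K A B).submatrix r c (σ i) i) (fun _ => 1)
      (fun i _ => MvPolynomial.isHomogeneous_X _ _)
    simpa using this
  rcases Int.units_eq_one_or (Equiv.Perm.sign σ) with h | h
  · rwa [h, one_smul]
  · rw [h, Units.neg_smul, one_smul]
    exact h1.neg

/-- The product of minors attached to a pair of tableaux, built by removing first columns. Its
image under `phi` has a leading monomial which encodes the pair. If the shape has more than `n`
parts, the first factor is a minor of size larger than `n`, so the product lies in every ideal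
containing all such minors. -/
theorem exists_poly {A B N : ℕ} (ℓ : ℕ) : ∀ E F : ℕ → ℕ → ℕ, (E, F) ∈ pairSet (A + 1) (B + 1) N ℓ →
    ∃ P : MvPolynomial (Fin (A + 1) × Fin (B + 1)) K, P.IsHomogeneous ℓ ∧
      (∃ d, Encodes d E F ∧ LeadAt (A + B + 1) (phi K A B N P) d) ∧
      ∀ I : Ideal (MvPolynomial (Fin (A + 1) × Fin (B + 1)) K), ∀ n, E (A + 1) n ≠ 0 →
        (∀ t, n < t → ∀ (r : Fin t → Fin (A + 1)) (c : Fin t → Fin (B + 1)), StrictMono r →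
          StrictMono c → ((genericMatrix K A B).submatrix r c).det ∈ I) → P ∈ I := by
  induction ℓ using Nat.strong_induction_on with
  | _ ℓ ih =>
  rintro E F ⟨hE, hF, hEF, hN, hsum⟩
  simp only at hE hF hEF hN hsum
  classical
  have hex : ∃ k, E (A + 1) k = 0 := ⟨N, hN⟩
  obtain ⟨t, h0, h1⟩ : ∃ t, E (A + 1) t = 0 ∧ ∀ k < t, E (A + 1) k ≠ 0 :=
    ⟨Nat.find hex, Nat.find_spec hex, fun k hk => Nat.find_min hex hk⟩
  have htN : t ≤ N := by
    by_contra h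
    exact h1 N (not_le.1 h) hN
  have hanti := antitone_nat_of_succ_le (hE.anti (A + 1))
  have hge : ∀ k, t ≤ k → E (A + 1) k = 0 := fun k hk => by have := hanti hk; omega
  have hsum' : ∑ k ∈ Finset.range N, (E (A + 1) k - 1) + t = ℓ := by
    rw [← hsum, ← Finset.sum_range_add_sum_Ico _ htN, ← Finset.sum_range_add_sum_Ico _ htN,
      Finset.sum_eq_zero (s := Finset.Ico t N), Finset.sum_eq_zero (s := Finset.Ico t N)]
    · have : ∑ k ∈ Finset.range t, E (A + 1) k = ∑ k ∈ Finset.range t, (E (A + 1) k - 1 + 1) := by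
        refine Finset.sum_congr rfl fun k hk => ?_
        have := h1 k (Finset.mem_range.1 hk)
        omega
      rw [this, Finset.sum_add_distrib]
      simp
    · intro k hk
      exact hge k (Finset.mem_Ico.1 hk).1
    · intro k hk
      simp [hge k (Finset.mem_Ico.1 hk).1]
  rcases Nat.eq_zero_or_pos t with ht | ht
  · have hz : ∀ k, E (A + 1) k = 0 := fun k => hge k (by omega)
    refine ⟨1, ?_, ⟨0, ?_, ?_⟩, ?_⟩
    · rw [show ℓ = 0 by rw [← hsum]; exact Finset.sum_eq_zero fun k _ => hz k]
      exact MvPolynomial.isHomogeneous_one _ _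
    · intro m k
      have h2 := hE.le_last m k
      have h3 := hF.le_last m k
      rw [← hEF, hz] at h3
      rw [hz] at h2
      simp
      omega
    · rw [map_one]
      exact leadAt_one _
    · intro I n hn
      exact absurd (hz n) hn
  · obtain ⟨r, hr, hr'⟩ := hE.exists_rows h0 h1
    obtain ⟨c, hc, hc'⟩ := hF.exists_rows (hEF ▸ h0) (hEF ▸ h1)
    obtain ⟨P, hP, ⟨d, hd, hPd⟩, -⟩ := ih _ (by omega : ∑ k ∈ Finset.range N, (E (A + 1) k - 1) < ℓ)
      (fun m k => E m k - 1) (fun m k => F m k - 1)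
      ⟨hE.pred, hF.pred, by simp only [hEF], by simp only [hN], rfl⟩
    refine ⟨((genericMatrix K A B).submatrix r c).det * P, ?_,
      ⟨expo (fun p => (r p : ℕ)) (fun p => (c p : ℕ)) (fun p => (p : ℕ)) + d, ?_, ?_⟩, ?_⟩
    · have h2 := (det_homogeneous (K := K) r c).mul hP
      rwa [add_comm t, hsum'] at h2
    · intro m k
      simp only [Finsupp.add_apply, Finset.sum_add_distrib]
      rw [(hd m k).1, (hd m k).2, expo_inl, expo_inr]
      simp only [← hr', ← hc']
      constructor <;> split_ifs <;> omega
    · rw [map_mul, phi_det]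
      refine LeadAt.mul (leadAt_det hr hc ?_ ?_ htN) hPd
      · intro p
        have := (r p).2
        omega
      · intro p
        have := (c p).2
        omega
    · intro I n hn hI
      refine I.mul_mem_right _ (hI t ?_ r c hr hc)
      by_contra hlt
      exact hn (hge n (not_lt.1 hlt))

/-! ### The dimensions of the determinantal ring -/

/-- No `t > N` distinct summation indices exist below `N`. -/
theorem det_entry_eq_zero {N t : ℕ} (h : N < t) (r c : Fin t → ℕ) :
    Matrix.det (Matrix.of fun p q => entry K N (r p) (c q)) = 0 := by
  rw [det_entry]
  refine Finset.sum_eq_zero fun s hs => ?_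
  rw [Finset.mem_filter, Fintype.mem_piFinset] at hs
  have h1 := Finset.card_le_card_of_injOn (s := Finset.univ) (t := Finset.range N) s
    (fun p _ => hs.1 p) hs.2.injOn
  simp at h1
  omega

/-- The determinantal ideal generated by the minors of size `n + 1`, in the form cogenerated by
`[1,…,n | 1,…,n]`. -/
noncomputable abbrev minorIdeal (K : Type*) [Field K] (A B n : ℕ) :
    Ideal (MvPolynomial (Fin (A + 1) × Fin (B + 1)) K) :=
  detIdeal K A B n (fun t => if t = n + 1 then A + 2 else t) (fun t => if t = n + 1 then B + 2 else t)

/-- The generators of `detIdeal` with `t ≤ n` would need `t` distinct indices among the last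
`t - 1` rows or columns, so there are none. -/
theorem no_rows {a t : ℕ} (ht : 1 ≤ t) (r : Fin t → Fin (a + 1)) (hr : StrictMono r)
    (h : ∀ k, a + 2 ≤ (r k : ℕ) + t) : False := by
  obtain ⟨t, rfl⟩ := Nat.exists_eq_succ_of_ne_zero (show t ≠ 0 by omega)
  have h1 := le_of_strictMono (s := fun k => (r k : ℕ) - r 0) (n := t + 1) ?_ (Fin.last t)
  · have h2 := h 0
    have h3 := (r (Fin.last t)).2
    simp only [Fin.val_last] at h1
    omega
  · intro i j hij
    have h2 : (r i : ℕ) < r j := hr hij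
    have h3 : (r 0 : ℕ) ≤ r i := hr.monotone (Fin.zero_le i)
    simp only
    omega

theorem phi_minorIdeal (A B n : ℕ) : ∀ f ∈ minorIdeal K A B n, phi K A B n f = 0 := by
  have h : minorIdeal K A B n ≤ RingHom.ker (phi K A B n) := by
    rw [minorIdeal, detIdeal, Ideal.span_le]
    rintro f ⟨t, ht1, htn, r, c, hr, hc, h, rfl⟩
    rw [SetLike.mem_coe, RingHom.mem_ker, phi_det]
    by_cases ht : t = n + 1
    · exact det_entry_eq_zero (by omega) _ _
    · simp only [if_neg ht] at h
      rcases h with h | h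
      · exact (no_rows ht1 r hr h).elim
      · exact (no_rows ht1 c hc h).elim
  exact fun f hf => h hf

/-- Laplace expansion: larger minors lie in the ideal of the `(n + 1)`-minors. -/
theorem minor_mem (A B n : ℕ) : ∀ t, n < t → ∀ (r : Fin t → Fin (A + 1)) (c : Fin t → Fin (B + 1)),
    StrictMono r → StrictMono c →
      ((genericMatrix K A B).submatrix r c).det ∈ minorIdeal K A B n := by
  intro t ht
  induction t, ht using Nat.le_induction with
  | base =>
    intro r c hr hc
    refine Ideal.subset_span ⟨n + 1, by omega, le_rfl, r, c, hr, hc, Or.inl fun k => ?_, rfl⟩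
    simp only [if_true]
    omega
  | succ t ht ih =>
    intro r c hr hc
    rw [Matrix.det_succ_row_zero]
    refine sum_mem fun j _ => Ideal.mul_mem_left _ _ ?_
    rw [Matrix.submatrix_submatrix]
    exact ih _ _ (hr.comp (Fin.strictMono_succ)) (hc.comp (Fin.strictMono_succAbove j))

theorem Encodes.unique {d : Idx →₀ ℕ} {E F E' F' : ℕ → ℕ → ℕ} (h : Encodes d E F)
    (h' : Encodes d E' F') : (E, F) = (E', F') := by
  rw [Prod.mk.injEq]
  constructor
  · ext m k
    rw [← (h m k).1, (h' m k).1]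
  · ext m k
    rw [← (h m k).2, (h' m k).2]

/-- The monomials of degree `ℓ` span the homogeneous polynomials of degree `ℓ`. -/
theorem finrank_homogeneous_le (σ : Type*) [Fintype σ] (ℓ : ℕ) :
    Module.finrank K (MvPolynomial.homogeneousSubmodule σ K ℓ) ≤
      (Fintype.card σ + ℓ - 1).choose ℓ := by
  classical
  have h1 : MvPolynomial.homogeneousSubmodule σ K ℓ ≤ Submodule.span K
      (((Finset.univ : Finset σ).finsuppAntidiag ℓ).image
        (fun d => MvPolynomial.monomial d (1 : K)) : Finset (MvPolynomial σ K)) := by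
    intro f hf
    rw [MvPolynomial.as_sum f]
    refine sum_mem fun d hd => ?_
    have h2 : MvPolynomial.monomial d (f.coeff d) = f.coeff d • MvPolynomial.monomial d (1 : K) := by
      rw [MvPolynomial.smul_monomial, smul_eq_mul, mul_one]
    rw [h2]
    refine Submodule.smul_mem _ _ (Submodule.subset_span ?_)
    rw [Finset.mem_coe]
    refine Finset.mem_image_of_mem _ ?_
    rw [Finset.mem_finsuppAntidiag]
    refine ⟨?_, Finset.subset_univ _⟩
    have h3 : Finsupp.weight (fun _ => 1) d = ℓ := hf (MvPolynomial.mem_support_iff.1 hd)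
    rw [← Finsupp.degree_eq_weight_one] at h3
    rw [← h3, Finsupp.degree_eq_sum]
  refine (Submodule.finrank_mono h1).trans ?_
  refine (finrank_span_finset_le_card _).trans (Finset.card_image_le.trans ?_)
  rw [Finset.card_finsuppAntidiag_nat_eq_choose, Finset.card_univ]

/-- The dimension of `R_ℓ` is the number of pairs of patterns of size `ℓ` with at most `n + 1`
parts, where the ideal is generated by the minors of size `n + 2`. -/
theorem quotDim_eq (A B n ℓ : ℕ) (hBA : B ≤ A) (hnB : n ≤ B) :
    quotDim K (minorIdeal K A B (n + 1)) ℓ = (pairSet (A + 1) (B + 1) (n + 1) ℓ).ncard := by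
  classical
  set I := minorIdeal K A B (n + 1) with hI
  set V := MvPolynomial.homogeneousSubmodule (Fin (A + 1) × Fin (B + 1)) K ℓ with hV
  have hVfin : Module.Finite K V := Module.Finite.of_fg (MvPolynomial.homogeneousSubmodule_fg _ _ ℓ)
  have hfin : ∀ N, Finite (pairSet (A + 1) (B + 1) (N + 1) ℓ) := fun N =>
    (pairSet_finite_ncard (A + 1) (B + 1) N ℓ).1.to_subtype
  have hfin1 := hfin n
  have hfin2 := hfin B
  have : Fintype (pairSet (A + 1) (B + 1) (n + 1) ℓ) := Fintype.ofFinite _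
  have : Fintype (pairSet (A + 1) (B + 1) (B + 1) ℓ) := Fintype.ofFinite _
  rw [quotDim]
  apply le_antisymm
  -- Upper bound: the products for all pairs form a basis of `K[X]_ℓ` by a dimension count.
  · have hex := fun p : pairSet (A + 1) (B + 1) (B + 1) ℓ =>
      exists_poly (K := K) ℓ p.1.1 p.1.2 p.2
    choose P hP hd hmem using hex
    choose d hd hlead using hd
    have hdinj : Function.Injective d := by
      intro p q hpq
      exact Subtype.ext ((hd p).unique (hpq ▸ hd q))
    have hli1 : LinearIndependent K P :=
      LinearIndependent.of_comp (phi K A B (B + 1)).toLinearMap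
        (LeadAt.linearIndependent hdinj hlead)
    have hli : LinearIndependent K fun p => (⟨P p, hP p⟩ : V) :=
      LinearIndependent.of_comp V.subtype hli1
    have hcard : Fintype.card (pairSet (A + 1) (B + 1) (B + 1) ℓ) = Module.finrank K V := by
      refine le_antisymm hli.fintype_card_le_finrank ((finrank_homogeneous_le _ ℓ).trans ?_)
      rw [← Nat.card_eq_fintype_card (α := pairSet (A + 1) (B + 1) (B + 1) ℓ),
        Nat.card_coe_set_eq]
      have h1 := pairSet_ncard_full (A - B) B ℓ
      rw [show A - B + (B + 1) = A + 1 by omega] at h1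
      rw [h1]
      simp
    have hspan := hli.span_eq_top_of_card_eq_finrank' hcard
    have hle : Submodule.map (Ideal.Quotient.mkₐ K I).toLinearMap V ≤
        Submodule.span K (Set.range fun p : pairSet (A + 1) (B + 1) (n + 1) ℓ =>
          if h : p.1 ∈ pairSet (A + 1) (B + 1) (B + 1) ℓ then
            Ideal.Quotient.mkₐ K I (P ⟨p.1, h⟩) else 0) := by
      have h1 : V = Submodule.span K (Set.range P) := by
        have h2 := congrArg (Submodule.map V.subtype) hspan
        rw [Submodule.map_span, Submodule.map_subtype_top, ← Set.range_comp] at h2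
        exact h2.symm
      rw [h1, Submodule.map_span, Submodule.span_le]
      rintro _ ⟨_, ⟨p, rfl⟩, rfl⟩
      by_cases h3 : p.1.1 (A + 1) (n + 1) = 0
      · refine Submodule.subset_span ⟨⟨p.1, p.2.1, p.2.2.1, p.2.2.2.1, h3, ?_⟩, ?_⟩
        · refine Eq.trans ?_ p.2.2.2.2.2
          refine Finset.sum_subset (Finset.range_mono (by omega)) fun k _ hk => ?_
          have h4 := antitone_nat_of_succ_le (p.2.1.anti (A + 1))
            (show n + 1 ≤ k by simpa using hk)
          omega
        · simp
      · have h4 := hmem p I (n + 1) h3 (minor_mem A B (n + 1))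
        have h5 : (Ideal.Quotient.mkₐ K I).toLinearMap (P p) = 0 :=
          Ideal.Quotient.eq_zero_iff_mem.2 h4
        rw [h5]
        exact zero_mem _
    have hfd : Module.Finite K (Submodule.span K (Set.range fun p : pairSet (A + 1) (B + 1) (n + 1) ℓ =>
          if h : p.1 ∈ pairSet (A + 1) (B + 1) (B + 1) ℓ then
            Ideal.Quotient.mkₐ K I (P ⟨p.1, h⟩) else 0)) :=
      Module.Finite.span_of_finite K (Set.finite_range _)
    refine (Submodule.finrank_mono hle).trans ((finrank_range_le_card _).trans ?_)
    rw [← Nat.card_eq_fintype_card, Nat.card_coe_set_eq]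
  -- Lower bound: the products with few parts are independent modulo `I`, as `phi` factors
  -- through the quotient.
  · have hex := fun p : pairSet (A + 1) (B + 1) (n + 1) ℓ =>
      exists_poly (K := K) ℓ p.1.1 p.1.2 p.2
    choose P hP hd hmem using hex
    choose d hd hlead using hd
    have hdinj : Function.Injective d := by
      intro p q hpq
      exact Subtype.ext ((hd p).unique (hpq ▸ hd q))
    have hli1 : LinearIndependent K fun p => Ideal.Quotient.mkₐ K I (P p) := by
      refine LinearIndependent.of_comp
        (Ideal.Quotient.liftₐ I (phi K A B (n + 1)) (phi_minorIdeal A B (n + 1))).toLinearMap ?_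
      exact LeadAt.linearIndependent hdinj hlead
    have hli : LinearIndependent K fun p =>
        (⟨Ideal.Quotient.mkₐ K I (P p), Submodule.mem_map_of_mem (hP p)⟩ :
          Submodule.map (Ideal.Quotient.mkₐ K I).toLinearMap V) :=
      LinearIndependent.of_comp (Submodule.subtype _) hli1
    have hfd : Module.Finite K (Submodule.map (Ideal.Quotient.mkₐ K I).toLinearMap V) :=
      inferInstance
    refine le_trans ?_ hli.fintype_card_le_finrank
    rw [← Nat.card_eq_fintype_card, Nat.card_coe_set_eq]

end

/-! ### The Hilbert series -/

theorem ex_maximal_minors_a_invariant (K : Type*) [Field K] (A B n : ℕ)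
    (hBA : B ≤ A) (hn : 1 ≤ n) (hnA : n ≤ A + 1) (hnB : n ≤ B + 1)
    (d : ℕ)
    (hd : (d : ℤ) = ((A : ℤ) + (B : ℤ) + 3) * n - (n : ℤ) * ((n : ℤ) + 1)) :
    ∃ H : Polynomial ℤ, H.eval 1 ≠ 0 ∧
      hilbertSeries K
          (detIdeal K A B n (fun t => if t = n + 1 then A + 2 else t)
            (fun t => if t = n + 1 then B + 2 else t)) *
          (1 - PowerSeries.X) ^ d =
        (↑H : PowerSeries ℤ) ∧
      (H.natDegree : ℤ) - (d : ℤ) = -((A : ℤ) + 1) * n := by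
  obtain ⟨n, rfl⟩ := Nat.exists_eq_succ_of_ne_zero (show n ≠ 0 by omega)
  simp only [Nat.succ_eq_add_one] at *
  obtain ⟨α, hα⟩ : ∃ α, A + 1 = α + (n + 1) := ⟨A - n, by omega⟩
  obtain ⟨β, hβ⟩ : ∃ β, B + 1 = β + (n + 1) := ⟨B - n, by omega⟩
  have hA : A = α + n := by omega
  have hB : B = β + n := by omega
  set e := ∑ j : Fin (n + 1), (j : ℕ) with he
  have hHS : hilbertSeries K (minorIdeal K A B (n + 1)) =
      PowerSeries.mk fun ℓ => ((pairSet (α + (n + 1)) (β + (n + 1)) (n + 1) ℓ).ncard : ℤ) := by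
    rw [hilbertSeries]
    congr 1
    ext ℓ
    rw [quotDim_eq A B n ℓ hBA (by omega), hα, hβ]
  have he2 : 2 * e = (n + 1) * n := by
    have h1 := Finset.sum_range_id_mul_two (n + 1)
    rw [Finset.sum_range, ← he] at h1
    simp only [Nat.add_sub_cancel] at h1
    omega
  have hs1 : ∑ i : Fin (n + 1), (α + (i : ℕ)) = (n + 1) * α + e := by
    simp [Finset.sum_add_distrib, he]
  have hs2 : ∑ i : Fin (n + 1), (β + (i : ℕ)) = (n + 1) * β + e := by
    simp [Finset.sum_add_distrib, he]
  have hs3 : ∑ i : Fin (n + 1), (β + (i : ℕ) + 1) = (n + 1) * β + e + (n + 1) := by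
    simp [Finset.sum_add_distrib, he]
  have hd2 : d = ∑ i : Fin (n + 1), (α + (i : ℕ)) + ∑ j : Fin (n + 1), (β + (j : ℕ) + 1) := by
    rw [hs1, hs3]
    zify at he2 ⊢
    rw [hd, hA, hB]
    push_cast
    linarith
  have h := mk_pairSet_ncard α β n
  rw [← hHS, ← hd2, ← he, mul_right_comm] at h
  have hdvd : (Polynomial.X : Polynomial ℤ) ^ e ∣ (numMat α β (n + 1)).det := by
    rw [Polynomial.X_pow_dvd_iff]
    intro k hk
    rw [← Polynomial.coeff_coe, ← h, PowerSeries.coeff_mul_X_pow', if_neg (by omega)]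
  -- The numerator of the Hilbert series is the determinant divided by `z ^ e`.
  obtain ⟨H, hH⟩ := hdvd
  have h1 := numMat_det_eval_one α β (n + 1)
  have h2 := numMat_det_natDegree α β (n + 1) (by omega)
  have hne : H ≠ 0 := by
    rintro rfl
    rw [hH] at h1
    simp at h1
  refine ⟨H, ?_, ?_, ?_⟩
  · rw [hH] at h1
    simpa using h1
  · rw [hH, Polynomial.coe_mul, Polynomial.coe_pow, Polynomial.coe_X, mul_comm] at h
    exact mul_left_cancel₀ (pow_ne_zero _ PowerSeries.X_ne_zero) h
  · rw [hH, Polynomial.natDegree_mul (pow_ne_zero _ Polynomial.X_ne_zero) hne,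
      Polynomial.natDegree_X_pow, hs2] at h2
    rw [hd, hA, hB, show H.natDegree = (n + 1) * β by omega]
    push_cast
    ring
end

section
/- Let K be a field, A, B nonnegative integers, X = (X_{i,j})_{0 ≤ i ≤ A, 0 ≤ j ≤ B} a matrix of independent indeterminates, and let M = [u_1, ..., u_n | 1, 2, ..., n] with positive integers u_1 < u_2 < ... < u_n ≤ A+1 satisfying u_i + 1 < u_{i+1} for i = 1, ..., n−1, with n ≤ B+1 and A − u_n ≥ B − n. Then there is a polynomial H ∈ ℤ[z] with H(1) ≠ 0 such that (Σ_{ℓ≥0} dim_K R_M(X)_ℓ · z^ℓ) · (1 − z)^d = H, where d = (A + B + 3)n − Σ_{i=1}^n u_i − n(n+1)/2, and deg(H) − d = Σ_{i=1}^n u_i − (A + 2)n; that is, the a-invariant of R_M(X) equals Σ_{i=1}^n u_i − (A + 2)n. -/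
namespace SpreadRows

/-! ### Diagonal-free monomials span the quotient -/

/-- A set `S` of matrix positions is diagonal-free if for no `t ≤ n + 1` it contains the main
diagonal of a `t × t` minor whose rows all lie among the last `u t - 1` rows. -/
def DiagFree (A B n : ℕ) (u : ℕ → ℕ) (S : Finset (Fin (A + 1) × Fin (B + 1))) : Prop :=
  ∀ t, 1 ≤ t → t ≤ n + 1 → ∀ (r : Fin t → Fin (A + 1)) (c : Fin t → Fin (B + 1)),
    StrictMono r → StrictMono c → (∀ k, A + 2 ≤ (r k : ℕ) + u t) → ∃ k, (r k, c k) ∉ S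

/-- The determinantal ideal of the theorem: with `v t = t` for `t ≤ n` the column condition is
void below size `n + 1`, and `v (n + 1) = B + 2` allows all minors of size `n + 1`. -/
noncomputable abbrev rowIdeal (K : Type*) [Field K] (A B n : ℕ) (u : ℕ → ℕ) :
    Ideal (MvPolynomial (Fin (A + 1) × Fin (B + 1)) K) :=
  detIdeal K A B n u (fun t => if t = n + 1 then B + 2 else t)

/-- The exponent vector of the monomial `∏ₖ X_{r k, c k}`. -/
noncomputable def diagExp {A B t : ℕ} (r : Fin t → Fin (A + 1)) (c : Fin t → Fin (B + 1)) :
    Fin (A + 1) × Fin (B + 1) →₀ ℕ := ∑ k, Finsupp.single (r k, c k) 1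

theorem monomial_diagExp (K : Type*) [Field K] {A B t : ℕ} (r : Fin t → Fin (A + 1))
    (c : Fin t → Fin (B + 1)) :
    MvPolynomial.monomial (diagExp r c) (1 : K) = ∏ k, MvPolynomial.X (r k, c k) := by
  rw [diagExp, MvPolynomial.monomial_sum_one]
  rfl

/-- The statistic `∑ i j m_{i,j}` on exponent vectors; among the terms of a minor it is maximal
exactly at the main diagonal. -/
noncomputable def wt {A B : ℕ} (m : Fin (A + 1) × Fin (B + 1) →₀ ℕ) : ℕ :=
  ∑ s, m s * ((s.1 : ℕ) * (s.2 : ℕ))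

theorem wt_add {A B : ℕ} (m m' : Fin (A + 1) × Fin (B + 1) →₀ ℕ) :
    wt (m + m') = wt m + wt m' := by
  simp [wt, add_mul, Finset.sum_add_distrib]

theorem wt_diagExp {A B t : ℕ} (r : Fin t → Fin (A + 1)) (c : Fin t → Fin (B + 1)) :
    wt (diagExp r c) = ∑ k, ((r k : ℕ) * (c k : ℕ)) := by
  simp only [wt, diagExp, Finsupp.coe_finsetSum, Finset.sum_apply, Finset.sum_mul]
  rw [Finset.sum_comm]
  refine Finset.sum_congr rfl fun k _ => ?_
  rw [Finset.sum_eq_single (r k, c k)]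
  · simp
  · intro b _ hb
    rw [Finsupp.single_eq_of_ne hb, zero_mul]
  · simp

theorem degree_diagExp {A B t : ℕ} (r : Fin t → Fin (A + 1)) (c : Fin t → Fin (B + 1)) :
    (diagExp r c).degree = t := by
  simp [diagExp, map_sum]

/-- The rearrangement inequality, in its strict form. -/
theorem wt_perm_lt {A B t : ℕ} (r : Fin t → Fin (A + 1)) (c : Fin t → Fin (B + 1))
    (hr : StrictMono r) (hc : StrictMono c) (π : Equiv.Perm (Fin t)) (hπ : π ≠ 1) :
    wt (diagExp (r ∘ π) c) < wt (diagExp r c) := by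
  have hr' : StrictMono fun k => (r k : ℕ) := fun a b h => hr h
  have hc' : StrictMono fun k => (c k : ℕ) := fun a b h => hc h
  have hmv : Monovary (fun k => (c k : ℕ)) (fun k => (r k : ℕ)) := hc'.monotone.monovary hr'.monotone
  have key := (hmv.sum_mul_comp_perm_lt_sum_mul_iff (σ := π)).2 ?_
  · rw [wt_diagExp, wt_diagExp]
    simpa [mul_comm] using key
  · intro h
    apply hπ
    have hmono : StrictMono π := by
      refine Monotone.strictMono_of_injective ?_ π.injective
      intro a b hab
      by_contra hlt
      push Not at hlt
      have h1 := h (i := b) (j := a) (by simpa using hr hlt)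
      have h2 := hc'.le_iff_le.1 h1
      exact absurd hlt (by rw [le_antisymm hab h2]; exact lt_irrefl _)
    ext k
    have := congrFun (Subsingleton.elim (hmono.orderIsoOfSurjective π π.surjective)
      (OrderIso.refl (Fin t)) |> fun e => congrArg (fun e : Fin t ≃o Fin t => (e : Fin t → Fin t)) e) k
    simpa using congrArg Fin.val this

theorem diagExp_le {A B t : ℕ} (r : Fin t → Fin (A + 1)) (c : Fin t → Fin (B + 1))
    (hr : StrictMono r) (m : Fin (A + 1) × Fin (B + 1) →₀ ℕ)
    (h : ∀ k, (r k, c k) ∈ m.support) : diagExp r c ≤ m := by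
  intro s
  simp only [diagExp, Finsupp.coe_finsetSum, Finset.sum_apply]
  by_cases hs : ∃ k, (r k, c k) = s
  · obtain ⟨k, rfl⟩ := hs
    rw [Finset.sum_eq_single k]
    · have := h k
      rw [Finsupp.mem_support_iff] at this
      simp only [Finsupp.single_eq_same]
      omega
    · intro b _ hb
      apply Finsupp.single_eq_of_ne
      intro h'
      exact hb (hr.injective (Prod.ext_iff.1 h').1).symm
    · simp
  · rw [Finset.sum_eq_zero]
    · simp
    · intro k _
      apply Finsupp.single_eq_of_ne
      intro h'
      exact hs ⟨k, h'.symm⟩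

/-- Modulo the ideal every monomial is a combination of diagonal-free monomials of the same degree:
a diagonal dividing the monomial is rewritten through the vanishing minor, which lowers `wt`. -/
theorem mk_monomial_mem_span (K : Type*) [Field K] (A B n : ℕ) (u : ℕ → ℕ)
    (m : Fin (A + 1) × Fin (B + 1) →₀ ℕ) :
    Ideal.Quotient.mkₐ K (rowIdeal K A B n u) (MvPolynomial.monomial m 1) ∈
      Submodule.span K {x | ∃ m' : Fin (A + 1) × Fin (B + 1) →₀ ℕ, m'.degree = m.degree ∧
        DiagFree A B n u m'.support ∧
        x = Ideal.Quotient.mkₐ K (rowIdeal K A B n u) (MvPolynomial.monomial m' 1)} := by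
  induction hw : wt m using Nat.strong_induction_on generalizing m with
  | _ w ih =>
  by_cases hm : DiagFree A B n u m.support
  · exact Submodule.subset_span ⟨m, rfl, hm, rfl⟩
  unfold DiagFree at hm
  push Not at hm
  obtain ⟨t, ht1, htn, r, c, hr, hc, hru, hS⟩ := hm
  set δ := diagExp r c with hδ
  have hle : δ ≤ m := diagExp_le r c hr m hS
  obtain ⟨m'', rfl⟩ : ∃ m'', m = m'' + δ := ⟨m - δ, (tsub_add_cancel_of_le hle).symm⟩
  have hmem : ((genericMatrix K A B).submatrix r c).det ∈ rowIdeal K A B n u :=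
    Ideal.subset_span ⟨t, ht1, htn, r, c, hr, hc, Or.inl hru, rfl⟩
  have hdet : MvPolynomial.monomial m'' (1 : K) * ((genericMatrix K A B).submatrix r c).det =
      ∑ π : Equiv.Perm (Fin t), (Equiv.Perm.sign π) •
        MvPolynomial.monomial (m'' + diagExp (r ∘ π) c) (1 : K) := by
    rw [Matrix.det_apply, Finset.mul_sum]
    refine Finset.sum_congr rfl fun π _ => ?_
    rw [mul_smul_comm]
    congr 1
    rw [← one_mul (1 : K), ← MvPolynomial.monomial_mul, monomial_diagExp]
    simp [genericMatrix]
  have hzero : (Ideal.Quotient.mkₐ K (rowIdeal K A B n u))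
      (MvPolynomial.monomial m'' (1 : K) * ((genericMatrix K A B).submatrix r c).det) = 0 :=
    Ideal.Quotient.eq_zero_iff_mem.2 (Ideal.mul_mem_left _ _ hmem)
  rw [hdet, map_sum, ← Finset.add_sum_erase _ _ (Finset.mem_univ 1)] at hzero
  have h1 : (Equiv.Perm.sign (1 : Equiv.Perm (Fin t))) •
        MvPolynomial.monomial (m'' + diagExp (r ∘ (1 : Equiv.Perm (Fin t))) c) (1 : K) =
        MvPolynomial.monomial (m'' + δ) (1 : K) := by
    simp [hδ, Equiv.Perm.coe_one]
  rw [h1] at hzero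
  rw [eq_neg_of_add_eq_zero_left hzero]
  refine Submodule.neg_mem _ (Submodule.sum_mem _ fun π hπ => ?_)
  have hπ1 : π ≠ 1 := (Finset.mem_erase.1 hπ).1
  have hlt := wt_perm_lt r c hr hc π hπ1
  have hmem' := ih (wt (m'' + diagExp (r ∘ π) c)) (by rw [← hw, wt_add, wt_add, hδ]; omega) _ rfl
  have hdeg : (m'' + diagExp (r ∘ π) c).degree = (m'' + δ).degree := by
    rw [map_add, map_add, degree_diagExp, hδ, degree_diagExp]
  rw [hdeg] at hmem'
  rcases Int.units_eq_one_or (Equiv.Perm.sign π) with h | h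
  · rw [h, one_smul]; exact hmem'
  · rw [h, Units.neg_smul, one_smul, map_neg]; exact Submodule.neg_mem _ hmem'

/-! ### Antichain colourings and triangularity -/

/-- `Reach S k p`: at least `k` further points of `S` follow `p` in a strictly increasing chain. -/
def Reach {A B : ℕ} (S : Finset (Fin (A + 1) × Fin (B + 1))) :
    ℕ → Fin (A + 1) × Fin (B + 1) → Prop
  | 0, _ => True
  | k + 1, p => ∃ q ∈ S, p.1 < q.1 ∧ p.2 < q.2 ∧ Reach S k q

theorem Reach.mono {A B : ℕ} {S : Finset (Fin (A + 1) × Fin (B + 1))} {k k' : ℕ} (hk : k ≤ k') :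
    ∀ {p}, Reach S k' p → Reach S k p := by
  induction k generalizing k' with
  | zero => intros; trivial
  | succ k ih =>
    intro p h
    obtain ⟨l, rfl⟩ : ∃ l, k' = l + 1 := ⟨k' - 1, by omega⟩
    obtain ⟨q, hq, h1, h2, h3⟩ := h
    exact ⟨q, hq, h1, h2, ih (by omega) h3⟩

theorem Reach.exists_chain {A B : ℕ} {S : Finset (Fin (A + 1) × Fin (B + 1))} {k : ℕ} :
    ∀ {p}, p ∈ S → Reach S k p → ∃ (r : Fin (k + 1) → Fin (A + 1)) (c : Fin (k + 1) → Fin (B + 1)),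
      StrictMono r ∧ StrictMono c ∧ r 0 = p.1 ∧ c 0 = p.2 ∧ ∀ i, (r i, c i) ∈ S := by
  induction k with
  | zero =>
    intro p hp _
    exact ⟨fun _ => p.1, fun _ => p.2, Subsingleton.strictMono (α := Fin 1) _,
      Subsingleton.strictMono (α := Fin 1) _, rfl, rfl, fun _ => hp⟩
  | succ k ih =>
    intro p hp h
    obtain ⟨q, hq, h1, h2, h3⟩ := h
    obtain ⟨r, c, hr, hc, hr0, hc0, hS⟩ := ih hq h3
    refine ⟨Matrix.vecCons p.1 r, Matrix.vecCons p.2 c, strictMono_vecCons.2 ⟨hr0 ▸ h1, hr⟩,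
      strictMono_vecCons.2 ⟨hc0 ▸ h2, hc⟩, rfl, rfl, fun i => ?_⟩
    refine Fin.cases ?_ (fun i => ?_) i
    · exact hp
    · exact hS i

theorem Reach.bound {A B : ℕ} {S : Finset (Fin (A + 1) × Fin (B + 1))} {k : ℕ} :
    ∀ {p}, Reach S k p → k ≤ B := by
  suffices h : ∀ {p}, Reach S k p → k + (p.2 : ℕ) ≤ B by
    intro p h'
    have := h h'
    omega
  induction k with
  | zero => intro p _; omega
  | succ k ih =>
    intro p h
    obtain ⟨q, _, _, h2, h3⟩ := h
    have := ih h3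
    have : (p.2 : ℕ) < q.2 := h2
    omega

/-- Colouring each point of a diagonal-free set by the number of points that can follow it in a
chain, every colour class is an antichain, and the colour `k` occurs only in rows
in which the `k`-th column of the left factor of the parametrisation may be nonzero. -/
theorem exists_coloring {A B n : ℕ} {u : ℕ → ℕ} (hu_top : u (n + 1) = A + 2)
    {S : Finset (Fin (A + 1) × Fin (B + 1))} (hS : DiagFree A B n u S) :
    ∃ κ : Fin (A + 1) × Fin (B + 1) → ℕ,
      (∀ p ∈ S, ∀ q ∈ S, p.1 < q.1 → p.2 < q.2 → κ q < κ p) ∧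
      ∀ p ∈ S, κ p < n ∧ (p.1 : ℕ) + u (κ p + 1) ≤ A + 1 := by
  classical
  let κ : Fin (A + 1) × Fin (B + 1) → ℕ := fun p => Nat.findGreatest (fun k => Reach S k p) B
  have hκ : ∀ p, Reach S (κ p) p := fun p =>
    Nat.findGreatest_spec (P := fun k => Reach S k p) (Nat.zero_le B) trivial
  have key : ∀ p ∈ S, ∀ k, Reach S k p → k ≤ n → (p.1 : ℕ) + u (k + 1) ≤ A + 1 := by
    intro p hp k hk hkn
    by_contra hcon
    obtain ⟨r, c, hr, hc, hr0, -, hmem⟩ := hk.exists_chain hp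
    obtain ⟨i, hi⟩ := hS (k + 1) (by omega) (by omega) r c hr hc (fun i => by
      have : r 0 ≤ r i := hr.monotone (Fin.zero_le i)
      have : (r 0 : ℕ) ≤ r i := this
      rw [hr0] at this
      omega)
    exact hi (hmem i)
  refine ⟨κ, fun p _ q hq h1 h2 => ?_, fun p hp => ?_⟩
  · have h : Reach S (κ q + 1) p := ⟨q, hq, h1, h2, hκ q⟩
    exact Nat.le_findGreatest h.bound h
  · have hlt : κ p < n := by
      by_contra hge
      have := key p hp n ((hκ p).mono (by omega)) le_rfl
      omega
    exact ⟨hlt, key p hp _ (hκ p) hlt.le⟩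

/-- Among the nonnegative integer matrices with given margins, one whose support has no two
positions increasing strictly in both coordinates has the smallest north-west partial sums. -/
theorem sum_Iic_le {p q : ℕ} (a b : Fin p × Fin q → ℕ)
    (hrow : ∀ i, ∑ j, a (i, j) = ∑ j, b (i, j)) (hcol : ∀ j, ∑ i, a (i, j) = ∑ i, b (i, j))
    (hb : ∀ s s', b s ≠ 0 → b s' ≠ 0 → s.1 < s'.1 → s.2 < s'.2 → False) (s : Fin p × Fin q) :
    ∑ x ∈ Finset.Iic s, b x ≤ ∑ x ∈ Finset.Iic s, a x := by
  classical
  by_cases h0 : ∑ x ∈ Finset.Iic s, b x = 0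
  · omega
  obtain ⟨s0, hs0, hbs0⟩ := Finset.exists_ne_zero_of_sum_ne_zero h0
  have hs0' := Finset.mem_Iic.1 hs0
  -- inclusion-exclusion for the rows `≤ s.1` and the columns `≤ s.2`
  have split : ∀ f : Fin p × Fin q → ℕ,
      ∑ i, (if i ≤ s.1 then ∑ j, f (i, j) else 0) + ∑ j, (if j ≤ s.2 then ∑ i, f (i, j) else 0)
      + ∑ x, (if s.1 < x.1 ∧ s.2 < x.2 then f x else 0) =
      ∑ x ∈ Finset.Iic s, f x + ∑ i, ∑ j, f (i, j) := by
    intro f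
    have e1 : ∑ i, (if i ≤ s.1 then ∑ j, f (i, j) else 0) =
        ∑ x : Fin p × Fin q, if x.1 ≤ s.1 then f x else 0 := by
      rw [Fintype.sum_prod_type]
      refine Finset.sum_congr rfl fun i _ => ?_
      split_ifs <;> simp
    have e2 : ∑ j, (if j ≤ s.2 then ∑ i, f (i, j) else 0) =
        ∑ x : Fin p × Fin q, if x.2 ≤ s.2 then f x else 0 := by
      rw [Fintype.sum_prod_type_right]
      refine Finset.sum_congr rfl fun i _ => ?_
      split_ifs <;> simp
    have e3 : ∑ x ∈ Finset.Iic s, f x = ∑ x, if x ≤ s then f x else 0 := by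
      rw [← Finset.sum_filter]
      refine Finset.sum_congr ?_ fun _ _ => rfl
      ext x; simp
    rw [e1, e2, e3, ← Fintype.sum_prod_type, ← Finset.sum_add_distrib, ← Finset.sum_add_distrib,
      ← Finset.sum_add_distrib]
    refine Finset.sum_congr rfl fun x _ => ?_
    simp only [Prod.le_def, ← not_le]
    by_cases h1 : x.1 ≤ s.1 <;> by_cases h2 : x.2 ≤ s.2 <;> simp [h1, h2]
  have ha := split a
  have hb' := split b
  have hz : ∑ x, (if s.1 < x.1 ∧ s.2 < x.2 then b x else 0) = 0 := by
    refine Finset.sum_eq_zero fun x _ => ?_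
    split_ifs with h
    · by_contra hx
      exact hb s0 x hbs0 hx (lt_of_le_of_lt hs0'.1 h.1) (lt_of_le_of_lt hs0'.2 h.2)
    · rfl
  simp only [hrow, hcol] at ha
  omega

/-- A matrix is determined by its north-west partial sums. -/
theorem eq_of_sum_Iic_eq {p q : ℕ} (a b : Fin p × Fin q → ℕ)
    (h : ∀ s, ∑ x ∈ Finset.Iic s, b x = ∑ x ∈ Finset.Iic s, a x) : a = b := by
  classical
  funext s
  induction s using WellFoundedLT.induction with
  | _ s ih =>
  have hs := h s
  rw [← Finset.Iio_insert, Finset.sum_insert (by simp), Finset.sum_insert (by simp)] at hs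
  have : ∑ x ∈ Finset.Iio s, a x = ∑ x ∈ Finset.Iio s, b x :=
    Finset.sum_congr rfl fun x hx => ih x (Finset.mem_Iio.1 hx)
  omega

/-- The sum of all north-west partial sums of a matrix. -/
def cum {p q : ℕ} (a : Fin p × Fin q → ℕ) : ℕ := ∑ s, ∑ x ∈ Finset.Iic s, a x

theorem cum_sum {p q : ℕ} {ι : Type*} (t : Finset ι) (a : ι → Fin p × Fin q → ℕ) :
    cum (fun s => ∑ k ∈ t, a k s) = ∑ k ∈ t, cum (a k) := by
  unfold cum
  rw [Finset.sum_comm]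
  refine Finset.sum_congr rfl fun s _ => ?_
  rw [Finset.sum_comm]

theorem cum_le {p q : ℕ} (a b : Fin p × Fin q → ℕ)
    (hrow : ∀ i, ∑ j, a (i, j) = ∑ j, b (i, j)) (hcol : ∀ j, ∑ i, a (i, j) = ∑ i, b (i, j))
    (hb : ∀ s s', b s ≠ 0 → b s' ≠ 0 → s.1 < s'.1 → s.2 < s'.2 → False) :
    cum b ≤ cum a ∧ (cum b = cum a → a = b) := by
  have h := sum_Iic_le a b hrow hcol hb
  refine ⟨Finset.sum_le_sum fun s _ => h s, fun he => ?_⟩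
  have := (Finset.sum_eq_sum_iff_of_le fun s _ => h s).1 he
  exact eq_of_sum_Iic_eq a b fun s => this s (Finset.mem_univ s)

/-- The variables `Y_{i,k}` and `Z_{k,j}` of the two factors of the parametrisation. -/
abbrev YZ (A B : ℕ) : Type := (Fin (A + 1) × ℕ) ⊕ (ℕ × Fin (B + 1))

/-- The boxes of a monomial: the variable `s` is repeated `m s` times. -/
abbrev Boxes {A B : ℕ} (m : Fin (A + 1) × Fin (B + 1) →₀ ℕ) : Type :=
  Σ s : Fin (A + 1) × Fin (B + 1), Fin (m s)

/-- The exponent vector of `Y_{i,k} Z_{k,j}`, where `s = (i, j)`. -/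
noncomputable def pairExp {A B : ℕ} (s : Fin (A + 1) × Fin (B + 1)) (k : ℕ) : YZ A B →₀ ℕ :=
  Finsupp.single (Sum.inl (s.1, k)) 1 + Finsupp.single (Sum.inr (k, s.2)) 1

/-- The exponent vector of the monomial in `Y, Z` obtained from a colouring of the boxes. -/
noncomputable def colorExp {A B : ℕ} {m : Fin (A + 1) × Fin (B + 1) →₀ ℕ} (c : Boxes m → ℕ) :
    YZ A B →₀ ℕ := ∑ x, pairExp x.1 (c x)

/-- The multiplicity matrix of the colour class `k`. -/
def classMat {A B : ℕ} {m : Fin (A + 1) × Fin (B + 1) →₀ ℕ} (c : Boxes m → ℕ) (k : ℕ)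
    (s : Fin (A + 1) × Fin (B + 1)) : ℕ := ∑ i : Fin (m s), if c ⟨s, i⟩ = k then 1 else 0

theorem colorExp_inl {A B : ℕ} {m : Fin (A + 1) × Fin (B + 1) →₀ ℕ} (c : Boxes m → ℕ)
    (i : Fin (A + 1)) (k : ℕ) :
    colorExp c (Sum.inl (i, k)) = ∑ j, classMat c k (i, j) := by
  classical
  simp only [colorExp, classMat, Finsupp.coe_finsetSum, Finset.sum_apply]
  rw [Fintype.sum_sigma, Fintype.sum_prod_type, Finset.sum_eq_single i]
  · refine Finset.sum_congr rfl fun j _ => Finset.sum_congr rfl fun x _ => ?_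
    simp [pairExp, Finsupp.single_apply]
  · intro i' _ hi'
    refine Finset.sum_eq_zero fun j _ => Finset.sum_eq_zero fun x _ => ?_
    simp [pairExp, hi']
  · simp

theorem colorExp_inr {A B : ℕ} {m : Fin (A + 1) × Fin (B + 1) →₀ ℕ} (c : Boxes m → ℕ)
    (j : Fin (B + 1)) (k : ℕ) :
    colorExp c (Sum.inr (k, j)) = ∑ i, classMat c k (i, j) := by
  classical
  simp only [colorExp, classMat, Finsupp.coe_finsetSum, Finset.sum_apply]
  rw [Fintype.sum_sigma, Fintype.sum_prod_type_right, Finset.sum_eq_single j]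
  · refine Finset.sum_congr rfl fun j _ => Finset.sum_congr rfl fun x _ => ?_
    simp [pairExp, Finsupp.single_apply]
  · intro i' _ hi'
    refine Finset.sum_eq_zero fun j _ => Finset.sum_eq_zero fun x _ => ?_
    simp [pairExp, hi']
  · simp

theorem sum_classMat {A B n : ℕ} {m : Fin (A + 1) × Fin (B + 1) →₀ ℕ} (c : Boxes m → ℕ)
    (hc : ∀ x, c x < n) : (fun s => ∑ k ∈ Finset.range n, classMat c k s) = m := by
  funext s
  simp only [classMat]
  rw [Finset.sum_comm]
  simp [hc]

/-- Triangularity: if a colouring of the boxes of `m` yields the same `Y, Z`-monomial as a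
colouring of `m'` that depends only on the variable and has antichains as classes, then `cum m' ≤ cum m`, and equality forces
both the monomials and the colourings to agree. -/
theorem cum_le_of_colorExp_eq {A B n : ℕ} {m m' : Fin (A + 1) × Fin (B + 1) →₀ ℕ}
    (c : Boxes m → ℕ) (hc : ∀ x, c x < n) (κ : Fin (A + 1) × Fin (B + 1) → ℕ)
    (hκ : ∀ p ∈ m'.support, ∀ q ∈ m'.support, p.1 < q.1 → p.2 < q.2 → κ q < κ p)
    (hκn : ∀ p ∈ m'.support, κ p < n)
    (h : colorExp c = colorExp (m := m') (fun x => κ x.1)) :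
    cum m' ≤ cum m ∧ (cum m' = cum m → m = m' ∧ ∀ x, c x = κ x.1) := by
  set c' : Boxes m' → ℕ := fun x => κ x.1 with hc'
  have hc'n : ∀ x, c' x < n := by
    rintro ⟨s, i⟩
    apply hκn
    rw [Finsupp.mem_support_iff]
    exact (Fin.pos i).ne'
  have hval : ∀ k s, classMat c' k s ≠ 0 → s ∈ m'.support ∧ κ s = k := by
    intro k s hs
    obtain ⟨i, -, hi⟩ := Finset.exists_ne_zero_of_sum_ne_zero hs
    refine ⟨by rw [Finsupp.mem_support_iff]; exact (Fin.pos i).ne', ?_⟩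
    by_contra hne
    exact hi (if_neg hne)
  have hk : ∀ k, cum (classMat c' k) ≤ cum (classMat c k) ∧
      (cum (classMat c' k) = cum (classMat c k) → classMat c k = classMat c' k) := by
    intro k
    apply cum_le
    · intro i
      rw [← colorExp_inl, ← colorExp_inl, h]
    · intro j
      rw [← colorExp_inr, ← colorExp_inr, h]
    · intro s s' hs hs' h1 h2
      obtain ⟨hs, e⟩ := hval k s hs
      obtain ⟨hs', e'⟩ := hval k s' hs'
      have := hκ s hs s' hs' h1 h2
      omega
  have hm := sum_classMat c hc
  have hm' := sum_classMat c' hc'n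
  have hcm : cum m = ∑ k ∈ Finset.range n, cum (classMat c k) := by rw [← cum_sum, hm]
  have hcm' : cum m' = ∑ k ∈ Finset.range n, cum (classMat c' k) := by rw [← cum_sum, hm']
  rw [hcm, hcm']
  refine ⟨Finset.sum_le_sum fun k _ => (hk k).1, fun he => ?_⟩
  have hall : ∀ k ∈ Finset.range n, classMat c k = classMat c' k := fun k hkn =>
    (hk k).2 ((Finset.sum_eq_sum_iff_of_le fun k _ => (hk k).1).1 he k hkn)
  refine ⟨?_, ?_⟩
  · apply DFunLike.coe_injective
    rw [← hm, ← hm']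
    funext s
    exact Finset.sum_congr rfl fun k hkn => by rw [hall k hkn]
  · rintro ⟨s, i⟩
    have hne : classMat c (c ⟨s, i⟩) s ≠ 0 := by
      unfold classMat
      exact (Finset.sum_pos' (fun _ _ => Nat.zero_le _) ⟨i, Finset.mem_univ i, by simp⟩).ne'
    rw [hall _ (Finset.mem_range.2 (hc _))] at hne
    exact (hval _ _ hne).2.symm

/-! ### Linear independence of the diagonal-free monomials -/

/-- The parametrisation `X = Y Z` with `Y` of width `n`, where `Y_{i,k} = 0` as soon as row `i`
is one of the last `u (k + 1) - 1` rows. -/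
noncomputable def phi (K : Type*) [Field K] (A B n : ℕ) (u : ℕ → ℕ) :
    MvPolynomial (Fin (A + 1) × Fin (B + 1)) K →ₐ[K] MvPolynomial (YZ A B) K :=
  MvPolynomial.aeval fun s => ∑ k ∈ Finset.range n,
    if (s.1 : ℕ) + u (k + 1) ≤ A + 1 then MvPolynomial.monomial (pairExp s k) 1 else 0

open Classical in
/-- Expanding the product of sums over all colourings of the boxes of the monomial. -/
theorem phi_monomial (K : Type*) [Field K] (A B n : ℕ) (u : ℕ → ℕ)
    (m : Fin (A + 1) × Fin (B + 1) →₀ ℕ) :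
    phi K A B n u (MvPolynomial.monomial m 1) =
      ∑ c ∈ Fintype.piFinset (fun _ : Boxes m => Finset.range n),
        if ∀ x, (x.1.1 : ℕ) + u (c x + 1) ≤ A + 1 then
          MvPolynomial.monomial (colorExp c) 1 else 0 := by
  rw [phi, MvPolynomial.aeval_monomial, map_one, one_mul, Finsupp.prod_fintype _ _ (by simp)]
  have : ∀ s : Fin (A + 1) × Fin (B + 1), (∑ k ∈ Finset.range n,
      if (s.1 : ℕ) + u (k + 1) ≤ A + 1 then
        (MvPolynomial.monomial (pairExp s k) (1 : K)) else 0) ^ m s =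
      ∏ _i : Fin (m s), (∑ k ∈ Finset.range n,
        if (s.1 : ℕ) + u (k + 1) ≤ A + 1 then
          (MvPolynomial.monomial (pairExp s k) (1 : K)) else 0) := by
    intro s; simp
  rw [Finset.prod_congr rfl fun s _ => this s, ← Fintype.prod_sigma', Finset.prod_univ_sum]
  refine Finset.sum_congr rfl fun c _ => ?_
  rw [Finset.prod_ite_zero]
  simp only [Finset.mem_univ, forall_true_left]
  split_ifs with h
  · rw [colorExp, MvPolynomial.monomial_sum_one]
  · rfl

theorem sum_range_eq_sum_fin {R : Type*} [AddCommMonoid R] {n s t : ℕ} (f : ℕ → R) (hs : s ≤ t)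
    (hf : ∀ k, k < n → s ≤ k → f k = 0) :
    ∑ k ∈ Finset.range n, f k = ∑ k : Fin t, if (k : ℕ) < n ∧ (k : ℕ) < s then f k else 0 := by
  rw [Fin.sum_univ_eq_sum_range (fun k => if k < n ∧ k < s then f k else 0) t, ← Finset.sum_filter,
    ← Finset.sum_filter_add_sum_filter_not (Finset.range n) (fun k => k < s)]
  rw [Finset.sum_eq_zero (s := (Finset.range n).filter fun k => ¬ k < s), add_zero]
  · refine Finset.sum_congr ?_ fun _ _ => rfl
    ext k
    simp only [Finset.mem_filter, Finset.mem_range]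
    omega
  · intro k hk
    simp only [Finset.mem_filter, Finset.mem_range] at hk
    exact hf k hk.1 (by omega)

/-- The parametrisation satisfies the rank conditions: a minor of size `t` in question is the
determinant of a product of matrices of inner dimension `t - 1`. -/
theorem phi_eq_zero (K : Type*) [Field K] (A B n : ℕ) (u : ℕ → ℕ)
    (hmono : ∀ i j, 1 ≤ i → i ≤ j → j ≤ n → u i ≤ u j)
    (f) (hf : f ∈ rowIdeal K A B n u) : phi K A B n u f = 0 := by
  classical
  suffices h : rowIdeal K A B n u ≤ RingHom.ker (phi K A B n u).toRingHom from h hf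
  refine Ideal.span_le.2 ?_
  rintro f ⟨t, ht1, htn, r, c, hr, hc, hor, rfl⟩
  change phi K A B n u _ = 0
  have hbound : ∀ k l, t ≤ k + 1 → k < n → ¬ ((r l : ℕ) + u (k + 1) ≤ A + 1) := by
    intro k l htk hkn
    have htn' : t ≤ n := by omega
    rcases hor with h | h
    · have h1 := h l
      have h2 := hmono t (k + 1) ht1 htk (by omega)
      omega
    -- the column condition concerns no minor of size at most `n`: it leaves fewer than `t` columns
    · exfalso
      have h0 := h ⟨0, ht1⟩
      beta_reduce at h0
      rw [if_neg (by omega)] at h0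
      have hc0 : ∀ i : ℕ, ∀ hi : i < t, (c ⟨0, ht1⟩ : ℕ) + i ≤ c ⟨i, hi⟩ := by
        intro i
        induction i with
        | zero => intro hi; simp
        | succ i ih =>
          intro hi
          have h1 := ih (by omega)
          have h2 : c ⟨i, by omega⟩ < c ⟨i + 1, hi⟩ := hc (by simp [Fin.lt_def])
          have h3 : (c ⟨i, by omega⟩ : ℕ) < c ⟨i + 1, hi⟩ := h2
          omega
      have h1 := hc0 (t - 1) (by omega)
      have h2 := (c ⟨t - 1, by omega⟩).2
      omega
  let P : Matrix (Fin t) (Fin t) (MvPolynomial (YZ A B) K) := fun a k =>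
    if (k : ℕ) < n ∧ (k : ℕ) < t - 1 then
      (if (r a : ℕ) + u (k + 1) ≤ A + 1 then MvPolynomial.X (Sum.inl (r a, (k : ℕ))) else 0) else 0
  let Q : Matrix (Fin t) (Fin t) (MvPolynomial (YZ A B) K) := fun k b =>
    MvPolynomial.X (Sum.inr ((k : ℕ), c b))
  have hPQ : (phi K A B n u).mapMatrix ((genericMatrix K A B).submatrix r c) = P * Q := by
    ext1 a b
    rw [Matrix.mul_apply]
    simp only [AlgHom.mapMatrix_apply, Matrix.map_apply, Matrix.submatrix_apply, genericMatrix,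
      phi, MvPolynomial.aeval_X]
    rw [sum_range_eq_sum_fin (t := t) (s := t - 1) _ (by omega)
      (fun k hk hs => if_neg (hbound k a (by omega) hk))]
    refine Finset.sum_congr rfl fun k _ => ?_
    simp only [P, Q, ite_mul, zero_mul]
    refine if_congr Iff.rfl (if_congr Iff.rfl ?_ rfl) rfl
    rw [pairExp, ← one_mul (1 : K), ← MvPolynomial.monomial_mul]
    simp [MvPolynomial.X]
  rw [AlgHom.map_det, hPQ, Matrix.det_mul, Matrix.det_eq_zero_of_column_eq_zero ⟨t - 1, by omega⟩,
    zero_mul]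
  intro a
  simp [P]

/-- The diagonal-free monomials are linearly independent modulo the ideal. -/
theorem linearIndependent_diagFree (K : Type*) [Field K] (A B n : ℕ) (u : ℕ → ℕ)
    (hu_top : u (n + 1) = A + 2)
    (hmono : ∀ i j, 1 ≤ i → i ≤ j → j ≤ n → u i ≤ u j) :
    LinearIndependent K
      (fun m : {m : Fin (A + 1) × Fin (B + 1) →₀ ℕ // DiagFree A B n u m.support} =>
        Ideal.Quotient.mkₐ K (rowIdeal K A B n u) (MvPolynomial.monomial m.1 1)) := by
  classical
  let ψ := Ideal.Quotient.liftₐ (rowIdeal K A B n u) (phi K A B n u)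
    (phi_eq_zero K A B n u hmono)
  refine LinearIndependent.of_comp ψ.toLinearMap ?_
  have hψ : (ψ.toLinearMap ∘
      (fun m : {m : Fin (A + 1) × Fin (B + 1) →₀ ℕ // DiagFree A B n u m.support} =>
        Ideal.Quotient.mkₐ K (rowIdeal K A B n u) (MvPolynomial.monomial m.1 1))) =
      fun m => phi K A B n u (MvPolynomial.monomial m.1 1) := by
    funext m
    rfl
  rw [hψ, linearIndependent_iff']
  intro s g hg
  by_contra! hcon
  obtain ⟨i0, hi0, hgi0⟩ := hcon
  obtain ⟨m', hm', hmax⟩ := Finset.exists_max_image (s.filter fun i => g i ≠ 0)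
    (fun i => cum i.1) ⟨i0, Finset.mem_filter.2 ⟨hi0, hgi0⟩⟩
  obtain ⟨hm's, hgm'⟩ := Finset.mem_filter.1 hm'
  obtain ⟨κ, hκ1, hκ2⟩ := exists_coloring hu_top m'.2
  -- the coefficient of the monomial attached to the colouring `κ` of the `cum`-maximal `m'`
  have hcoef := congrArg (MvPolynomial.coeff (colorExp (m := m'.1) fun x => κ x.1)) hg
  rw [MvPolynomial.coeff_sum, Finset.sum_eq_single_of_mem m' hm's, MvPolynomial.coeff_smul] at hcoef
  · have h1 : MvPolynomial.coeff (colorExp (m := m'.1) fun x => κ x.1)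
        (phi K A B n u (MvPolynomial.monomial m'.1 1)) = 1 := by
      have hsupp : ∀ x : Boxes m'.1, x.1 ∈ m'.1.support := by
        rintro ⟨s, i⟩
        rw [Finsupp.mem_support_iff]
        exact (Fin.pos i).ne'
      rw [phi_monomial, MvPolynomial.coeff_sum, Finset.sum_eq_single fun x => κ x.1]
      · rw [if_pos fun x => (hκ2 x.1 (hsupp x)).2]
        simp
      · intro c hc hne
        split_ifs
        · rw [MvPolynomial.coeff_monomial, if_neg]
          intro he
          have := cum_le_of_colorExp_eq (n := n) c
            (fun x => Finset.mem_range.1 (Fintype.mem_piFinset.1 hc x)) κ hκ1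
            (fun p hp => (hκ2 p hp).1) he
          exact hne (funext (this.2 rfl).2)
        · simp
      · intro hnot
        exfalso
        exact hnot (Fintype.mem_piFinset.2 fun x => Finset.mem_range.2 (hκ2 x.1 (hsupp x)).1)
    rw [h1] at hcoef
    simp at hcoef
    exact hgm' hcoef
  · intro m hm hne
    rw [MvPolynomial.coeff_smul]
    by_cases hgm : g m = 0
    · simp [hgm]
    have hle := hmax m (Finset.mem_filter.2 ⟨hm, hgm⟩)
    rw [phi_monomial, MvPolynomial.coeff_sum, Finset.sum_eq_zero, smul_zero]
    intro c hc
    split_ifs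
    · rw [MvPolynomial.coeff_monomial, if_neg]
      intro he
      have := cum_le_of_colorExp_eq (n := n) c
        (fun x => Finset.mem_range.1 (Fintype.mem_piFinset.1 hc x)) κ hκ1
        (fun p hp => (hκ2 p hp).1) he
      exact hne (Subtype.ext (this.2 (le_antisymm this.1 hle)).1)
    · simp

open Classical in
/-- The diagonal-free monomials form a basis in each degree. -/
theorem quotDim_eq (K : Type*) [Field K] (A B n : ℕ) (u : ℕ → ℕ)
    (hu_top : u (n + 1) = A + 2)
    (hmono : ∀ i j, 1 ≤ i → i ≤ j → j ≤ n → u i ≤ u j) (ℓ : ℕ) :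
    quotDim K (rowIdeal K A B n u) ℓ =
      ((Finset.univ.finsuppAntidiag ℓ).filter
        fun m : Fin (A + 1) × Fin (B + 1) →₀ ℕ => DiagFree A B n u m.support).card := by
  set T := (Finset.univ.finsuppAntidiag ℓ).filter
        fun m : Fin (A + 1) × Fin (B + 1) →₀ ℕ => DiagFree A B n u m.support with hT
  have hTm : ∀ m, m ∈ T ↔ m.degree = ℓ ∧ DiagFree A B n u m.support := by
    intro m
    simp [hT, Finset.mem_finsuppAntidiag, Finsupp.degree_eq_sum]
  let b : T → MvPolynomial (Fin (A + 1) × Fin (B + 1)) K ⧸ rowIdeal K A B n u := fun m =>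
    Ideal.Quotient.mkₐ K (rowIdeal K A B n u) (MvPolynomial.monomial m.1 1)
  have hb : LinearIndependent K b :=
    (linearIndependent_diagFree K A B n u hu_top hmono).comp
      (fun m : T => ⟨m.1, ((hTm _).1 m.2).2⟩) (fun x y h => by
        apply Subtype.ext
        simpa using h)
  have hspan : Submodule.map (Ideal.Quotient.mkₐ K (rowIdeal K A B n u)).toLinearMap
      (MvPolynomial.homogeneousSubmodule (Fin (A + 1) × Fin (B + 1)) K ℓ) =
      Submodule.span K (Set.range b) := by
    apply le_antisymm
    · rintro _ ⟨f, hf, rfl⟩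
      rw [f.as_sum, map_sum]
      refine Submodule.sum_mem _ fun m hm => ?_
      have hdeg : m.degree = ℓ := by
        have := (MvPolynomial.mem_homogeneousSubmodule ℓ f).1 hf (MvPolynomial.mem_support_iff.1 hm)
        rwa [Finsupp.degree_eq_weight_one]
      have h1 : MvPolynomial.monomial m (MvPolynomial.coeff m f) =
          MvPolynomial.coeff m f • MvPolynomial.monomial m (1 : K) := by
        rw [MvPolynomial.smul_monomial, smul_eq_mul, mul_one]
      rw [h1, map_smul]
      refine Submodule.smul_mem _ _ (Submodule.span_mono ?_ (mk_monomial_mem_span K A B n u m))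
      rintro _ ⟨m', hm'1, hm'2, rfl⟩
      exact ⟨⟨m', (hTm m').2 ⟨hm'1.trans hdeg, hm'2⟩⟩, rfl⟩
    · rw [Submodule.span_le]
      rintro _ ⟨m, rfl⟩
      refine ⟨MvPolynomial.monomial m.1 1, ?_, rfl⟩
      exact (MvPolynomial.mem_homogeneousSubmodule ℓ _).2
        (MvPolynomial.isHomogeneous_monomial _ ((hTm _).1 m.2).1)
  rw [quotDim, hspan, finrank_span_eq_card hb, Fintype.card_coe]

/-! ### The Hilbert series as a sum over supports -/

/-- The series `1 / (1 - z)`. -/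
noncomputable def iq : PowerSeries ℤ := PowerSeries.mk 1

/-- The series `z / (1 - z)`, the generating function of the positive exponents. -/
noncomputable def w : PowerSeries ℤ := PowerSeries.X * iq

theorem iq_mul : iq * (1 - PowerSeries.X) = 1 := PowerSeries.mk_one_mul_one_sub_eq_one ℤ

theorem iq_pow_mul (k : ℕ) : iq ^ k * (1 - PowerSeries.X) ^ k = 1 := by
  rw [← mul_pow, iq_mul, one_pow]

theorem one_add_w : 1 + w = iq := by
  have h := iq_mul
  unfold w
  linear_combination -h

theorem coeff_w (k : ℕ) : PowerSeries.coeff k w = if k = 0 then 0 else 1 := by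
  rcases k with _ | k
  · simp [w]
  · simp [w, iq, PowerSeries.coeff_succ_X_mul]

/-- The monomials with support `S` have generating function `w ^ |S|`. -/
theorem coeff_w_pow {σ : Type*} [Fintype σ] [DecidableEq σ] (S : Finset σ) (ℓ : ℕ) :
    PowerSeries.coeff ℓ (w ^ S.card) =
      (((Finset.univ.finsuppAntidiag ℓ).filter fun m : σ →₀ ℕ => m.support = S).card : ℤ) := by
  rw [← Finset.prod_const, PowerSeries.coeff_prod]
  simp only [coeff_w]
  have h : ∀ l : σ →₀ ℕ, (∏ i ∈ S, if l i = 0 then (0 : ℤ) else 1) =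
      if ∀ i ∈ S, l i ≠ 0 then 1 else 0 := by
    intro l
    have h2 : ∀ i, (if l i = 0 then (0 : ℤ) else 1) = if l i ≠ 0 then 1 else 0 := by
      intro i; split_ifs <;> simp_all
    simp only [h2]
    rw [Finset.prod_ite_zero]
    simp
  simp only [h]
  rw [← Finset.sum_filter, Finset.sum_const, nsmul_eq_mul, mul_one]
  congr 2
  ext l
  simp only [Finset.mem_filter, Finset.mem_finsuppAntidiag]
  constructor
  · rintro ⟨⟨h1, h2⟩, h3⟩
    refine ⟨⟨?_, Finset.subset_univ _⟩, ?_⟩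
    · rw [← h1]
      refine (Finset.sum_subset (Finset.subset_univ _) fun x _ hx => ?_).symm
      by_contra hne
      exact hx (h2 (Finsupp.mem_support_iff.2 hne))
    · exact Finset.Subset.antisymm h2 fun i hi => Finsupp.mem_support_iff.2 (h3 i hi)
  · rintro ⟨⟨h1, _⟩, rfl⟩
    refine ⟨⟨?_, Finset.Subset.refl _⟩, fun i hi => Finsupp.mem_support_iff.1 hi⟩
    rw [← h1]
    refine Finset.sum_subset (Finset.subset_univ _) fun x _ hx => ?_
    simpa using hx

open Classical in
/-- Sorting monomials by their support. -/
theorem mk_card_eq_sum {σ : Type*} [Fintype σ] [DecidableEq σ] (p : Finset σ → Prop) :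
    (PowerSeries.mk fun ℓ => (((Finset.univ.finsuppAntidiag ℓ).filter
        fun m : σ →₀ ℕ => p m.support).card : ℤ)) =
      ∑ S ∈ Finset.univ.filter p, w ^ S.card := by
  ext ℓ
  rw [PowerSeries.coeff_mk, map_sum]
  simp only [coeff_w_pow]
  rw [Finset.card_eq_sum_card_fiberwise (f := fun m : σ →₀ ℕ => m.support)
    (t := Finset.univ.filter p)]
  · push_cast
    refine Finset.sum_congr rfl fun S hS => ?_
    congr 2
    ext m
    simp only [Finset.mem_filter, Finset.mem_univ, true_and] at hS ⊢
    constructor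
    · rintro ⟨⟨h1, _⟩, h3⟩
      exact ⟨h1, h3⟩
    · rintro ⟨h1, rfl⟩
      exact ⟨⟨h1, hS⟩, rfl⟩
  · intro m hm
    simp only [Finset.coe_filter, Set.mem_ofPred_eq] at hm ⊢
    exact ⟨Finset.mem_univ _, hm.2⟩

/-! ### Column by column description of diagonal-free sets -/

/-- The columns `c 0, c 1, …` contain a descending chain of length `t` below height `b`: the
columns strictly increase along the chain and the heights strictly decrease. -/
def Chain {N : ℕ} (c : Fin N → Finset ℕ) (t b : ℕ) : Prop :=
  ∃ x : Fin t → Fin N, StrictMono x ∧ ∃ y : Fin t → ℕ, StrictAnti y ∧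
    ∀ k, y k ∈ c (x k) ∧ y k < b

theorem Chain.mono {N : ℕ} {c : Fin N → Finset ℕ} {t b b' : ℕ} (hb : b ≤ b') (h : Chain c t b) :
    Chain c t b' := by
  obtain ⟨x, hx, y, hy, h⟩ := h
  exact ⟨x, hx, y, hy, fun k => ⟨(h k).1, (h k).2.trans_le hb⟩⟩

theorem chain_zero {N : ℕ} (c : Fin N → Finset ℕ) (b : ℕ) : Chain c 0 b :=
  ⟨Fin.elim0, fun a => a.elim0, Fin.elim0, fun a => a.elim0, fun a => a.elim0⟩

/-- A chain either avoids the first column or starts in it. -/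
theorem chain_succ {N : ℕ} (c : Fin (N + 1) → Finset ℕ) (t b : ℕ) :
    Chain c (t + 1) b ↔ Chain (Fin.tail c) (t + 1) b ∨
      ∃ y ∈ c 0, y < b ∧ Chain (Fin.tail c) t y := by
  constructor
  · rintro ⟨x, hx, y, hy, h⟩
    by_cases h0 : x 0 = 0
    · right
      have hne : ∀ k : Fin t, x k.succ ≠ 0 := by
        intro k hk
        have := hx (Fin.succ_pos k)
        rw [hk, h0] at this
        exact lt_irrefl _ this
      refine ⟨y 0, h0 ▸ (h 0).1, (h 0).2, fun k => (x k.succ).pred (hne k), ?_,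
        fun k => y k.succ, ?_, ?_⟩
      · intro a b hab
        exact Fin.pred_lt_pred_iff.2 (hx (Fin.succ_lt_succ_iff.2 hab))
      · intro a b hab
        exact hy (Fin.succ_lt_succ_iff.2 hab)
      · intro k
        refine ⟨?_, hy (Fin.succ_pos k)⟩
        simpa [Fin.tail] using (h k.succ).1
    · left
      have hne : ∀ k, x k ≠ 0 := by
        intro k hk
        have h1 := hx.monotone (Fin.zero_le k)
        rw [hk] at h1
        exact h0 (Fin.le_zero_iff.1 h1)
      refine ⟨fun k => (x k).pred (hne k), ?_, y, hy, ?_⟩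
      · intro a b hab
        exact Fin.pred_lt_pred_iff.2 (hx hab)
      · intro k
        simpa [Fin.tail] using h k
  · rintro (⟨x, hx, y, hy, h⟩ | ⟨y0, hy0, hb, x, hx, y, hy, h⟩)
    · exact ⟨fun k => (x k).succ, fun a b hab => Fin.succ_lt_succ_iff.2 (hx hab), y, hy, h⟩
    · refine ⟨Fin.cons 0 fun k => (x k).succ, ?_, Fin.cons y0 y, ?_, ?_⟩
      · intro a b hab
        induction b using Fin.cases with
        | zero => exact absurd hab (Fin.not_lt_zero a)
        | succ b =>
          induction a using Fin.cases with
          | zero => simp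
          | succ a => simpa using hx (Fin.succ_lt_succ_iff.1 hab)
      · intro a b hab
        induction b using Fin.cases with
        | zero => exact absurd hab (Fin.not_lt_zero a)
        | succ b =>
          induction a using Fin.cases with
          | zero => simpa using (h b).2
          | succ a => simpa using hy (Fin.succ_lt_succ_iff.1 hab)
      · intro k
        induction k using Fin.cases with
        | zero => simpa using ⟨hy0, hb⟩
        | succ k => simpa using ⟨(h k).1, (h k).2.trans hb⟩

/-- No descending chain of length `t + 1` lies below height `g t`. -/
def Valid {N : ℕ} (c : Fin N → Finset ℕ) (g : ℕ → ℕ) : Prop := ∀ t, ¬ Chain c (t + 1) (g t)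

/-- The heights to be respected by the later columns once the first column is `C`. -/
def upd (g : ℕ → ℕ) (C : Finset ℕ) (t : ℕ) : ℕ :=
  max (g t) ((C.filter (· < g (t + 1))).sup id)

theorem valid_succ {N : ℕ} (c : Fin (N + 1) → Finset ℕ) (g : ℕ → ℕ) :
    Valid c g ↔ (∀ y ∈ c 0, g 0 ≤ y) ∧ Valid (Fin.tail c) (upd g (c 0)) := by
  constructor
  · intro h
    refine ⟨fun y hy => ?_, fun t ht => ?_⟩
    · by_contra hlt
      exact h 0 ((chain_succ _ _ _).2 (Or.inr ⟨y, hy, not_le.1 hlt, chain_zero _ _⟩))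
    · have h1 : ¬ Chain (Fin.tail c) (t + 1) (g t) := fun hc =>
        h t ((chain_succ _ _ _).2 (Or.inl hc))
      unfold upd at ht
      rcases max_choice (g t) (((c 0).filter (· < g (t + 1))).sup id) with hm | hm
      · rw [hm] at ht
        exact h1 ht
      · rw [hm] at ht
        rcases ((c 0).filter (· < g (t + 1))).eq_empty_or_nonempty with he | hne
        · rw [he] at ht
          exact h1 (ht.mono (by simp))
        · obtain ⟨y, hy, hys⟩ := Finset.exists_mem_eq_sup _ hne id
          rw [hys] at ht
          rw [Finset.mem_filter] at hy
          exact h (t + 1) ((chain_succ _ _ _).2 (Or.inr ⟨y, hy.1, hy.2, ht⟩))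
  · rintro ⟨h1, h2⟩ t ht
    rcases (chain_succ _ _ _).1 ht with ht | ⟨y, hy, hyt, ht⟩
    · exact h2 t (ht.mono (le_max_left _ _))
    · rcases t with _ | t
      · exact absurd (h1 y hy) (not_le.2 hyt)
      · refine h2 t (ht.mono ?_)
        refine le_trans ?_ (le_max_right _ _)
        exact Finset.le_sup (f := id) (Finset.mem_filter.2 ⟨hy, hyt⟩)

/-- The generating function of valid families of `N` columns, by recursion on the number of
columns; see `sum_valid`. -/
noncomputable def F (A : ℕ) : ℕ → (ℕ → ℕ) → PowerSeries ℤ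
  | 0, _ => 1
  | N + 1, g => ∑ C ∈ (Finset.Ico (g 0) (A + 1)).powerset, w ^ C.card * F A N (upd g C)

/-- A chain in `N` columns has length at most `N`, so only the first `N` heights matter. -/
theorem F_congr (A N : ℕ) : ∀ g g' : ℕ → ℕ, (∀ t, t < N → g t = g' t) → F A N g = F A N g' := by
  induction N with
  | zero => intro g g' _; rfl
  | succ N ih =>
    intro g g' h
    rw [F, F, h 0 (by omega)]
    refine Finset.sum_congr rfl fun C _ => ?_
    rw [ih (upd g C) (upd g' C)]
    intro t ht
    rw [upd, upd, h t (by omega), h (t + 1) (by omega)]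

open Classical in
theorem sum_valid (A N : ℕ) : ∀ g : ℕ → ℕ,
    ∑ c ∈ (Fintype.piFinset fun _ : Fin N => (Finset.range (A + 1)).powerset).filter
      (fun c => Valid c g), w ^ (∑ x, (c x).card) = F A N g := by
  induction N with
  | zero =>
    intro g
    rw [Finset.filter_true_of_mem]
    · simp [F]
    · rintro c - t ⟨x, -⟩
      exact (x 0).elim0
  | succ N ih =>
    intro g
    rw [F]
    simp only [← ih, Finset.mul_sum]
    rw [Finset.sum_sigma']
    symm
    refine Finset.sum_bij' (fun p _ => Fin.cons p.1 p.2) (fun c _ => ⟨c 0, Fin.tail c⟩) ?_ ?_ ?_ ?_ ?_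
    · rintro ⟨C, c⟩ h
      simp only [Finset.mem_sigma, Finset.mem_powerset, Finset.mem_filter,
        Fintype.mem_piFinset] at h ⊢
      obtain ⟨h1, h2, h3⟩ := h
      refine ⟨?_, ?_⟩
      · intro k
        induction k using Fin.cases with
        | zero =>
          intro y hy
          have := Finset.mem_Ico.1 (h1 hy)
          exact Finset.mem_range.2 this.2
        | succ k => exact h2 k
      · rw [valid_succ]
        refine ⟨fun y hy => (Finset.mem_Ico.1 (h1 hy)).1, ?_⟩
        simpa using h3
    · intro c h
      simp only [Finset.mem_sigma, Finset.mem_powerset, Finset.mem_filter,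
        Fintype.mem_piFinset] at h ⊢
      obtain ⟨h1, h2⟩ := h
      rw [valid_succ] at h2
      refine ⟨fun y hy => Finset.mem_Ico.2 ⟨h2.1 y hy, Finset.mem_range.1 (h1 0 hy)⟩,
        fun k => h1 k.succ, h2.2⟩
    · rintro ⟨C, c⟩ h
      simp
    · intro c h
      simp
    · rintro ⟨C, c⟩ h
      simp [Fin.sum_univ_succ, pow_add]

/-- The `j`-th column of `S`, with rows numbered from the bottom. -/
def cols {A B : ℕ} (S : Finset (Fin (A + 1) × Fin (B + 1))) (j : Fin (B + 1)) : Finset ℕ :=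
  (Finset.univ.filter fun i => (i, j) ∈ S).image fun i : Fin (A + 1) => A - (i : ℕ)

theorem mem_cols {A B : ℕ} (S : Finset (Fin (A + 1) × Fin (B + 1))) (j : Fin (B + 1)) (y : ℕ) :
    y ∈ cols S j ↔ ∃ i : Fin (A + 1), (i, j) ∈ S ∧ A - (i : ℕ) = y := by
  simp [cols]

/-- Inverse of `cols`. -/
def ofCols (A : ℕ) {B : ℕ} (c : Fin (B + 1) → Finset ℕ) : Finset (Fin (A + 1) × Fin (B + 1)) :=
  Finset.univ.filter fun p => A - (p.1 : ℕ) ∈ c p.2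

theorem ofCols_cols {A B : ℕ} (S : Finset (Fin (A + 1) × Fin (B + 1))) :
    ofCols A (cols S) = S := by
  ext ⟨i, j⟩
  simp only [ofCols, Finset.mem_filter, Finset.mem_univ, true_and, mem_cols]
  constructor
  · rintro ⟨i', h, he⟩
    have : i' = i := by
      ext
      omega
    rwa [← this]
  · intro h
    exact ⟨i, h, rfl⟩

theorem cols_ofCols {A B : ℕ} (c : Fin (B + 1) → Finset ℕ)
    (hc : ∀ j, c j ⊆ Finset.range (A + 1)) : cols (ofCols A c) = c := by
  funext j
  ext y
  simp only [mem_cols, ofCols, Finset.mem_filter, Finset.mem_univ, true_and]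
  constructor
  · rintro ⟨i, h, rfl⟩
    exact h
  · intro h
    have := Finset.mem_range.1 (hc j h)
    refine ⟨⟨A - y, by omega⟩, ?_, ?_⟩
    · simpa [show A - (A - y) = y by omega] using h
    · simp only
      omega

theorem cols_subset {A B : ℕ} (S : Finset (Fin (A + 1) × Fin (B + 1))) (j : Fin (B + 1)) :
    cols S j ⊆ Finset.range (A + 1) := by
  intro y hy
  obtain ⟨i, _, rfl⟩ := (mem_cols _ _ _).1 hy
  exact Finset.mem_range.2 (by omega)

theorem card_cols {A B : ℕ} (S : Finset (Fin (A + 1) × Fin (B + 1))) :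
    ∑ j, (cols S j).card = S.card := by
  have h : ∀ j, (cols S j).card = (Finset.univ.filter fun i => (i, j) ∈ S).card := by
    intro j
    refine Finset.card_image_of_injective _ fun i i' h => ?_
    ext
    omega
  simp only [h, Finset.card_filter]
  rw [← Fintype.sum_prod_type_right (f := fun p : Fin (A + 1) × Fin (B + 1) =>
    if p ∈ S then 1 else 0)]
  simp

/-- The initial heights: a diagonal of length `t + 1` must not lie below height `hgt A n u t`. -/
def hgt (A n : ℕ) (u : ℕ → ℕ) (t : ℕ) : ℕ := if t < n then u (t + 1) - 1 else A + 1

theorem diagFree_iff {A B n : ℕ} {u : ℕ → ℕ} (hu_top : u (n + 1) = A + 2)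
    (S : Finset (Fin (A + 1) × Fin (B + 1))) :
    DiagFree A B n u S ↔ Valid (cols S) (hgt A n u) := by
  constructor
  · intro h t
    rintro ⟨x, hx, y, hy, hxy⟩
    choose r hr hrA using fun k => (mem_cols S (x k) (y k)).1 (hxy k).1
    have hr_mono : StrictMono r := by
      intro a b hab
      have h1 := hy hab
      rw [← hrA a, ← hrA b] at h1
      rw [Fin.lt_def]
      omega
    by_cases htn : t < n
    · obtain ⟨k, hk⟩ := h (t + 1) (by omega) (by omega) r x hr_mono hx fun k => by
        have h1 := (hxy k).2
        have h2 := hrA k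
        rw [hgt, if_pos htn] at h1
        omega
      exact hk (hr k)
    · have hle : n + 1 ≤ t + 1 := by omega
      obtain ⟨k, hk⟩ := h (n + 1) (by omega) le_rfl (fun k => r (Fin.castLE hle k))
        (fun k => x (Fin.castLE hle k)) (fun a b hab => hr_mono hab) (fun a b hab => hx hab)
        fun k => by omega
      exact hk (hr _)
  · intro h t ht1 htn r c hr hc hrt
    by_contra! hcon
    obtain ⟨t, rfl⟩ : ∃ s, t = s + 1 := ⟨t - 1, by omega⟩
    refine h t ⟨c, hc, fun k => A - (r k : ℕ), ?_, fun k => ?_⟩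
    · intro a b hab
      have h1 : (r a : ℕ) < r b := hr hab
      have h2 := (r b).2
      simp only
      omega
    · refine ⟨(mem_cols _ _ _).2 ⟨r k, hcon k, rfl⟩, ?_⟩
      have h1 := hrt k
      have h2 := (r k).2
      unfold hgt
      split_ifs with htn'
      · simp only
        omega
      · simp only
        omega

open Classical in
theorem sum_diagFree {A B n : ℕ} {u : ℕ → ℕ} (hu_top : u (n + 1) = A + 2) :
    ∑ S ∈ Finset.univ.filter (DiagFree A B n u), w ^ S.card = F A (B + 1) (hgt A n u) := by
  rw [← sum_valid]
  refine Finset.sum_bij' (fun S _ => cols S) (fun c _ => ofCols A c) ?_ ?_ ?_ ?_ ?_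
  · intro S hS
    rw [Finset.mem_filter, Fintype.mem_piFinset]
    exact ⟨fun j => Finset.mem_powerset.2 (cols_subset S j),
      (diagFree_iff hu_top S).1 (Finset.mem_filter.1 hS).2⟩
  · intro c hc
    rw [Finset.mem_filter, Fintype.mem_piFinset] at hc
    refine Finset.mem_filter.2 ⟨Finset.mem_univ _, ?_⟩
    rw [diagFree_iff hu_top, cols_ofCols c fun j => Finset.mem_powerset.1 (hc.1 j)]
    exact hc.2
  · intro S _
    exact ofCols_cols S
  · intro c hc
    rw [Finset.mem_filter, Fintype.mem_piFinset] at hc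
    exact cols_ofCols c fun j => Finset.mem_powerset.1 (hc.1 j)
  · intro S _
    rw [card_cols]

/-! ### Numerators of Hilbert series -/

/-- The series `s` equals `H / (1 - z) ^ e` for a nonzero polynomial `H` with nonnegative
coefficients and of degree at most `D`; the degree is exactly `D` if `str` holds. -/
def Nice (s : PowerSeries ℤ) (e D : ℕ) (str : Prop) : Prop :=
  ∃ H : Polynomial ℤ, s * (1 - PowerSeries.X) ^ e = (H : PowerSeries ℤ) ∧ (∀ k, 0 ≤ H.coeff k) ∧
    0 < H.eval 1 ∧ H.natDegree ≤ D ∧ (str → 0 < H.coeff D)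

theorem Nice.imp {s : PowerSeries ℤ} {e D : ℕ} {p q : Prop} (h : Nice s e D p) (hqp : q → p) :
    Nice s e D q := by
  obtain ⟨H, h1, h2, h3, h4, h5⟩ := h
  exact ⟨H, h1, h2, h3, h4, fun hq => h5 (hqp hq)⟩

theorem Nice.iq_pow_mul {s : PowerSeries ℤ} {e D : ℕ} {p : Prop} (h : Nice s e D p) (k : ℕ) :
    Nice (iq ^ k * s) (e + k) D p := by
  obtain ⟨H, h1, h2⟩ := h
  refine ⟨H, ?_, h2⟩
  have := SpreadRows.iq_pow_mul k
  rw [← h1, pow_add]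
  linear_combination (s * (1 - PowerSeries.X) ^ e) * this

theorem sum_powerset_Ico (a b : ℕ) :
    ∑ C ∈ (Finset.Ico a b).powerset, w ^ C.card = iq ^ (b - a) := by
  have h := Finset.prod_one_add (Finset.Ico a b) (f := fun _ => w)
  simp only [Finset.prod_const, one_add_w, Nat.card_Ico] at h
  exact h.symm

/-- Sorting the subsets of an interval by their maximum. -/
theorem sum_powerset_max (f : ℕ → PowerSeries ℤ) (a m : ℕ) :
    ∑ C ∈ (Finset.Ico a (a + 1 + m)).powerset, w ^ C.card * f (max a (C.sup id)) =
      iq * f a + ∑ y ∈ Finset.Ico (a + 1) (a + 1 + m),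
        PowerSeries.X * iq ^ (y - a + 1) * f y := by
  induction m with
  | zero =>
    have h : Finset.Ico a (a + 1) = insert a ∅ := by simp
    rw [add_zero, h, Finset.sum_powerset_insert (by simp)]
    simp only [Finset.powerset_empty, Finset.sum_singleton, Finset.Ico_self, Finset.sum_empty]
    simp [← one_add_w, add_mul]
  | succ m ih =>
    have h : Finset.Ico a (a + 1 + (m + 1)) = insert (a + 1 + m) (Finset.Ico a (a + 1 + m)) := by
      ext y
      simp only [Finset.mem_Ico, Finset.mem_insert]
      omega
    rw [h, Finset.sum_powerset_insert (by simp), ih,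
      ← add_assoc (a + 1) m 1, Finset.sum_Ico_succ_top (by omega), ← add_assoc]
    congr 1
    have h2 : ∀ C ∈ (Finset.Ico a (a + 1 + m)).powerset,
        w ^ (insert (a + 1 + m) C).card * f (max a ((insert (a + 1 + m) C).sup id)) =
          w ^ C.card * (w * f (a + 1 + m)) := by
      intro C hC
      rw [Finset.mem_powerset] at hC
      have hlt : ∀ y ∈ C, y < a + 1 + m := fun y hy => (Finset.mem_Ico.1 (hC hy)).2
      rw [Finset.card_insert_of_notMem fun hmem => lt_irrefl _ (hlt _ hmem), Finset.sup_insert,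
        sup_eq_left.2 (Finset.sup_le (f := id) (a := id (a + 1 + m)) fun y hy => (hlt y hy).le),
        pow_succ, mul_assoc, id_eq, max_eq_right (by omega : a ≤ a + 1 + m)]
    rw [Finset.sum_congr rfl h2, ← Finset.sum_mul, sum_powerset_Ico, w,
      show a + 1 + m - a = m + 1 by omega]
    ring

/-- The numerator is `H_a + ∑ z H_y`, where `H_y` is the numerator of `f y`; its coefficient in
degree `D + 1` is bounded below by that of the summand `y = a + 1`. -/
theorem nice_interval (f : ℕ → PowerSeries ℤ) {a b e D : ℕ} {str : Prop} (hab : a < b)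
    (hf : ∀ y, a ≤ y → y < b → y ≤ e ∧ Nice (f y) (e - y) D (str ∧ y = a + 1))
    (hstr : str → a + 1 < b) :
    Nice (∑ C ∈ (Finset.Ico a b).powerset, w ^ C.card * f (max a (C.sup id)))
      (e - a + 1) (D + 1) str := by
  obtain ⟨m, rfl⟩ : ∃ m, b = a + 1 + m := ⟨b - (a + 1), by omega⟩
  rw [sum_powerset_max]
  have hf' : ∀ y, ∃ H : Polynomial ℤ, a ≤ y → y < a + 1 + m →
      f y * (1 - PowerSeries.X) ^ (e - y) = (H : PowerSeries ℤ) ∧ (∀ k, 0 ≤ H.coeff k) ∧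
      0 < H.eval 1 ∧ H.natDegree ≤ D ∧ (str ∧ y = a + 1 → 0 < H.coeff D) := by
    intro y
    by_cases hy : a ≤ y ∧ y < a + 1 + m
    · obtain ⟨H, hH⟩ := (hf y hy.1 hy.2).2
      exact ⟨H, fun _ _ => hH⟩
    · exact ⟨0, fun h1 h2 => absurd ⟨h1, h2⟩ hy⟩
  choose H hH using hf'
  refine ⟨H a + ∑ y ∈ Finset.Ico (a + 1) (a + 1 + m), Polynomial.X * H y, ?_, ?_, ?_, ?_, ?_⟩
  · have hq : (1 - PowerSeries.X : PowerSeries ℤ) ^ (e - a + 1) =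
        (1 - PowerSeries.X) ^ (e - a) * (1 - PowerSeries.X) := pow_succ _ _
    have hcoe : ((∑ y ∈ Finset.Ico (a + 1) (a + 1 + m), Polynomial.X * H y : Polynomial ℤ) :
        PowerSeries ℤ) = ∑ y ∈ Finset.Ico (a + 1) (a + 1 + m),
          PowerSeries.X * (H y : PowerSeries ℤ) := by
      rw [← Polynomial.coeToPowerSeries.ringHom_apply, map_sum]
      simp
    rw [Polynomial.coe_add, hcoe, add_mul, Finset.sum_mul,
      ← (hH a le_rfl (by omega)).1]
    congr 1
    · rw [hq]
      linear_combination (f a * (1 - PowerSeries.X) ^ (e - a)) * iq_mul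
    · refine Finset.sum_congr rfl fun y hy => ?_
      rw [Finset.mem_Ico] at hy
      have hye := (hf y (by omega) hy.2).1
      rw [← (hH y (by omega) hy.2).1, show e - a + 1 = (e - y) + (y - a + 1) by omega, pow_add]
      linear_combination (PowerSeries.X * f y * (1 - PowerSeries.X) ^ (e - y)) *
        iq_pow_mul (y - a + 1)
  · intro k
    rw [Polynomial.coeff_add, Polynomial.finsetSum_coeff]
    refine add_nonneg ((hH a le_rfl (by omega)).2.1 k) (Finset.sum_nonneg fun y hy => ?_)
    rw [Finset.mem_Ico] at hy
    rcases k with _ | k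
    · simp
    · rw [Polynomial.coeff_X_mul]
      exact (hH y (by omega) hy.2).2.1 k
  · rw [Polynomial.eval_add, Polynomial.eval_finsetSum]
    refine add_pos_of_pos_of_nonneg (hH a le_rfl (by omega)).2.2.1
      (Finset.sum_nonneg fun y hy => ?_)
    rw [Finset.mem_Ico] at hy
    rw [Polynomial.eval_mul, Polynomial.eval_X, one_mul]
    exact (hH y (by omega) hy.2).2.2.1.le
  · refine Polynomial.natDegree_add_le_of_degree_le
      ((hH a le_rfl (by omega)).2.2.2.1.trans (Nat.le_succ D))
      (Polynomial.natDegree_sum_le_of_forall_le _ _ fun y hy => ?_)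
    rw [Finset.mem_Ico] at hy
    refine Polynomial.natDegree_mul_le.trans ?_
    have := (hH y (by omega) hy.2).2.2.2.1
    rw [Polynomial.natDegree_X]
    omega
  · intro hs
    have hm := hstr hs
    rw [Polynomial.coeff_add, Polynomial.finsetSum_coeff]
    refine add_pos_of_nonneg_of_pos ((hH a le_rfl (by omega)).2.1 _)
      (Finset.sum_pos' (fun y hy => ?_) ⟨a + 1, Finset.mem_Ico.2 ⟨le_rfl, hm⟩, ?_⟩)
    · rw [Finset.mem_Ico] at hy
      rw [Polynomial.coeff_X_mul]
      exact (hH y (by omega) hy.2).2.1 D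
    · rw [Polynomial.coeff_X_mul]
      exact (hH (a + 1) (by omega) hm).2.2.2.2 ⟨hs, rfl⟩

/-- A variant of `upd` that changes only the first `k` heights. -/
def updTo (k : ℕ) (g : ℕ → ℕ) (C : Finset ℕ) (t : ℕ) : ℕ := if t < k then upd g C t else g t

/-- Splitting a subset of `[a, c)` at `b`. -/
theorem sum_powerset_Ico_union (f : Finset ℕ → PowerSeries ℤ) {a b c : ℕ} (hab : a ≤ b)
    (hbc : b ≤ c) :
    ∑ C ∈ (Finset.Ico a c).powerset, w ^ C.card * f C =
      ∑ T ∈ (Finset.Ico b c).powerset, w ^ T.card *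
        ∑ L ∈ (Finset.Ico a b).powerset, w ^ L.card * f (L ∪ T) := by
  simp only [Finset.mul_sum]
  rw [← Finset.sum_product']
  symm
  refine Finset.sum_bij' (fun p _ => p.2 ∪ p.1)
    (fun C _ => (C.filter (b ≤ ·), C.filter (· < b))) ?_ ?_ ?_ ?_ ?_
  · rintro ⟨T, L⟩ h
    simp only [Finset.mem_product, Finset.mem_powerset] at h ⊢
    refine Finset.union_subset (h.2.trans ?_) (h.1.trans ?_)
    · exact Finset.Ico_subset_Ico_right hbc
    · exact Finset.Ico_subset_Ico_left hab
  · intro C h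
    simp only [Finset.mem_product, Finset.mem_powerset] at h ⊢
    constructor
    · intro y hy
      rw [Finset.mem_filter] at hy
      have := Finset.mem_Ico.1 (h hy.1)
      exact Finset.mem_Ico.2 ⟨hy.2, this.2⟩
    · intro y hy
      rw [Finset.mem_filter] at hy
      have := Finset.mem_Ico.1 (h hy.1)
      exact Finset.mem_Ico.2 ⟨this.1, hy.2⟩
  · rintro ⟨T, L⟩ h
    simp only [Finset.mem_product, Finset.mem_powerset] at h
    ext y
    · simp only [Finset.mem_filter, Finset.mem_union]
      constructor
      · rintro ⟨hy | hy, hb⟩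
        · have := Finset.mem_Ico.1 (h.2 hy)
          omega
        · exact hy
      · intro hy
        exact ⟨Or.inr hy, (Finset.mem_Ico.1 (h.1 hy)).1⟩
    · simp only [Finset.mem_filter, Finset.mem_union]
      constructor
      · rintro ⟨hy | hy, hb⟩
        · exact hy
        · have := Finset.mem_Ico.1 (h.1 hy)
          omega
      · intro hy
        exact ⟨Or.inl hy, (Finset.mem_Ico.1 (h.2 hy)).2⟩
  · intro C h
    ext y
    simp only [Finset.mem_filter, Finset.mem_union]
    have := lt_or_ge y b
    tauto
  · rintro ⟨T, L⟩ h
    simp only [Finset.mem_product, Finset.mem_powerset] at h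
    have hd : Disjoint L T := by
      rw [Finset.disjoint_left]
      intro y hL hT
      have h1 := Finset.mem_Ico.1 (h.2 hL)
      have h2 := Finset.mem_Ico.1 (h.1 hT)
      omega
    simp only
    rw [Finset.card_union_of_disjoint hd, pow_add]
    ring

/-- Points above all the relevant thresholds do not influence the first heights. -/
theorem upd_union {g : ℕ → ℕ} {L T : Finset ℕ} {b t : ℕ} (hg : g (t + 1) ≤ b)
    (hT : ∀ y ∈ T, b ≤ y) : upd g (L ∪ T) t = upd g L t := by
  unfold upd
  rw [Finset.filter_union, Finset.filter_false_of_mem (s := T), Finset.union_empty]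
  intro y hy
  have := hT y hy
  omega

/-- Iteration of `nice_interval` over the intervals `[g t, g (t + 1))` for `t < k`: the new heights
`h t` range independently over these intervals. -/
theorem nice_multi (k : ℕ) : ∀ (f : (ℕ → ℕ) → PowerSeries ℤ) (E D : ℕ) (str : Prop) (g : ℕ → ℕ),
    (∀ t, t < k → g t < g (t + 1)) → (str → ∀ t, t < k → g t + 1 < g (t + 1)) →
    (∀ h : ℕ → ℕ, (∀ t, t < k → g t ≤ h t ∧ h t < g (t + 1)) → (∀ t, k ≤ t → h t = g t) →
      ∑ t ∈ Finset.range k, h t ≤ E ∧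
      Nice (f h) (E - ∑ t ∈ Finset.range k, h t) D (str ∧ ∀ t, t < k → h t = g t + 1)) →
    Nice (∑ C ∈ (Finset.Ico (g 0) (g k)).powerset, w ^ C.card * f (updTo k g C))
      (E - ∑ t ∈ Finset.range k, g t + k) (D + k) str := by
  induction k with
  | zero =>
    intro f E D str g _ _ hf
    have h0 : updTo 0 g ∅ = g := by
      funext t
      simp [updTo]
    have := (hf g (by simp) (by simp)).2
    simpa [h0] using this
  | succ k ih =>
    intro f E D str g hg hstr hf
    have hmono : ∀ i, i ≤ k → g 0 ≤ g i := by
      intro i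
      induction i with
      | zero => intro _; exact le_rfl
      | succ i ihi =>
        intro hi
        have h1 := ihi (by omega)
        have h2 := hg i (by omega)
        omega
    have hmono' : ∀ j t, t + j = k → g t ≤ g k := by
      intro j
      induction j with
      | zero => intro t ht; rw [← ht, add_zero]
      | succ j ihj =>
        intro t ht
        have h1 := ihj (t + 1) (by omega)
        have h2 := hg t (by omega)
        omega
    have hgk := hg k (by omega)
    rw [sum_powerset_Ico_union (fun C => f (updTo (k + 1) g C)) (hmono k le_rfl) hgk.le]
    have key : ∀ T ∈ (Finset.Ico (g k) (g (k + 1))).powerset,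
        ∑ L ∈ (Finset.Ico (g 0) (g k)).powerset, w ^ L.card * f (updTo (k + 1) g (L ∪ T)) =
          (fun y => ∑ L ∈ (Finset.Ico (g 0) (g k)).powerset,
            w ^ L.card * f (Function.update (updTo k g L) k y)) (max (g k) (T.sup id)) := by
      intro T hT
      rw [Finset.mem_powerset] at hT
      refine Finset.sum_congr rfl fun L hL => ?_
      rw [Finset.mem_powerset] at hL
      congr 2
      funext t
      rcases lt_trichotomy t k with ht | rfl | ht
      · rw [Function.update_of_ne ht.ne, updTo, updTo, if_pos ht, if_pos (by omega)]
        exact upd_union (b := g k) (hmono' (k - (t + 1)) (t + 1) (by omega))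
          fun y hy => (Finset.mem_Ico.1 (hT hy)).1
      · rw [Function.update_self, updTo, if_pos (by omega), upd, Finset.filter_true_of_mem,
          Finset.sup_union, max_left_comm, sup_eq_right]
        · refine Finset.sup_le fun y hy => le_max_of_le_left ?_
          exact (Finset.mem_Ico.1 (hL hy)).2.le
        · intro y hy
          rcases Finset.mem_union.1 hy with hy | hy
          · have := Finset.mem_Ico.1 (hL hy)
            omega
          · exact (Finset.mem_Ico.1 (hT hy)).2
      · rw [Function.update_of_ne ht.ne', updTo, updTo, if_neg (by omega), if_neg (by omega)]
    rw [Finset.sum_congr rfl fun T hT => by rw [key T hT]]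
    have hbox : ∀ y, g k ≤ y → y < g (k + 1) → ∀ h : ℕ → ℕ,
        (∀ t, t < k → g t ≤ h t ∧ h t < g (t + 1)) → (∀ t, k ≤ t → h t = g t) →
        ∑ t ∈ Finset.range k, h t + y ≤ E ∧
        Nice (f (Function.update h k y)) (E - (∑ t ∈ Finset.range k, h t + y)) D
          (str ∧ (∀ t, t < k → h t = g t + 1) ∧ y = g k + 1) := by
      intro y hy1 hy2 h hh1 hh2
      have h1 := hf (Function.update h k y) (fun t ht => by
        rcases Nat.lt_succ_iff_lt_or_eq.1 ht with ht | rfl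
        · rw [Function.update_of_ne ht.ne]
          exact hh1 t ht
        · rw [Function.update_self]
          exact ⟨hy1, hy2⟩) (fun t ht => by
        rw [Function.update_of_ne (by omega)]
        exact hh2 t (by omega))
      have hsum : ∑ t ∈ Finset.range (k + 1), Function.update h k y t =
          ∑ t ∈ Finset.range k, h t + y := by
        rw [Finset.sum_range_succ, Function.update_self]
        congr 1
        refine Finset.sum_congr rfl fun t ht => ?_
        rw [Function.update_of_ne (Finset.mem_range.1 ht).ne]
      rw [hsum] at h1
      refine ⟨h1.1, h1.2.imp ?_⟩
      rintro ⟨hs, ht, hyk⟩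
      refine ⟨hs, fun t htk => ?_⟩
      rcases Nat.lt_succ_iff_lt_or_eq.1 htk with htk | rfl
      · rw [Function.update_of_ne htk.ne]
        exact ht t htk
      · rw [Function.update_self]
        exact hyk
    have hgsum : ∀ y, g k ≤ y → y < g (k + 1) → ∑ t ∈ Finset.range k, g t + y ≤ E :=
      fun y hy1 hy2 => (hbox y hy1 hy2 g (fun t ht => ⟨le_rfl, hg t (by omega)⟩)
        fun t _ => rfl).1
    have := nice_interval (e := E - ∑ t ∈ Finset.range k, g t + k) (D := D + k) (str := str)
      (fun y => ∑ L ∈ (Finset.Ico (g 0) (g k)).powerset,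
            w ^ L.card * f (Function.update (updTo k g L) k y)) hgk
      (fun y hy1 hy2 => by
        have h1 := hgsum y hy1 hy2
        refine ⟨by omega, ?_⟩
        have h2 := ih (fun h => f (Function.update h k y)) (E - y) D (str ∧ y = g k + 1) g
          (fun t ht => hg t (by omega)) (fun hs t ht => hstr hs.1 t (by omega))
          (fun h hh1 hh2 => by
            obtain ⟨h3, h4⟩ := hbox y hy1 hy2 h hh1 hh2
            refine ⟨by omega, ?_⟩
            rw [Nat.sub_sub, add_comm y]
            exact h4.imp fun hs => ⟨hs.1.1, hs.2, hs.1.2⟩)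
        rwa [show E - ∑ t ∈ Finset.range k, g t + k - y =
          E - y - ∑ t ∈ Finset.range k, g t + k by omega])
      (fun hs => hstr hs k (by omega))
    have h1 := hgsum (g k) le_rfl hgk
    rw [Finset.sum_range_succ]
    rwa [show E - ∑ t ∈ Finset.range k, g t + k - g k + 1 =
      E - (∑ t ∈ Finset.range k, g t + g k) + (k + 1) by omega] at this

/-! ### Order of the pole and degree of the numerator -/

/-- The condition under which the numerator attains the expected degree: the heights that matter
for `N` columns have gaps of at least two, and the last of them can be raised by one for each
column in excess of `n` without exceeding `A`. -/
def Spread (A n N : ℕ) (g : ℕ → ℕ) : Prop :=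
  (∀ t, t + 1 < min n N → g t + 1 < g (t + 1)) ∧
    (1 ≤ min n N → g (min n N - 1) + N ≤ A + min n N)

/-- With `s = min n N`, the pole has order `∑_{t < s} (A + N - t - g t)`, and the numerator has
degree at most `∑_{x < N} min n x`: the column preceding the last `x` ones raises the degree by
one for each of the `min n x` intervals in it that matter for the remaining columns. -/
theorem nice_F (A n N : ℕ) : ∀ g : ℕ → ℕ, (∀ t, t < n → g t < g (t + 1)) →
    (∀ t, n ≤ t → g t = A + 1) →
    Nice (F A N g)
      (∑ t ∈ Finset.range (min n N), (A + N - t) - ∑ t ∈ Finset.range (min n N), g t)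
      (∑ x ∈ Finset.range N, min n x) (Spread A n N g) := by
  induction N with
  | zero =>
    intro g _ _
    refine ⟨1, by simp [F], ?_, by simp, by simp, by simp⟩
    intro k
    rw [Polynomial.coeff_one]
    split_ifs <;> norm_num
  | succ N ih =>
    intro g hg hcap
    have hle : ∀ j t, t + j = n → g t ≤ A + 1 := by
      intro j
      induction j with
      | zero => intro t ht; exact (hcap t (by omega)).le
      | succ j ihj =>
        intro t ht
        have h1 := ihj (t + 1) (by omega)
        have h2 := hg t (by omega)
        omega
    have hleA : ∀ t, t < n → g t ≤ A := fun t ht => by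
      have h1 := hg t ht
      have h2 := hle (n - (t + 1)) (t + 1) (by omega)
      omega
    rw [F, Finset.sum_range_succ]
    -- for `n ≤ N` every height matters; otherwise the part of the column above `g N` is free
    by_cases hN : n ≤ N
    · rw [min_eq_left hN, min_eq_left (by omega : n ≤ N + 1)]
      have hupd : ∀ C ∈ (Finset.Ico (g 0) (A + 1)).powerset,
          w ^ C.card * F A N (upd g C) = w ^ C.card * F A N (updTo n g C) := by
        intro C hC
        rw [Finset.mem_powerset] at hC
        congr 2
        funext t
        unfold updTo
        split_ifs with ht
        · rfl
        · rw [upd, hcap t (by omega), max_eq_left]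
          refine Finset.sup_le fun y hy => ?_
          exact (Finset.mem_Ico.1 (hC (Finset.mem_filter.1 hy).1)).2.le
      rw [Finset.sum_congr rfl hupd, ← hcap n le_rfl]
      have hE : ∑ t ∈ Finset.range n, (A + (N + 1) - t) =
          ∑ t ∈ Finset.range n, (A + N - t) + n := by
        rw [Finset.sum_congr rfl fun t ht => show A + (N + 1) - t = (A + N - t) + 1 by
          have := Finset.mem_range.1 ht
          omega, Finset.sum_add_distrib]
        simp
      have hbnd : ∀ h : ℕ → ℕ, (∀ t, t < n → h t ≤ A) →
          ∑ t ∈ Finset.range n, h t ≤ ∑ t ∈ Finset.range n, (A + N - t) := fun h hh =>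
        Finset.sum_le_sum fun t ht => by
          have h1 := Finset.mem_range.1 ht
          have h2 := hh t h1
          omega
      have := nice_multi n (F A N) (∑ t ∈ Finset.range n, (A + N - t))
        (∑ x ∈ Finset.range N, min n x) (Spread A n (N + 1) g) g hg
        (fun hs t ht => by
          obtain ⟨h1, h2⟩ := hs
          rw [min_eq_left (by omega : n ≤ N + 1)] at h1 h2
          by_cases ht' : t + 1 < n
          · exact h1 t ht'
          · have h3 := h2 (by omega)
            rw [show n - 1 = t by omega] at h3
            rw [hcap (t + 1) (by omega)]
            omega)
        (fun h hh1 hh2 => by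
          have hhA : ∀ t, t < n → h t ≤ A := fun t ht => by
            have h1 := (hh1 t ht).2
            have h2 := hle (n - (t + 1)) (t + 1) (by omega)
            omega
          refine ⟨hbnd h hhA, ?_⟩
          have h1 := ih h (fun t ht => by
            by_cases ht' : t + 1 < n
            · have h1 := (hh1 t ht).2
              have h2 := (hh1 (t + 1) ht').1
              omega
            · rw [hh2 (t + 1) (by omega)]
              exact (hh1 t ht).2) (fun t ht => by rw [hh2 t ht, hcap t ht])
          rw [min_eq_left hN] at h1
          refine h1.imp ?_
          rintro ⟨⟨hs1, hs2⟩, hs3⟩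
          rw [min_eq_left (by omega : n ≤ N + 1)] at hs1 hs2
          constructor
          · rw [min_eq_left hN]
            intro t ht
            rw [hs3 t (by omega), hs3 (t + 1) ht]
            have := hs1 t ht
            omega
          · rw [min_eq_left hN]
            intro hn1
            rw [hs3 (n - 1) (by omega)]
            have := hs2 hn1
            omega)
      rw [hE]
      have h1 := hbnd g hleA
      rwa [show ∑ t ∈ Finset.range n, (A + N - t) + n - ∑ t ∈ Finset.range n, g t =
        ∑ t ∈ Finset.range n, (A + N - t) - ∑ t ∈ Finset.range n, g t + n by omega]
    · have hN' : N < n := by omega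
      rw [min_eq_right hN'.le, min_eq_right (by omega : N + 1 ≤ n)]
      have hgN := hleA N hN'
      have hg0 : ∀ i, i ≤ n → g 0 ≤ g i := by
        intro i
        induction i with
        | zero => intro _; exact le_rfl
        | succ i ihi =>
          intro hi
          have h1 := ihi (by omega)
          have h2 := hg i (by omega)
          omega
      have hgmono : ∀ j t, t + j = N → g t ≤ g N := by
        intro j
        induction j with
        | zero => intro t ht; rw [← ht, add_zero]
        | succ j ihj =>
          intro t ht
          have h1 := ihj (t + 1) (by omega)
          have h2 := hg t (by omega)
          omega
      rw [sum_powerset_Ico_union (fun C => F A N (upd g C)) (hg0 N hN'.le)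
        (by omega : g N ≤ A + 1)]
      have key : ∀ T ∈ (Finset.Ico (g N) (A + 1)).powerset,
          w ^ T.card * ∑ L ∈ (Finset.Ico (g 0) (g N)).powerset,
            w ^ L.card * F A N (upd g (L ∪ T)) =
          w ^ T.card * ∑ L ∈ (Finset.Ico (g 0) (g N)).powerset,
            w ^ L.card * F A N (updTo N g L) := by
        intro T hT
        rw [Finset.mem_powerset] at hT
        congr 1
        refine Finset.sum_congr rfl fun L _ => ?_
        congr 1
        refine F_congr A N _ _ fun t ht => ?_
        rw [updTo, if_pos ht]
        exact upd_union (b := g N) (hgmono (N - (t + 1)) (t + 1) (by omega))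
          fun y hy => (Finset.mem_Ico.1 (hT hy)).1
      rw [Finset.sum_congr rfl key, ← Finset.sum_mul, sum_powerset_Ico]
      have hbnd : ∀ h : ℕ → ℕ, (∀ t, t < N → h t ≤ A) →
          ∑ t ∈ Finset.range N, h t ≤ ∑ t ∈ Finset.range N, (A + N - t) := fun h hh =>
        Finset.sum_le_sum fun t ht => by
          have h1 := Finset.mem_range.1 ht
          have h2 := hh t h1
          omega
      have := nice_multi N (F A N) (∑ t ∈ Finset.range N, (A + N - t))
        (∑ x ∈ Finset.range N, min n x) (Spread A n (N + 1) g) g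
        (fun t ht => hg t (by omega))
        (fun hs t ht => hs.1 t (by omega))
        (fun h hh1 hh2 => by
          have hhA : ∀ t, t < N → h t ≤ A := fun t ht => by
            have h1 := (hh1 t ht).2
            have h2 := hle (n - (t + 1)) (t + 1) (by omega)
            omega
          refine ⟨hbnd h hhA, ?_⟩
          have h1 := ih h (fun t ht => by
            by_cases ht' : t < N
            · have h1 := (hh1 t ht').2
              by_cases ht2 : t + 1 < N
              · have h2 := (hh1 (t + 1) ht2).1
                omega
              · rw [hh2 (t + 1) (by omega)]
                exact h1
            · rw [hh2 t (by omega), hh2 (t + 1) (by omega)]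
              exact hg t ht) (fun t ht => by rw [hh2 t (by omega), hcap t ht])
          rw [min_eq_right hN'.le] at h1
          refine h1.imp ?_
          rintro ⟨⟨hs1, hs2⟩, hs3⟩
          rw [min_eq_right (by omega : N + 1 ≤ n)] at hs1 hs2
          constructor
          · rw [min_eq_right hN'.le]
            intro t ht
            rw [hs3 t (by omega), hs3 (t + 1) ht]
            have := hs1 t (by omega)
            omega
          · rw [min_eq_right hN'.le]
            intro hN1
            have := hhA (N - 1) (by omega)
            omega)
      have h2 := this.iq_pow_mul (A + 1 - g N)
      have h1 := hbnd g fun t ht => hleA t (by omega)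
      have hE : ∑ t ∈ Finset.range (N + 1), (A + (N + 1) - t) =
          ∑ t ∈ Finset.range N, (A + N - t) + N + (A + 1) := by
        rw [Finset.sum_range_succ, Finset.sum_congr rfl fun t ht =>
          show A + (N + 1) - t = (A + N - t) + 1 by
            have := Finset.mem_range.1 ht
            omega, Finset.sum_add_distrib]
        simp
        omega
      rw [hE, Finset.sum_range_succ (fun t => g t) N]
      rwa [show ∑ t ∈ Finset.range N, (A + N - t) - ∑ t ∈ Finset.range N, g t + N +
        (A + 1 - g N) = ∑ t ∈ Finset.range N, (A + N - t) + N + (A + 1) -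
          (∑ t ∈ Finset.range N, g t + g N) by omega] at h2

theorem two_mul_sum_range_min (n j : ℕ) :
    2 * ∑ x ∈ Finset.range (n + j), ((min n x : ℕ) : ℤ) =
      2 * n * (n + j) - n * (n + 1) := by
  induction j with
  | zero =>
    have h : ∀ m : ℕ, 2 * ∑ x ∈ Finset.range m, (x : ℤ) = m * (m - 1) := by
      intro m
      induction m with
      | zero => simp
      | succ m ih =>
        rw [Finset.sum_range_succ, mul_add, ih]
        push_cast
        ring
    rw [add_zero, Finset.sum_congr rfl fun x hx => by
      rw [min_eq_right (Finset.mem_range.1 hx).le], h]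
    push_cast
    ring
  | succ j ih =>
    rw [← add_assoc, Finset.sum_range_succ, mul_add, ih, min_eq_left (by omega)]
    push_cast
    ring

open Classical in
theorem hilbertSeries_eq (K : Type*) [Field K] (A B n : ℕ) (u : ℕ → ℕ)
    (hu_top : u (n + 1) = A + 2) (hmono : ∀ i j, 1 ≤ i → i ≤ j → j ≤ n → u i ≤ u j) :
    hilbertSeries K (rowIdeal K A B n u) = F A (B + 1) (hgt A n u) := by
  rw [← sum_diagFree hu_top, ← mk_card_eq_sum]
  unfold hilbertSeries
  simp only [quotDim_eq K A B n u hu_top hmono]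

end SpreadRows

theorem ex_spread_rows_a_invariant (K : Type*) [Field K] (A B n : ℕ) (hn : 1 ≤ n)
    (u : ℕ → ℕ)
    (hu_pos : ∀ i, 1 ≤ i → i ≤ n → 1 ≤ u i)
    (hu_gap : ∀ i, 1 ≤ i → i < n → u i + 1 < u (i + 1))
    (hun : u n ≤ A + 1) (hnB : n ≤ B + 1)
    (hAn : (B : ℤ) - (n : ℤ) ≤ (A : ℤ) - (u n : ℤ))
    (hu_top : u (n + 1) = A + 2)
    (d : ℕ)
    (hd : (d : ℤ) = ((A : ℤ) + (B : ℤ) + 3) * n -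
      (∑ i ∈ Finset.Icc 1 n, (u i : ℤ)) - (n : ℤ) * ((n : ℤ) + 1) / 2) :
    ∃ H : Polynomial ℤ, H.eval 1 ≠ 0 ∧
      hilbertSeries K
          (detIdeal K A B n u (fun t => if t = n + 1 then B + 2 else t)) *
          (1 - PowerSeries.X) ^ d =
        (↑H : PowerSeries ℤ) ∧
      (H.natDegree : ℤ) - (d : ℤ) =
        (∑ i ∈ Finset.Icc 1 n, (u i : ℤ)) - ((A : ℤ) + 2) * n := by
  have hmono : ∀ i j, 1 ≤ i → i ≤ j → j ≤ n → u i ≤ u j := by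
    intro i j hi hij
    induction j, hij using Nat.le_induction with
    | base => intro _; exact le_rfl
    | succ j hij ih =>
      intro hj
      have h1 := ih (by omega)
      have h2 := hu_gap j (by omega) (by omega)
      omega
  have hseries : hilbertSeries K
      (detIdeal K A B n u (fun t => if t = n + 1 then B + 2 else t)) =
      SpreadRows.F A (B + 1) (SpreadRows.hgt A n u) :=
    SpreadRows.hilbertSeries_eq K A B n u hu_top hmono
  obtain ⟨H, hH1, -, hH3, hH4, hH5⟩ := SpreadRows.nice_F A n (B + 1) (SpreadRows.hgt A n u)
    (fun t ht => by
      unfold SpreadRows.hgt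
      rw [if_pos ht]
      split_ifs with ht'
      · have h1 := hu_gap (t + 1) (by omega) ht'
        omega
      · have h1 : t + 1 = n := by omega
        rw [h1]
        omega)
    (fun t ht => by
      unfold SpreadRows.hgt
      rw [if_neg (by omega)])
  have hspread : SpreadRows.Spread A n (B + 1) (SpreadRows.hgt A n u) := by
    unfold SpreadRows.Spread SpreadRows.hgt
    rw [min_eq_left hnB]
    constructor
    · intro t ht
      rw [if_pos (by omega), if_pos ht]
      have h1 := hu_gap (t + 1) (by omega) ht
      have h2 := hu_pos (t + 1) (by omega) (by omega)
      omega
    · intro _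
      rw [if_pos (by omega), show n - 1 + 1 = n by omega]
      have h2 := hu_pos n hn le_rfl
      omega
  have hcoeff := hH5 hspread
  rw [min_eq_left hnB] at hH1
  have hdegH : H.natDegree = ∑ x ∈ Finset.range (B + 1), min n x :=
    le_antisymm hH4 (Polynomial.le_natDegree_of_ne_zero hcoeff.ne')
  have htri : 2 * ((n : ℤ) * ((n : ℤ) + 1) / 2) = n * (n + 1) :=
    Int.two_mul_ediv_two_of_even (Int.even_mul_succ_self n)
  have hD : 2 * ∑ x ∈ Finset.range (B + 1), ((min n x : ℕ) : ℤ) =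
      2 * n * (B + 1) - n * (n + 1) := by
    have h1 := SpreadRows.two_mul_sum_range_min n (B + 1 - n)
    rw [show n + (B + 1 - n) = B + 1 by omega] at h1
    rw [h1]
    push_cast [hnB]
    ring
  have hu_sum : ∑ i ∈ Finset.Icc 1 n, (u i : ℤ) = ∑ t ∈ Finset.range n, (u (t + 1) : ℤ) := by
    rw [Finset.range_eq_Ico, Finset.sum_Ico_add' (fun i => (u i : ℤ)) 0 n 1]
    congr 1
  have hup : ∀ t, t < n → SpreadRows.hgt A n u t + 1 = u (t + 1) ∧ u (t + 1) ≤ A + 1 := by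
    intro t ht
    have h2 := hu_pos (t + 1) (by omega) (by omega)
    have h3 := hmono (t + 1) n (by omega) (by omega) le_rfl
    unfold SpreadRows.hgt
    rw [if_pos ht]
    omega
  have hgle : ∑ t ∈ Finset.range n, SpreadRows.hgt A n u t ≤
      ∑ t ∈ Finset.range n, (A + (B + 1) - t) := by
    refine Finset.sum_le_sum fun t ht => ?_
    have h1 := Finset.mem_range.1 ht
    have h2 := hup t h1
    omega
  have hsum1 : ((∑ t ∈ Finset.range n, (A + (B + 1) - t) : ℕ) : ℤ) =
      ∑ t ∈ Finset.range n, ((A : ℤ) + B + 1 - t) := by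
    rw [Nat.cast_sum]
    refine Finset.sum_congr rfl fun t ht => ?_
    have h1 := Finset.mem_range.1 ht
    omega
  have hsum2 : ((∑ t ∈ Finset.range n, SpreadRows.hgt A n u t : ℕ) : ℤ) =
      ∑ t ∈ Finset.range n, ((u (t + 1) : ℤ) - 1) := by
    rw [Nat.cast_sum]
    refine Finset.sum_congr rfl fun t ht => ?_
    have h1 := hup t (Finset.mem_range.1 ht)
    omega
  have hgauss : ∑ t ∈ Finset.range n, (t : ℤ) = n * (n + 1) / 2 - n := by
    have h1 := SpreadRows.two_mul_sum_range_min n 0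
    rw [add_zero, Finset.sum_congr rfl fun x hx => by
      rw [min_eq_right (Finset.mem_range.1 hx).le]] at h1
    push_cast at h1
    linarith
  have hd' : d = ∑ t ∈ Finset.range n, (A + (B + 1) - t) -
      ∑ t ∈ Finset.range n, SpreadRows.hgt A n u t := by
    zify [hgle]
    rw [hd, hu_sum]
    have h1 := hsum1
    have h2 := hsum2
    push_cast at h1 h2
    rw [Finset.sum_sub_distrib, hgauss] at h1
    rw [Finset.sum_sub_distrib] at h2
    simp only [Finset.sum_const, Finset.card_range, nsmul_eq_mul] at h1 h2
    rw [h1, h2]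
    ring
  refine ⟨H, hH3.ne', ?_, ?_⟩
  · rw [hseries, hd']
    exact hH1
  · rw [hdegH, hd]
    push_cast
    push_cast at hD
    linarith
end
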